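/- Fix a ∈ (0,1) and R ≥ 1; set x₀ = a + R and Ω = B_R((x₀, 0)), the Grushin ball of radius R centered at (x₀,0). Then there exist a real number λ and a function φ, not identically zero, continuous on the closure of Ω and C² in Ω, such that Δ_G φ + λ φ = 0 in Ω and φ = 0 on ∂Ω; moreover λ can be taken to satisfy 0 < λ ≤ C/R² for a constant C > 0 independent of a and R. -/

import Mathlib

open MeasureTheory

/-- Partial derivative in `x`. -/
noncomputable def pX (u : ℝ × ℝ → ℝ) (p : ℝ × ℝ) : ℝ := deriv (fun x => u (x, p.2)) p.1

/-- Partial derivative in `y`. -/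
noncomputable def pY (u : ℝ × ℝ → ℝ) (p : ℝ × ℝ) : ℝ := deriv (fun y => u (p.1, y)) p.2

/-- Second partial derivative in `x`. -/
noncomputable def pXX (u : ℝ × ℝ → ℝ) (p : ℝ × ℝ) : ℝ :=
  deriv (deriv (fun x => u (x, p.2))) p.1

/-- Second partial derivative in `y`. -/
noncomputable def pYY (u : ℝ × ℝ → ℝ) (p : ℝ × ℝ) : ℝ :=
  deriv (deriv (fun y => u (p.1, y))) p.2

/-- The Grushin Laplacian `Δ_G u = ∂_xx u + x² ∂_yy u`. -/
noncomputable def grushinLap (u : ℝ × ℝ → ℝ) (p : ℝ × ℝ) : ℝ := pXX u p + p.1 ^ 2 * pYY u p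

/-- The Grushin norm `‖(x,y)‖ = (x⁴ + 4y²)^(1/4)`. -/
noncomputable def gNorm (p : ℝ × ℝ) : ℝ := (p.1 ^ 4 + 4 * p.2 ^ 2) ^ ((1 : ℝ) / 4)

/-- The Grushin ball of radius `R` centered at `c`. -/
def gBall (c : ℝ × ℝ) (R : ℝ) : Set (ℝ × ℝ) := {p | gNorm (p - c) < R}

/-!
With `s = x ^ 2 / 2` and `φ(x, y) = x ^ (-1/2) f(s, y)`, the equation `Δ_G φ + λ φ = 0` becomes
`Δ f + (3 / (16 s ^ 2) + λ / (2 s)) f = 0`, a flat Schrödinger eigenvalue problem on a bounded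
domain of the half-plane `s > 0`. The potential is below the Hardy threshold `1 / (4 s ^ 2)`, so the
energy form is coercive and the direct method yields a weak ground state. Convolution with a cut-off
logarithmic kernel, a parametrix of the Laplacian, shows that the ground state is bounded and `C²`.
Applied on the disc of radius `d = dist(z, ∂Ω)`, it also bounds `|f(z)|` by `C d⁻¹ ‖f‖` with the
`L²` norm over that disc; since `f / d ∈ L²` by the Hardy inequality for the distance to the
boundary, this tends to `0` at the boundary. A test function scaled to a disc of radius `R ^ 2 / 4`
bounds the eigenvalue.
-/

open Filter Topology Set InnerProductSpace
open scoped ContDiff Gradient Laplacian RealInnerProductSpace ENNReal Pointwise ProbabilityTheory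
open scoped Convolution
open ContinuousLinearMap (mul)

namespace Grushin

section TestFunctions

variable {E : Type*} [NormedAddCommGroup E] [NormedSpace ℝ E]

/-- `C_c^∞(U)`, as a predicate: smooth functions with compact support contained in `U`. -/
structure IsTestFunction (U : Set E) (η : E → ℝ) : Prop where
  contDiff : ContDiff ℝ ∞ η
  hasCompactSupport : HasCompactSupport η
  tsupport_subset : tsupport η ⊆ U

variable {U V : Set E} {η ζ f g : E → ℝ}

lemma contDiff_of_forall_mem_tsupport {n : WithTop ℕ∞}
    (hf : ∀ p ∈ tsupport f, ContDiffAt ℝ n f p) : ContDiff ℝ n f :=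
  contDiff_iff_contDiffAt.2 fun p => by
    by_cases hp : p ∈ tsupport f
    · exact hf p hp
    · exact contDiffAt_const.congr_of_eventuallyEq (notMem_tsupport_iff_eventuallyEq.1 hp)

lemma contDiff_mul_of_tsupport {n : WithTop ℕ∞} (hf : ∀ p ∈ tsupport g, ContDiffAt ℝ n f p)
    (hg : ContDiff ℝ n g) : ContDiff ℝ n fun p => f p * g p :=
  contDiff_of_forall_mem_tsupport fun p hp =>
    (hf p (tsupport_mul_subset_right hp)).mul hg.contDiffAt

namespace IsTestFunction

lemma mono (hη : IsTestFunction U η) (h : U ⊆ V) : IsTestFunction V η :=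
  ⟨hη.contDiff, hη.hasCompactSupport, hη.tsupport_subset.trans h⟩

lemma continuous (hη : IsTestFunction U η) : Continuous η := hη.contDiff.continuous

lemma contDiff_of_le (hη : IsTestFunction U η) {n : ℕ∞} : ContDiff ℝ n η :=
  hη.contDiff.of_le (by exact_mod_cast le_top)

lemma differentiable (hη : IsTestFunction U η) : Differentiable ℝ η :=
  hη.contDiff.differentiable (by simp)

lemma eq_zero_of_notMem (hη : IsTestFunction U η) {p : E} (hp : p ∉ U) : η p = 0 :=
  image_eq_zero_of_notMem_tsupport fun h => hp (hη.tsupport_subset h)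

lemma add (hη : IsTestFunction U η) (hζ : IsTestFunction U ζ) : IsTestFunction U (η + ζ) :=
  ⟨hη.contDiff.add hζ.contDiff, hη.hasCompactSupport.add hζ.hasCompactSupport,
    (tsupport_add η ζ).trans (union_subset hη.tsupport_subset hζ.tsupport_subset)⟩

lemma const_smul (hη : IsTestFunction U η) (c : ℝ) : IsTestFunction U (c • η) :=
  ⟨contDiff_const.smul hη.contDiff, hη.hasCompactSupport.smul_left (f := fun _ => c),
    (tsupport_smul_subset_right (fun _ => c) η).trans hη.tsupport_subset⟩

lemma mul_left (hη : IsTestFunction U η) (hf : ∀ p ∈ tsupport η, ContDiffAt ℝ ∞ f p) :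
    IsTestFunction U fun p => f p * η p :=
  ⟨contDiff_mul_of_tsupport hf hη.contDiff, hη.hasCompactSupport.mul_left,
    tsupport_mul_subset_right.trans hη.tsupport_subset⟩

end IsTestFunction

lemma exists_isTestFunction_ne_zero [FiniteDimensional ℝ E] (hU : IsOpen U) (hU' : U.Nonempty) :
    ∃ η, IsTestFunction U η ∧ ∃ p ∈ U, η p ≠ 0 := by
  obtain ⟨p, hp⟩ := hU'
  obtain ⟨η, hsupp, hcpt, hsmooth, -, hη⟩ := exists_contDiff_tsupport_subset (n := ⊤)
    (hU.mem_nhds hp)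
  exact ⟨η, ⟨hsmooth, hcpt, hsupp⟩, p, hp, by simp [hη]⟩

lemma IsTestFunction.comp_smul_sub (hη : IsTestFunction U η) {c : ℝ} (hc : c ≠ 0) (q : E) :
    IsTestFunction ((fun z => c • (z - q)) ⁻¹' U) fun z => η (c • (z - q)) where
  contDiff := hη.contDiff.comp (contDiff_const.smul (contDiff_id.sub contDiff_const))
  hasCompactSupport := hη.hasCompactSupport.comp_homeomorph
    ((Homeomorph.subRight q).trans (Homeomorph.smulOfNeZero c hc))
  tsupport_subset := (tsupport_comp_subset_preimage η
    (continuous_const.smul (continuous_id.sub continuous_const))).trans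
      (preimage_mono hη.tsupport_subset)

end TestFunctions

section Green

variable {E : Type*} [NormedAddCommGroup E] [InnerProductSpace ℝ E]

section Gradient

variable [CompleteSpace E] {f g : E → ℝ} {p : E}

lemma gradient_add (hf : DifferentiableAt ℝ f p) (hg : DifferentiableAt ℝ g p) :
    ∇ (f + g) p = ∇ f p + ∇ g p := by
  simp [gradient, fderiv_add hf hg]

lemma gradient_const_smul (hf : DifferentiableAt ℝ f p) (c : ℝ) : ∇ (c • f) p = c • ∇ f p := by
  simp [gradient, fderiv_const_smul hf]

lemma gradient_mul (hf : DifferentiableAt ℝ f p) (hg : DifferentiableAt ℝ g p) :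
    ∇ (fun q => f q * g q) p = f p • ∇ g p + g p • ∇ f p := by
  simp [gradient, fderiv_fun_mul hf hg]

lemma gradient_inv (hf : DifferentiableAt ℝ f p) (hp : f p ≠ 0) :
    ∇ (fun q => (f q)⁻¹) p = -(f p ^ 2)⁻¹ • ∇ f p := by
  have h : HasFDerivAt (fun q => (f q)⁻¹) (-(f p ^ 2)⁻¹ • fderiv ℝ f p) p :=
    (hasDerivAt_inv hp).comp_hasFDerivAt p hf.hasFDerivAt
  rw [gradient, h.fderiv, map_smul, gradient]

lemma norm_gradient_eq_norm_fderiv (f : E → ℝ) (p : E) : ‖∇ f p‖ = ‖fderiv ℝ f p‖ :=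
  (toDual ℝ E).symm.norm_map _

lemma tsupport_gradient_subset (f : E → ℝ) : tsupport (∇ f) ⊆ tsupport f :=
  (closure_mono fun p hp => by
    simpa [gradient] using hp).trans (tsupport_fderiv_subset ℝ)

lemma gradient_eq_zero_of_notMem_tsupport (hp : p ∉ tsupport f) : ∇ f p = 0 :=
  image_eq_zero_of_notMem_tsupport fun h => hp (tsupport_gradient_subset f h)

lemma hasCompactSupport_gradient (hf : HasCompactSupport f) : HasCompactSupport (∇ f) :=
  hf.mono' (subset_closure.trans (tsupport_gradient_subset f))

lemma continuousAt_gradient {n : WithTop ℕ∞} (hf : ContDiffAt ℝ n f p) (hn : 1 ≤ n) :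
    ContinuousAt (∇ f) p :=
  (toDual ℝ E).symm.continuous.continuousAt.comp ((hf.of_le hn).continuousAt_fderiv one_ne_zero)

lemma continuous_gradient (hf : ContDiff ℝ 1 f) : Continuous (∇ f) :=
  continuous_iff_continuousAt.2 fun _ => continuousAt_gradient hf.contDiffAt le_rfl

end Gradient

variable [FiniteDimensional ℝ E] {U : Set E} {f g ψ η : E → ℝ} {p : E}

lemma laplacian_eq_sum_fderiv_fderiv {ι : Type*} [Fintype ι] (b : OrthonormalBasis ι ℝ E)
    (hf : ContDiffAt ℝ 2 f p) :
    Δ f p = ∑ i, fderiv ℝ (fun q => fderiv ℝ f q (b i)) p (b i) := by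
  have hd : DifferentiableAt ℝ (fderiv ℝ f) p :=
    (hf.fderiv_right (m := 1) (by norm_num)).differentiableAt (by simp)
  simp only [laplacian_eq_iteratedFDeriv_orthonormalBasis f b, iteratedFDeriv_two_apply]
  refine Finset.sum_congr rfl fun i _ => ?_
  rw [fderiv_clm_apply hd (differentiableAt_const _)]
  simp

lemma continuousAt_laplacian (hf : ContDiffAt ℝ 2 f p) : ContinuousAt (Δ f) p := by
  let b := stdOrthonormalBasis ℝ E
  have hsum : ContinuousAt (fun q => ∑ i, fderiv ℝ (fun q' => fderiv ℝ f q' (b i)) q (b i)) p :=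
    tendsto_finsetSum _ fun i _ =>
      ((((hf.fderiv_right (m := 1) (by norm_num)).clm_apply contDiffAt_const).continuousAt_fderiv
        (by simp)).clm_apply continuousAt_const)
  refine hsum.congr ?_
  filter_upwards [hf.eventually (by simp)] with q hq
  exact (laplacian_eq_sum_fderiv_fderiv b hq).symm

lemma laplacian_eq_zero_of_notMem_tsupport (hp : p ∉ tsupport f) : Δ f p = 0 := by
  have h : f =ᶠ[𝓝 p] fun _ => 0 := notMem_tsupport_iff_eventuallyEq.1 hp
  simp [(laplacian_congr_nhds h).self_of_nhds]

lemma hasCompactSupport_laplacian (hf : HasCompactSupport f) : HasCompactSupport (Δ f) :=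
  hf.mono' fun _ hp => by_contra fun h => hp (laplacian_eq_zero_of_notMem_tsupport h)

lemma continuous_laplacian (hf : ContDiff ℝ 2 f) : Continuous (Δ f) :=
  continuous_iff_continuousAt.2 fun _ => continuousAt_laplacian hf.contDiffAt

lemma gradient_div_mul_self (hη : DifferentiableAt ℝ η p) (hψ : DifferentiableAt ℝ ψ p)
    (hψ0 : ψ p ≠ 0) :
    ∇ (fun q => η q / ψ q * η q) p =
      (2 * η p / ψ p) • ∇ η p - (η p ^ 2 / ψ p ^ 2) • ∇ ψ p := by
  have hinv : DifferentiableAt ℝ (fun q => (ψ q)⁻¹) p := hψ.inv hψ0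
  simp only [div_eq_mul_inv]
  rw [gradient_mul (hη.fun_mul hinv) hη, gradient_mul hη hinv, gradient_inv hψ hψ0]
  module

lemma hardy_integrand_le (hη : DifferentiableAt ℝ η p) (hψ : DifferentiableAt ℝ ψ p)
    (hψ0 : ψ p ≠ 0) :
    (‖∇ ψ p‖ ^ 2 - 2 * ψ p * Δ ψ p) / (4 * ψ p ^ 2) * η p ^ 2 +
      (⟪∇ (fun q => η q / ψ q * η q) p, ∇ ψ p⟫ + η p / ψ p * η p * Δ ψ p) / 2 ≤ ‖∇ η p‖ ^ 2 := by
  -- The difference of the two sides is `‖∇ η - (η / (2 ψ)) ∇ ψ‖ ^ 2`.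
  have hnonneg : 0 ≤ ‖∇ η p - (η p / (2 * ψ p)) • ∇ ψ p‖ ^ 2 := sq_nonneg _
  rw [norm_sub_sq_real, inner_smul_right, norm_smul, mul_pow, Real.norm_eq_abs, sq_abs] at hnonneg
  rw [gradient_div_mul_self hη hψ hψ0, inner_sub_left, real_inner_smul_left, real_inner_smul_left,
    real_inner_self_eq_norm_sq, ← sub_nonneg]
  convert hnonneg using 1
  field_simp
  ring

variable [MeasurableSpace E] [BorelSpace E]

lemma integrable_inner_of_tsupport {F : Type*} [NormedAddCommGroup F] [InnerProductSpace ℝ F]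
    {G H : E → F} (hG : Continuous G) (hG' : HasCompactSupport G)
    (hH : ∀ p ∈ tsupport G, ContinuousAt H p) : Integrable fun p => ⟪G p, H p⟫ := by
  have hsupp : tsupport (fun p => ⟪G p, H p⟫) ⊆ tsupport G :=
    closure_mono fun p hp h => hp (by simp [h])
  exact (continuous_of_tsupport fun p hp => hG.continuousAt.inner (hH p (hsupp hp)))
    |>.integrable_of_hasCompactSupport (hG'.mono' (subset_closure.trans hsupp))

lemma integrable_mul_of_tsupport (hf : ∀ p ∈ tsupport g, ContinuousAt f p) (hg : Continuous g)
    (hg' : HasCompactSupport g) : Integrable fun p => f p * g p := by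
  simpa using integrable_inner_of_tsupport hg hg' hf

lemma integral_inner_gradient_eq_neg_integral_mul_laplacian (hg : ContDiff ℝ 1 g)
    (hg' : HasCompactSupport g) (hψ : ∀ p ∈ tsupport g, ContDiffAt ℝ 2 ψ p) :
    ∫ p, ⟪∇ g p, ∇ ψ p⟫ = -∫ p, g p * Δ ψ p := by
  let b := stdOrthonormalBasis ℝ E
  have hdψ (i) : ∀ p ∈ tsupport g, ContDiffAt ℝ 1 (fun q => fderiv ℝ ψ q (b i)) p :=
    fun p hp => ((hψ p hp).fderiv_right (by norm_num)).clm_apply contDiffAt_const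
  have hdg (i) : Continuous fun q => fderiv ℝ g q (b i) :=
    (hg.continuous_fderiv (by simp)).clm_apply continuous_const
  have hint₁ (i) : Integrable fun p => fderiv ℝ ψ p (b i) * fderiv ℝ g p (b i) :=
    integrable_mul_of_tsupport
      (fun p hp => (hdψ i p (tsupport_fderiv_apply_subset ℝ (b i) hp)).continuousAt)
      (hdg i) (hg'.fderiv_apply (𝕜 := ℝ) (b i))
  have hint₂ (i) :
      Integrable fun p => fderiv ℝ (fun q => fderiv ℝ ψ q (b i)) p (b i) * g p :=
    integrable_mul_of_tsupport
      (fun p hp => ((hdψ i p hp).continuousAt_fderiv (by simp)).clm_apply continuousAt_const)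
      hg.continuous hg'
  have hparts (i) : ∫ p, fderiv ℝ ψ p (b i) * fderiv ℝ g p (b i) =
      -∫ p, fderiv ℝ (fun q => fderiv ℝ ψ q (b i)) p (b i) * g p :=
    integral_mul_fderiv_eq_neg_fderiv_mul_of_integrable (hint₂ i) (hint₁ i)
      (integrable_mul_of_tsupport (fun p hp => (hdψ i p hp).continuousAt) hg.continuous hg')
      (fun p hp => (hdψ i p hp).differentiableAt (by simp))
      (fun p _ => hg.differentiable (by simp) p)
  calc ∫ p, ⟪∇ g p, ∇ ψ p⟫
      = ∫ p, ∑ i, fderiv ℝ ψ p (b i) * fderiv ℝ g p (b i) := by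
        refine integral_congr_ae (ae_of_all _ fun p => ?_)
        refine (b.sum_inner_mul_inner _ _).symm.trans (Finset.sum_congr rfl fun i _ => ?_)
        rw [inner_gradient_left, real_inner_comm, inner_gradient_left, mul_comm]
    _ = -∫ p, ∑ i, fderiv ℝ (fun q => fderiv ℝ ψ q (b i)) p (b i) * g p := by
        rw [integral_finsetSum _ fun i _ => hint₁ i, integral_finsetSum _ fun i _ => hint₂ i,
          ← Finset.sum_neg_distrib]
        exact Finset.sum_congr rfl fun i _ => hparts i
    _ = -∫ p, g p * Δ ψ p := by
        congr 2 with p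
        by_cases hp : p ∈ tsupport g
        · rw [laplacian_eq_sum_fderiv_fderiv b (hψ p hp), Finset.mul_sum]
          simp_rw [mul_comm]
        · simp [image_eq_zero_of_notMem_tsupport hp]

lemma IsTestFunction.integrable_norm_gradient_sq (hη : IsTestFunction U η) :
    Integrable fun p => ‖∇ η p‖ ^ 2 := by
  have hcont := continuous_gradient (hη.contDiff_of_le (n := 1))
  simp_rw [← real_inner_self_eq_norm_sq]
  exact integrable_inner_of_tsupport hcont (hasCompactSupport_gradient hη.hasCompactSupport)
    fun _ _ => hcont.continuousAt

lemma IsTestFunction.integrable_hardy (hη : IsTestFunction U η)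
    (hψ : ∀ p ∈ U, ContDiffAt ℝ 2 ψ p) (hψ0 : ∀ p ∈ U, ψ p ≠ 0) :
    Integrable fun p => (‖∇ ψ p‖ ^ 2 - 2 * ψ p * Δ ψ p) / (4 * ψ p ^ 2) * η p ^ 2 := by
  have hsq : tsupport (fun p => η p ^ 2) ⊆ tsupport η :=
    closure_mono fun p hp h => hp (by simp [h])
  refine integrable_mul_of_tsupport (fun p hp => ?_) (hη.continuous.pow 2)
    (hη.hasCompactSupport.mono' (subset_closure.trans hsq))
  have hpU := hη.tsupport_subset (hsq hp)
  have hψp := hψ p hpU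
  exact (((continuousAt_gradient hψp (by simp)).norm.pow 2).sub
    ((continuousAt_const.mul hψp.continuousAt).mul (continuousAt_laplacian hψp))).div
    (continuousAt_const.mul (hψp.continuousAt.pow 2)) (by simp [hψ0 p hpU])

theorem IsTestFunction.integral_hardy_le (hη : IsTestFunction U η)
    (hψ : ∀ p ∈ U, ContDiffAt ℝ 2 ψ p) (hψ0 : ∀ p ∈ U, ψ p ≠ 0) :
    ∫ p, (‖∇ ψ p‖ ^ 2 - 2 * ψ p * Δ ψ p) / (4 * ψ p ^ 2) * η p ^ 2 ≤ ∫ p, ‖∇ η p‖ ^ 2 := by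
  have hψ' p (hp : p ∈ tsupport η) := hψ p (hη.tsupport_subset hp)
  have hψ0' p (hp : p ∈ tsupport η) := hψ0 p (hη.tsupport_subset hp)
  let g : E → ℝ := fun p => η p / ψ p * η p
  have hg_supp : tsupport g ⊆ tsupport η := tsupport_mul_subset_right
  have hg_cpt : HasCompactSupport g := hη.hasCompactSupport.mul_left
  have hg : ContDiff ℝ 1 g := contDiff_mul_of_tsupport (fun p hp =>
    (hη.contDiff_of_le (n := 1)).contDiffAt.div ((hψ' p hp).of_le (by norm_num)) (hψ0' p hp))
    (hη.contDiff_of_le (n := 1))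
  have hint₁ : Integrable fun p => ⟪∇ g p, ∇ ψ p⟫ :=
    integrable_inner_of_tsupport (continuous_gradient hg) (hasCompactSupport_gradient hg_cpt)
      fun p hp => continuousAt_gradient (hψ' p (hg_supp (tsupport_gradient_subset g hp))) (by simp)
  have hint₂ : Integrable fun p => g p * Δ ψ p := by
    simp_rw [mul_comm (g _)]
    exact integrable_mul_of_tsupport (fun p hp => continuousAt_laplacian (hψ' p (hg_supp hp)))
      hg.continuous hg_cpt
  have hint₃ := hη.integrable_hardy hψ hψ0
  have hle p : (‖∇ ψ p‖ ^ 2 - 2 * ψ p * Δ ψ p) / (4 * ψ p ^ 2) * η p ^ 2 +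
      (⟪∇ g p, ∇ ψ p⟫ + g p * Δ ψ p) / 2 ≤ ‖∇ η p‖ ^ 2 := by
    by_cases hp : p ∈ tsupport η
    · exact hardy_integrand_le (hη.differentiable p)
        ((hψ' p hp).differentiableAt (by simp)) (hψ0' p hp)
    · simp [gradient_eq_zero_of_notMem_tsupport fun h => hp (hg_supp h), g,
        image_eq_zero_of_notMem_tsupport hp]
  have hgreen : ∫ p, ⟪∇ g p, ∇ ψ p⟫ + g p * Δ ψ p = 0 := by
    rw [integral_add hint₁ hint₂, integral_inner_gradient_eq_neg_integral_mul_laplacian hg hg_cpt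
      fun p hp => hψ' p (hg_supp hp), neg_add_cancel]
  have hmono := integral_mono (hint₃.add ((hint₁.add hint₂).div_const 2))
    hη.integrable_norm_gradient_sq hle
  rwa [integral_add' hint₃ ((hint₁.add hint₂).div_const 2), integral_div, Pi.add_def, hgreen,
    zero_div, add_zero] at hmono

end Green

section Rellich

lemma eLpNorm_integral_le {X Y F : Type*} [MeasurableSpace X] [MeasurableSpace Y]
    [NormedAddCommGroup F] [NormedSpace ℝ F] {μ : Measure X} {ν : Measure Y} [SFinite μ]
    [IsProbabilityMeasure ν] {f : X → Y → F} {p C : ℝ≥0∞} (hp : 1 ≤ p) (hp' : p ≠ ⊤)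
    (hf : AEStronglyMeasurable (Function.uncurry f) (μ.prod ν))
    (hC : ∀ᵐ y ∂ν, eLpNorm (f · y) p μ ≤ C) :
    eLpNorm (fun x => ∫ y, f x y ∂ν) p μ ≤ C := by
  have hp₀ : p ≠ 0 := (zero_lt_one.trans_le hp).ne'
  have hpos : 0 < p.toReal := ENNReal.toReal_pos hp₀ hp'
  have hjensen : ∀ᵐ x ∂μ, ‖∫ y, f x y ∂ν‖ₑ ^ p.toReal ≤ ∫⁻ y, ‖f x y‖ₑ ^ p.toReal ∂ν := by
    filter_upwards [hf.prodMk_left] with x hx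
    rw [← ENNReal.le_rpow_inv_iff hpos, ← one_div, ← eLpNorm_eq_lintegral_rpow_enorm_toReal hp₀ hp']
    exact (enorm_integral_le_lintegral_enorm _).trans
      (eLpNorm_one_eq_lintegral_enorm.symm.trans_le (eLpNorm_le_eLpNorm_of_exponent_le hp hx))
  rw [eLpNorm_eq_lintegral_rpow_enorm_toReal hp₀ hp', one_div, ENNReal.rpow_inv_le_iff hpos]
  calc ∫⁻ x, ‖∫ y, f x y ∂ν‖ₑ ^ p.toReal ∂μ
      ≤ ∫⁻ x, ∫⁻ y, ‖f x y‖ₑ ^ p.toReal ∂ν ∂μ := lintegral_mono_ae hjensen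
    _ = ∫⁻ y, ∫⁻ x, ‖f x y‖ₑ ^ p.toReal ∂μ ∂ν := lintegral_lintegral_swap (hf.enorm.pow_const _)
    _ ≤ ∫⁻ _, C ^ p.toReal ∂ν := by
        refine lintegral_mono_ae (hC.mono fun y hy => ?_)
        rwa [eLpNorm_eq_lintegral_rpow_enorm_toReal hp₀ hp', one_div,
          ENNReal.rpow_inv_le_iff hpos] at hy
    _ = C ^ p.toReal := by simp

lemma inner_toLp_toLp {α : Type*} [MeasurableSpace α] {μ : Measure α} {f g : α → ℝ}
    (hf : MemLp f 2 μ) (hg : MemLp g 2 μ) : ⟪hf.toLp f, hg.toLp g⟫ = ∫ x, f x * g x ∂μ := by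
  rw [L2.inner_def]
  refine integral_congr_ae ?_
  filter_upwards [hf.coeFn_toLp, hg.coeFn_toLp] with x hfx hgx
  simp [hfx, hgx, mul_comm]

lemma abs_integral_mul_le_eLpNorm {α : Type*} [MeasurableSpace α] {μ : Measure α} {f g : α → ℝ}
    (hf : MemLp f 2 μ) (hg : MemLp g 2 μ) :
    |∫ x, f x * g x ∂μ| ≤ (eLpNorm f 2 μ).toReal * (eLpNorm g 2 μ).toReal := by
  simpa [inner_toLp_toLp] using abs_real_inner_le_norm (hf.toLp f) (hg.toLp g)

lemma aestronglyMeasurable_integral_translate {E : Type*} [NormedAddCommGroup E]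
    [SecondCountableTopology E] [MeasurableSpace E] [BorelSpace E] {η : E → ℝ} (hη : Continuous η)
    (μ ν : Measure E) [SFinite ν] :
    AEStronglyMeasurable (fun x => ∫ z, η (x - z) ∂ν) μ :=
  AEStronglyMeasurable.integral_prod_right' (f := fun q : E × E => η (q.1 - q.2))
    (hη.comp (continuous_fst.sub continuous_snd)).aestronglyMeasurable

section Averages

variable {E : Type*} [NormedAddCommGroup E] [NormedSpace ℝ E] [FiniteDimensional ℝ E]
  [MeasurableSpace E] [BorelSpace E] {μ : Measure E} [μ.IsAddHaarMeasure] {η : E → ℝ} {p : ℝ≥0∞}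

lemma eLpNorm_sub_translate_le (hp : 1 ≤ p) (hp' : p ≠ ⊤) (hη : ContDiff ℝ 1 η) (z : E) :
    eLpNorm (fun x => η x - η (x - z)) p μ ≤ ‖z‖ₑ * eLpNorm (fderiv ℝ η) p μ := by
  have hcont : Continuous fun q : E × ℝ => fderiv ℝ η (q.1 - q.2 • z) z :=
    ((hη.continuous_fderiv (by simp)).comp (by fun_prop)).clm_apply continuous_const
  have hderiv (x : E) (t : ℝ) :
      HasDerivAt (fun t : ℝ => η (x - t • z)) (-fderiv ℝ η (x - t • z) z) t := by
    have hline : HasDerivAt (fun t : ℝ => x - t • z) (-z) t := by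
      simpa using ((hasDerivAt_id t).smul_const z).const_sub x
    exact (HasFDerivAt.comp_hasDerivAt (f := fun t : ℝ => x - t • z) t
      (hη.differentiable (by simp) (x - t • z)).hasFDerivAt hline).congr_deriv (by simp)
  have hftc (x : E) : η x - η (x - z) = ∫ t in Ioc (0 : ℝ) 1, fderiv ℝ η (x - t • z) z := by
    have h := intervalIntegral.integral_eq_sub_of_hasDerivAt (a := 0) (b := 1)
      (fun t _ => hderiv x t)
      ((hcont.comp (Continuous.prodMk_right x)).neg.intervalIntegrable 0 1)
    rw [intervalIntegral.integral_neg, intervalIntegral.integral_of_le zero_le_one] at h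
    simp only [one_smul, zero_smul, sub_zero] at h
    linarith
  have : IsProbabilityMeasure (volume.restrict (Ioc (0 : ℝ) 1)) := ⟨by simp⟩
  simp_rw [hftc]
  refine eLpNorm_integral_le hp hp' hcont.aestronglyMeasurable (ae_of_all _ fun t => ?_)
  calc eLpNorm (fun x => fderiv ℝ η (x - t • z) z) p μ
      = eLpNorm (fun x => fderiv ℝ η x z) p μ :=
        eLpNorm_comp_measurePreserving (g := fun x => fderiv ℝ η x z)
          ((hη.continuous_fderiv (by simp)).clm_apply continuous_const).aestronglyMeasurable
          (measurePreserving_sub_right μ (t • z))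
    _ ≤ ‖z‖ₑ * eLpNorm (fderiv ℝ η) p μ := by
        refine eLpNorm_le_mul_eLpNorm_of_ae_le_mul' ?_ p (c := ‖z‖₊)
        exact ae_of_all _ fun x => by
          rw [mul_comm]
          exact ContinuousLinearMap.le_opENorm _ _

lemma eLpNorm_sub_integral_translate_le (hp : 1 ≤ p) (hp' : p ≠ ⊤) (hη : ContDiff ℝ 1 η)
    {ν : Measure E} [IsProbabilityMeasure ν] {ε : ℝ} (hν : ∀ᵐ z ∂ν, ‖z‖ ≤ ε) :
    eLpNorm (fun x => η x - ∫ z, η (x - z) ∂ν) p μ ≤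
      ENNReal.ofReal ε * eLpNorm (fderiv ℝ η) p μ := by
  have hint (x : E) : Integrable (fun z => η (x - z)) ν := by
    obtain ⟨C, hC⟩ := (isCompact_closedBall x ε).exists_bound_of_continuousOn
      hη.continuous.continuousOn
    refine .of_bound
      (hη.continuous.comp (continuous_const.sub continuous_id)).aestronglyMeasurable C ?_
    filter_upwards [hν] with z hz
    exact hC _ (by simpa [dist_eq_norm] using hz)
  have heq (x : E) : η x - ∫ z, η (x - z) ∂ν = ∫ z, (η x - η (x - z)) ∂ν := by
    simp [integral_sub (integrable_const _) (hint x)]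
  simp_rw [heq]
  refine eLpNorm_integral_le hp hp' ?_ (hν.mono fun z hz => ?_)
  · exact Continuous.aestronglyMeasurable
      (by have := hη.continuous; fun_prop [Function.uncurry])
  · refine (eLpNorm_sub_translate_le hp hp' hη z).trans ?_
    gcongr
    rw [← ofReal_norm]
    exact ENNReal.ofReal_le_ofReal hz

lemma eLpNorm_le_add_eLpNorm_integral_translate_ball (hp : 1 ≤ p) (hp' : p ≠ ⊤)
    (hη : ContDiff ℝ 1 η) {δ : ℝ} (hδ : 0 < δ) :
    eLpNorm η p μ ≤ ENNReal.ofReal δ * eLpNorm (fderiv ℝ η) p μ +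
      eLpNorm (fun x => ∫ z, η (x - z) ∂μ[|Metric.ball 0 δ]) p μ := by
  have : IsProbabilityMeasure μ[|Metric.ball (0 : E) δ] :=
    ProbabilityTheory.cond_isProbabilityMeasure_of_finite (Metric.measure_ball_pos μ 0 hδ).ne'
      measure_ball_lt_top.ne
  have hδ' : ∀ᵐ z ∂μ[|Metric.ball (0 : E) δ], ‖z‖ ≤ δ :=
    (ProbabilityTheory.ae_cond_mem measurableSet_ball).mono fun z hz =>
      (mem_ball_zero_iff.1 hz).le
  have hmeas := aestronglyMeasurable_integral_translate hη.continuous μ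
    μ[|Metric.ball (0 : E) δ]
  calc eLpNorm η p μ
      = eLpNorm ((fun x => η x - ∫ z, η (x - z) ∂μ[|Metric.ball 0 δ]) +
          fun x => ∫ z, η (x - z) ∂μ[|Metric.ball 0 δ]) p μ := by
        congr 1 with x
        simp
    _ ≤ _ := eLpNorm_add_le (hη.continuous.aestronglyMeasurable.sub hmeas) hmeas hp
    _ ≤ _ := add_le_add_left (eLpNorm_sub_integral_translate_le hp hp' hη hδ') _

lemma integral_translate_cond (f : E → ℝ) {s : Set E} (hs : MeasurableSet s) (x : E) :
    ∫ z, f (x - z) ∂μ[|s] = (μ.real s)⁻¹ * ∫ y, f y * s.indicator 1 (x - y) ∂μ := by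
  rw [ProbabilityTheory.cond, integral_smul_measure, ← integral_indicator hs, smul_eq_mul,
    ← integral_sub_left_eq_self _ μ x, ENNReal.toReal_inv, measureReal_def]
  congr 2 with y
  by_cases hy : x - y ∈ s <;> simp [hy]

lemma tendsto_eLpNorm_of_forall_enorm_le {α F : Type*} [MeasurableSpace α]
    [NormedAddCommGroup F] {μ : Measure α} {f : ℕ → α → F} {p : ℝ≥0∞} (hp : p ≠ 0) (hp' : p ≠ ⊤)
    (hf : ∀ n, AEStronglyMeasurable (f n) μ) {B : ℝ≥0∞} (hB : B ≠ ⊤) {s : Set α}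
    (hs : MeasurableSet s) (hs' : μ s ≠ ⊤) (hle : ∀ n, ∀ x ∈ s, ‖f n x‖ₑ ≤ B)
    (hzero : ∀ n, ∀ x ∉ s, f n x = 0) (hlim : ∀ x, Tendsto (fun n => f n x) atTop (𝓝 0)) :
    Tendsto (fun n => eLpNorm (f n) p μ) atTop (𝓝 0) := by
  have hpos : 0 < p.toReal := ENNReal.toReal_pos hp hp'
  have h : Tendsto (fun n => ∫⁻ x, ‖f n x‖ₑ ^ p.toReal ∂μ) atTop (𝓝 (∫⁻ _, 0 ∂μ)) := by
    refine tendsto_lintegral_of_dominated_convergence' (s.indicator fun _ => B ^ p.toReal)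
      (fun n => (hf n).enorm.pow_const _) (fun n => ae_of_all _ fun x => ?_) ?_
      (ae_of_all _ fun x => ?_)
    · by_cases hx : x ∈ s
      · simpa [hx] using ENNReal.rpow_le_rpow (hle n x hx) hpos.le
      · simp [hx, hzero n x hx, hpos]
    · rw [lintegral_indicator_const hs]
      exact ENNReal.mul_ne_top (ENNReal.rpow_ne_top_of_nonneg hpos.le hB) hs'
    · simpa [hpos] using ((hlim x).enorm.ennrpow_const p.toReal)
  simp_rw [eLpNorm_eq_lintegral_rpow_enorm_toReal hp hp']
  simpa [hpos] using h.ennrpow_const (1 / p.toReal)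

lemma tendsto_eLpNorm_integral_translate {U : Set E} (hU : Bornology.IsBounded U)
    {η : ℕ → E → ℝ} (hη : ∀ n, Continuous (η n)) (hηU : ∀ n, ∀ p ∉ U, η n p = 0) {M : ℝ≥0∞}
    (hM : M ≠ ⊤) (hmem : ∀ n, MemLp (η n) 2 μ) (hbound : ∀ n, eLpNorm (η n) 2 μ ≤ M)
    (hweak : ∀ h, MemLp h 2 μ → Tendsto (fun n => ∫ x, η n x * h x ∂μ) atTop (𝓝 0)) {s : Set E}
    (hs : MeasurableSet s) (hs' : Bornology.IsBounded s) :
    Tendsto (fun n => eLpNorm (fun x => ∫ z, η n (x - z) ∂μ[|s]) 2 μ) atTop (𝓝 0) := by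
  have hh₀ : MemLp (s.indicator (1 : E → ℝ)) 2 μ :=
    memLp_indicator_const 2 hs 1 (Or.inr hs'.measure_lt_top.ne)
  have hh (x) : MemLp (fun y => s.indicator (1 : E → ℝ) (x - y)) 2 μ :=
    hh₀.comp_measurePreserving (Measure.measurePreserving_sub_left μ x)
  have hbound_translate (n x) : ‖∫ z, η n (x - z) ∂μ[|s]‖ₑ ≤ ENNReal.ofReal ((μ.real s)⁻¹ *
      (M.toReal * (eLpNorm (s.indicator (1 : E → ℝ)) 2 μ).toReal)) := by
    rw [integral_translate_cond _ hs, ← ofReal_norm, norm_mul, Real.norm_of_nonneg (by positivity)]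
    gcongr
    refine (abs_integral_mul_le_eLpNorm (hmem n) (hh x)).trans ?_
    rw [← eLpNorm_comp_measurePreserving hh₀.1 (Measure.measurePreserving_sub_left μ x)]
    exact mul_le_mul_of_nonneg_right (ENNReal.toReal_mono hM (hbound n)) ENNReal.toReal_nonneg
  refine tendsto_eLpNorm_of_forall_enorm_le two_ne_zero ENNReal.ofNat_ne_top (fun n => ?_)
    ENNReal.ofReal_ne_top (measurableSet_toMeasurable μ (s + U))
    (by rw [measure_toMeasurable]; exact (hs'.add hU).measure_lt_top.ne)
    (fun n x _ => hbound_translate n x) (fun n x hx => ?_) fun x => ?_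
  · exact aestronglyMeasurable_integral_translate (hη n) _ _
  · rw [integral_translate_cond _ hs, integral_eq_zero_of_ae (ae_of_all _ fun y => ?_), mul_zero]
    by_cases hy : x - y ∈ s
    · have hyU : y ∉ U := fun hyU => hx (subset_toMeasurable μ _ ⟨x - y, hy, y, hyU, by simp⟩)
      simp [hηU n y hyU]
    · simp [hy]
  · simp_rw [integral_translate_cond _ hs]
    simpa using (hweak _ (hh x)).const_mul (μ.real s)⁻¹

theorem tendsto_eLpNorm_of_tendsto_integral_mul {U : Set E} (hU : Bornology.IsBounded U)
    {η : ℕ → E → ℝ} (hη : ∀ n, IsTestFunction U (η n)) {M M' : ℝ≥0∞}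
    (hM : M ≠ ⊤) (hM' : M' ≠ ⊤) (hbound : ∀ n, eLpNorm (η n) 2 μ ≤ M)
    (hbound' : ∀ n, eLpNorm (fderiv ℝ (η n)) 2 μ ≤ M')
    (hweak : ∀ h, MemLp h 2 μ → Tendsto (fun n => ∫ x, η n x * h x ∂μ) atTop (𝓝 0)) :
    Tendsto (fun n => eLpNorm (η n) 2 μ) atTop (𝓝 0) := by
  have hmem (n) : MemLp (η n) 2 μ :=
    (hη n).continuous.memLp_of_hasCompactSupport (hη n).hasCompactSupport
  refine ENNReal.tendsto_nhds_zero.2 fun ε hε => ?_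
  have hsmall : Tendsto (fun δ => ENNReal.ofReal δ * M') (𝓝[>] 0) (𝓝 0) := by
    simpa using ENNReal.Tendsto.mul_const
      ((ENNReal.continuous_ofReal.tendsto 0).mono_left nhdsWithin_le_nhds) (Or.inr hM')
  obtain ⟨δ, hδε, hδ⟩ := ((ENNReal.tendsto_nhds_zero.1 hsmall (ε / 2) (ENNReal.half_pos hε.ne')).and
    self_mem_nhdsWithin).exists
  have haverage := tendsto_eLpNorm_integral_translate hU (fun n => (hη n).continuous)
    (fun n p hp => (hη n).eq_zero_of_notMem hp) hM hmem hbound hweak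
    (measurableSet_ball (x := 0) (ε := δ)) Metric.isBounded_ball
  filter_upwards [ENNReal.tendsto_nhds_zero.1 haverage (ε / 2) (ENNReal.half_pos hε.ne')] with n hn
  calc eLpNorm (η n) 2 μ
      ≤ ENNReal.ofReal δ * eLpNorm (fderiv ℝ (η n)) 2 μ +
          eLpNorm (fun x => ∫ z, η n (x - z) ∂μ[|Metric.ball 0 δ]) 2 μ :=
        eLpNorm_le_add_eLpNorm_integral_translate_ball one_le_two ENNReal.ofNat_ne_top
          ((hη n).contDiff_of_le (n := 1)) hδ
    _ ≤ ε / 2 + ε / 2 :=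
        add_le_add ((mul_le_mul_right (hbound' n) _).trans hδε) hn
    _ = ε := ENNReal.add_halves ε

end Averages

lemma exists_subseq_tendsto_inner {H : Type*} [NormedAddCommGroup H] [InnerProductSpace ℝ H]
    [CompleteSpace H] [TopologicalSpace.SeparableSpace H] {x : ℕ → H} {M : ℝ}
    (hx : ∀ n, ‖x n‖ ≤ M) :
    ∃ (y : H) (φ : ℕ → ℕ), StrictMono φ ∧
      ∀ h, Tendsto (fun n => ⟪x (φ n), h⟫) atTop (𝓝 ⟪y, h⟫) := by
  obtain ⟨y, -, φ, hφ, hy⟩ := WeakDual.isSeqCompact_closedBall ℝ H 0 M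
    (x := fun n => StrongDual.toWeakDual (toDual ℝ H (x n))) fun n => by simpa using hx n
  refine ⟨(toDual ℝ H).symm (WeakDual.toStrongDual y), φ, hφ, fun h => ?_⟩
  rw [toDual_symm_apply]
  exact ((WeakDual.eval_continuous h).tendsto y).comp hy

end Rellich

section DirectMethod

lemma eLpNorm_two_eq_ofReal_sqrt {α F : Type*} [MeasurableSpace α] [NormedAddCommGroup F]
    {μ : Measure α} {f : α → F} (hf : MemLp f 2 μ) :
    eLpNorm f 2 μ = ENNReal.ofReal √(∫ x, ‖f x‖ ^ 2 ∂μ) := by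
  rw [hf.eLpNorm_eq_integral_rpow_norm two_ne_zero ENNReal.ofNat_ne_top]
  simp [Real.sqrt_eq_rpow]

lemma toReal_eLpNorm_two_sq {α F : Type*} [MeasurableSpace α] [NormedAddCommGroup F]
    {μ : Measure α} {f : α → F} (hf : MemLp f 2 μ) :
    (eLpNorm f 2 μ).toReal ^ 2 = ∫ x, ‖f x‖ ^ 2 ∂μ := by
  rw [eLpNorm_two_eq_ofReal_sqrt hf, ENNReal.toReal_ofReal (Real.sqrt_nonneg _),
    Real.sq_sqrt (integral_nonneg fun _ => sq_nonneg _)]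

lemma eLpNorm_two_le_ofReal_sqrt {α F : Type*} [MeasurableSpace α] [NormedAddCommGroup F]
    {μ : Measure α} {f : α → F} (hf : MemLp f 2 μ) {M : ℝ} (hM : ∫ x, ‖f x‖ ^ 2 ∂μ ≤ M) :
    eLpNorm f 2 μ ≤ ENNReal.ofReal √M := by
  rw [eLpNorm_two_eq_ofReal_sqrt hf]
  gcongr

variable {E : Type*} [NormedAddCommGroup E] [InnerProductSpace ℝ E] [FiniteDimensional ℝ E]
  [MeasurableSpace E] [BorelSpace E] {U : Set E} {Q V w d η ζ : E → ℝ} {κ H : ℝ}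

/-- The energy form `∫ ⟪∇η, ∇ζ⟫ - Q η ζ` of the Schrödinger operator `-Δ - Q`. -/
noncomputable def energy (Q η ζ : E → ℝ) : ℝ := ∫ p, (⟪∇ η p, ∇ ζ p⟫ - Q p * (η p * ζ p))

lemma IsTestFunction.memLp (hη : IsTestFunction U η) (p : ℝ≥0∞) : MemLp η p :=
  hη.continuous.memLp_of_hasCompactSupport hη.hasCompactSupport

lemma integrable_mul_mul (hQ : MemLp Q ⊤) (hη : IsTestFunction U η) (hζ : IsTestFunction U ζ) :
    Integrable fun p => Q p * (η p * ζ p) :=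
  memLp_one_iff_integrable.1 <| (memLp_one_iff_integrable.2
    ((hη.memLp 2).integrable_mul (hζ.memLp 2))).mul' (r := 1) hQ

lemma integrable_inner_gradient (hη : IsTestFunction U η) (hζ : IsTestFunction U ζ) :
    Integrable fun p => ⟪∇ η p, ∇ ζ p⟫ :=
  integrable_inner_of_tsupport (continuous_gradient (hη.contDiff_of_le (n := 1)))
    (hasCompactSupport_gradient hη.hasCompactSupport)
    fun _ _ => (continuous_gradient (hζ.contDiff_of_le (n := 1))).continuousAt

lemma energy_eq_sub (hQ : MemLp Q ⊤) (hη : IsTestFunction U η) (hζ : IsTestFunction U ζ) :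
    energy Q η ζ = (∫ p, ⟪∇ η p, ∇ ζ p⟫) - ∫ p, Q p * (η p * ζ p) :=
  integral_sub (integrable_inner_gradient hη hζ) (integrable_mul_mul hQ hη hζ)

lemma energy_add_smul (hQ : MemLp Q ⊤) (hη : IsTestFunction U η) (hζ : IsTestFunction U ζ)
    (c : ℝ) : energy Q (η + c • ζ) (η + c • ζ) =
      energy Q ζ ζ * (c * c) + 2 * energy Q η ζ * c + energy Q η η := by
  have hint {f g : E → ℝ} (hf : IsTestFunction U f) (hg : IsTestFunction U g) :
      Integrable fun p => ⟪∇ f p, ∇ g p⟫ - Q p * (f p * g p) :=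
    (integrable_inner_gradient hf hg).sub (integrable_mul_mul hQ hf hg)
  have hpoint (p : E) : ⟪∇ (η + c • ζ) p, ∇ (η + c • ζ) p⟫
      - Q p * ((η + c • ζ) p * (η + c • ζ) p) =
      c * c * (⟪∇ ζ p, ∇ ζ p⟫ - Q p * (ζ p * ζ p)) + 2 * c * (⟪∇ η p, ∇ ζ p⟫ - Q p * (η p * ζ p))
        + (⟪∇ η p, ∇ η p⟫ - Q p * (η p * η p)) := by
    rw [gradient_add (hη.differentiable p) ((hζ.const_smul c).differentiable p),
      gradient_const_smul (hζ.differentiable p)]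
    simp only [inner_add_left, inner_add_right, real_inner_smul_left, real_inner_smul_right,
      real_inner_comm (∇ η p), Pi.add_apply, Pi.smul_apply, smul_eq_mul]
    ring
  simp only [energy, hpoint]
  have hζζ := (hint hζ hζ).const_mul (c * c)
  have hηζ := (hint hη hζ).const_mul (2 * c)
  rw [integral_add (by exact hζζ.add hηζ) (hint hη hη), integral_add hζζ hηζ, integral_const_mul,
    integral_const_mul]
  ring

lemma sq_energy_le (hQ : MemLp Q ⊤) (hpos : ∀ η, IsTestFunction U η → 0 ≤ energy Q η η)
    (hη : IsTestFunction U η) (hζ : IsTestFunction U ζ) :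
    energy Q η ζ ^ 2 ≤ energy Q ζ ζ * energy Q η η := by
  have h := discrim_le_zero (a := energy Q ζ ζ) (b := 2 * energy Q η ζ) (c := energy Q η η)
    fun c => energy_add_smul hQ hη hζ c ▸ hpos _ (hη.add (hζ.const_smul c))
  rw [discrim] at h
  linarith

lemma energy_eq_neg_integral_mul (hQ : MemLp Q ⊤) (hη : IsTestFunction U η)
    (hζ : IsTestFunction U ζ) : energy Q η ζ = -∫ p, η p * (Δ ζ p + Q p * ζ p) := by
  have hΔ : Integrable fun p => η p * Δ ζ p := by
    simpa only [mul_comm] using integrable_mul_of_tsupport (f := Δ ζ) (fun _ _ =>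
      continuousAt_laplacian (hζ.contDiff_of_le (n := 2)).contDiffAt) hη.continuous
      hη.hasCompactSupport
  simp_rw [mul_add]
  rw [energy_eq_sub hQ hη hζ, integral_add hΔ, neg_add,
    integral_inner_gradient_eq_neg_integral_mul_laplacian (hη.contDiff_of_le (n := 1))
    hη.hasCompactSupport fun _ _ => (hζ.contDiff_of_le (n := 2)).contDiffAt, sub_eq_add_neg]
  · simp_rw [mul_left_comm]
  · simpa only [mul_left_comm] using integrable_mul_mul hQ hη hζ

lemma energy_add_const_mul (hV : MemLp V ⊤) (hw : MemLp w ⊤) (hη : IsTestFunction U η) (c : ℝ) :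
    energy (fun p => V p + c * w p) η η = energy V η η - c * ∫ p, w p * η p ^ 2 := by
  rw [energy_eq_sub (by exact hV.add (hw.const_mul c)) hη hη, energy_eq_sub hV hη hη, sub_sub,
    ← integral_const_mul]
  simp_rw [sq]
  rw [← integral_add (integrable_mul_mul hV hη hη) ((integrable_mul_mul hw hη hη).const_mul c)]
  simp only [add_mul, mul_assoc]

lemma integral_mul_sq_pos (hw : MemLp w ⊤) (hw' : ∀ p ∈ U, 0 < w p) (hη : IsTestFunction U η)
    (hη' : ∃ p ∈ U, η p ≠ 0) : 0 < ∫ p, w p * η p ^ 2 := by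
  obtain ⟨p, -, hp⟩ := hη'
  have hopen : IsOpen (Function.support η) := hη.continuous.isOpen_support
  have hint : Integrable fun p => w p * η p ^ 2 := by
    simpa only [sq] using integrable_mul_mul hw hη hη
  have hmemU {p} (hp : η p ≠ 0) : p ∈ U := by_contra fun h => hp (hη.eq_zero_of_notMem h)
  refine (integral_pos_iff_support_of_nonneg (fun p => ?_) hint).2
    ((hopen.measure_pos _ ⟨p, hp⟩).trans_le (measure_mono fun p hp => ?_))
  · by_cases hp : η p = 0
    · simp [hp]
    · exact mul_nonneg (hw' p (hmemU hp)).le (sq_nonneg _)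
  · exact mul_ne_zero (hw' p (hmemU hp)).ne' (pow_ne_zero 2 hp)

lemma energy_smul (hη : Differentiable ℝ η) (c : ℝ) :
    energy Q (c • η) (c • η) = c * c * energy Q η η := by
  rw [energy, energy, ← integral_const_mul]
  congr 1 with p
  rw [gradient_const_smul (hη p)]
  simp only [real_inner_smul_left, real_inner_smul_right, Pi.smul_apply, smul_eq_mul]
  ring

lemma exists_normalized (hη : IsTestFunction U η)
    (hpos : 0 < ∫ p, w p * η p ^ 2) :
    ∃ ζ, IsTestFunction U ζ ∧ ∫ p, w p * ζ p ^ 2 = 1 ∧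
      energy V ζ ζ = energy V η η / ∫ p, w p * η p ^ 2 := by
  set I := ∫ p, w p * η p ^ 2
  have hsq : (√I)⁻¹ * (√I)⁻¹ = I⁻¹ := by rw [← mul_inv, Real.mul_self_sqrt hpos.le]
  refine ⟨(√I)⁻¹ • η, hη.const_smul _, ?_, ?_⟩
  · simp only [Pi.smul_apply, smul_eq_mul, mul_pow, mul_left_comm (w _), integral_const_mul]
    rw [sq, hsq, inv_mul_cancel₀ hpos.ne']
  · rw [energy_smul hη.differentiable, hsq, inv_mul_eq_div]

/-- The positive lower bound `c` on the Rayleigh quotients comes from the Poincaré inequality. -/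
lemma exists_minimizing_sequence (hw : MemLp w ⊤) (hw' : ∀ p ∈ U, 0 < w p) (hU : IsOpen U)
    (hU' : U.Nonempty) {c : ℝ} (hc : 0 < c)
    (hpoincare : ∀ η, IsTestFunction U η → c * ∫ p, w p * η p ^ 2 ≤ energy V η η) :
    ∃ l, 0 < l ∧ (∀ η, IsTestFunction U η → l * ∫ p, w p * η p ^ 2 ≤ energy V η η) ∧
      ∃ η : ℕ → E → ℝ, (∀ n, IsTestFunction U (η n)) ∧ (∀ n, ∫ p, w p * η n p ^ 2 = 1) ∧
        Tendsto (fun n => energy V (η n) (η n)) atTop (𝓝 l) := by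
  let S := {e | ∃ η, IsTestFunction U η ∧ ∫ p, w p * η p ^ 2 = 1 ∧ energy V η η = e}
  have hS : S.Nonempty := by
    obtain ⟨η, hη, hη'⟩ := exists_isTestFunction_ne_zero hU hU'
    obtain ⟨ζ, hζ, hζ', -⟩ := exists_normalized (V := V) hη (integral_mul_sq_pos hw hw' hη hη')
    exact ⟨_, ζ, hζ, hζ', rfl⟩
  have hc_le : ∀ e ∈ S, c ≤ e := by
    rintro _ ⟨η, hη, hη', rfl⟩
    simpa [hη'] using hpoincare η hη
  have hl : c ≤ sInf S := le_csInf hS hc_le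
  obtain ⟨e, -, he, heS⟩ := exists_seq_tendsto_sInf hS ⟨c, hc_le⟩
  choose η hη hη' hηe using heS
  refine ⟨sInf S, hc.trans_le hl, fun ζ hζ => ?_, η, hη, hη', by simpa [hηe] using he⟩
  rcases le_or_gt (∫ p, w p * ζ p ^ 2) 0 with hnonpos | hpos
  · exact (mul_le_mul_of_nonpos_right hl hnonpos).trans (hpoincare ζ hζ)
  · obtain ⟨ξ, hξ, hξ', hξe⟩ := exists_normalized hζ hpos
    exact (le_div_iff₀ hpos).1 (hξe ▸ csInf_le ⟨c, hc_le⟩ ⟨ξ, hξ, hξ', rfl⟩)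

lemma integral_mul_sq_le {B : ℝ} (hw : MemLp w ⊤) (hB : ∀ᵐ p, w p ≤ B)
    (hη : IsTestFunction U η) : ∫ p, w p * η p ^ 2 ≤ B * ∫ p, η p ^ 2 := by
  rw [← integral_const_mul]
  refine integral_mono_ae (by simpa only [sq] using integrable_mul_mul hw hη hη)
    ((hη.memLp 2).integrable_sq.const_mul B) (hB.mono fun p hp => ?_)
  exact mul_le_mul_of_nonneg_right hp (sq_nonneg _)

lemma IsTestFunction.memLp_div (hd : Continuous d) (hd' : ∀ p ∈ U, d p ≠ 0)
    (hη : IsTestFunction U η) : MemLp (fun p => η p / d p) 2 := by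
  have hη_div : (fun p => η p / d p) = fun p => (d p)⁻¹ * η p := by
    ext p
    rw [div_eq_mul_inv, mul_comm]
  have hcont : Continuous fun p => (d p)⁻¹ * η p := continuous_of_tsupport fun p hp =>
    (hd.continuousAt.inv₀ (hd' p (hη.tsupport_subset (tsupport_mul_subset_right hp)))).mul
      hη.continuous.continuousAt
  exact hη_div ▸ hcont.memLp_of_hasCompactSupport hη.hasCompactSupport.mul_left

/-- Weak compactness is applied to `η n / d`, which is bounded in `L²` by Hardy's inequality: this
way the limit is obtained in the form `d * G` recording its decay at the boundary. -/
lemma exists_weak_limit (hd : Continuous d) (hd' : ∀ p ∈ U, d p ≠ 0)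
    (hdB : MemLp d ⊤) {η : ℕ → E → ℝ} (hη : ∀ n, IsTestFunction U (η n)) {M : ℝ}
    (hM : ∀ n, ∫ p, (η n p / d p) ^ 2 ≤ M) :
    ∃ (G : E → ℝ) (φ : ℕ → ℕ), MemLp G 2 ∧ StrictMono φ ∧ ∀ h, MemLp h 2 →
      Tendsto (fun n => ∫ p, η (φ n) p * h p) atTop (𝓝 (∫ p, d p * G p * h p)) := by
  have hmem n := (hη n).memLp_div hd hd'
  have : Fact ((2 : ℝ≥0∞) ≠ ⊤) := ⟨ENNReal.ofNat_ne_top⟩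
  obtain ⟨G, φ, hφ, hG⟩ := exists_subseq_tendsto_inner (x := fun n => (hmem n).toLp) (M := √M)
    fun n => by
      rw [Lp.norm_toLp]
      refine ENNReal.toReal_le_of_le_ofReal (by positivity)
        (eLpNorm_two_le_ofReal_sqrt (hmem n) (by simpa only [Real.norm_eq_abs, sq_abs] using hM n))
  refine ⟨G, φ, Lp.memLp G, hφ, fun h hh => ?_⟩
  have hdh : MemLp (fun p => d p * h p) 2 := hh.mul' hdB
  have hη_eq n : ∫ p, η n p * h p = ∫ p, η n p / d p * (d p * h p) := by
    congr 1 with p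
    by_cases hp : p ∈ U
    · field [hd' p hp]
    · simp [(hη n).eq_zero_of_notMem hp]
  have hlim := hG hdh.toLp
  rw [← Lp.toLp_coeFn G (Lp.memLp G)] at hlim
  simpa only [inner_toLp_toLp, hη_eq, mul_left_comm (G _), mul_assoc] using hlim

lemma exists_ae_le_of_memLp_top {α : Type*} [MeasurableSpace α] {μ : Measure α} {f : α → ℝ}
    (hf : MemLp f ⊤ μ) : ∃ C, 0 < C ∧ ∀ᵐ x ∂μ, f x ≤ C := by
  refine ⟨(eLpNorm f ⊤ μ).toReal + 1, by positivity, ?_⟩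
  filter_upwards [ae_le_eLpNormEssSup (f := f) (μ := μ)] with x hx
  rw [← eLpNorm_exponent_top] at hx
  have := (ENNReal.toReal_le_toReal (by simp) hf.2.ne).2 hx
  rw [toReal_enorm] at this
  linarith [Real.le_norm_self (f x)]

lemma exists_poincare (hw : MemLp w ⊤) (hd : Continuous d) (hd' : ∀ p ∈ U, d p ≠ 0)
    (hdB : MemLp d ⊤) (hH : 0 < H) (hHardy : ∀ η, IsTestFunction U η →
      ∫ p, (η p / d p) ^ 2 ≤ H * ∫ p, ‖∇ η p‖ ^ 2) :
    ∃ C, 0 < C ∧ ∀ η, IsTestFunction U η → ∫ p, w p * η p ^ 2 ≤ C * ∫ p, ‖∇ η p‖ ^ 2 := by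
  have hwd : MemLp (fun p => w p * (d p * d p)) ⊤ := (hdB.mul' (r := ⊤) hdB).mul' hw
  obtain ⟨C, hC, hwC⟩ := exists_ae_le_of_memLp_top hwd
  refine ⟨C * H, by positivity, fun η hη => ?_⟩
  calc ∫ p, w p * η p ^ 2 ≤ ∫ p, C * (η p / d p) ^ 2 := by
        refine integral_mono_ae (by simpa only [sq] using integrable_mul_mul hw hη hη)
          ((hη.memLp_div hd hd').integrable_sq.const_mul C) (hwC.mono fun p hp => ?_)
        by_cases hpU : p ∈ U
        · have h : w p * η p ^ 2 = w p * (d p * d p) * (η p / d p) ^ 2 := by field [hd' p hpU]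
          exact h.trans_le (mul_le_mul_of_nonneg_right hp (sq_nonneg _))
        · simp [hη.eq_zero_of_notMem hpU]
    _ ≤ C * H * ∫ p, ‖∇ η p‖ ^ 2 := by
        rw [integral_const_mul, mul_assoc]
        exact mul_le_mul_of_nonneg_left (hHardy η hη) hC.le

lemma not_ae_eq_zero_of_weak_limit (hU : Bornology.IsBounded U) (hw : MemLp w ⊤) {η : ℕ → E → ℝ}
    (hη : ∀ n, IsTestFunction U (η n)) (hη' : ∀ n, ∫ p, w p * η n p ^ 2 = 1) {M M' : ℝ}
    (hM : ∀ n, ∫ p, η n p ^ 2 ≤ M) (hM' : ∀ n, ∫ p, ‖∇ (η n) p‖ ^ 2 ≤ M') {v : E → ℝ}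
    (hv : ∀ h, MemLp h 2 → Tendsto (fun n => ∫ p, η n p * h p) atTop (𝓝 (∫ p, v p * h p))) :
    ¬ v =ᵐ[volume] 0 := by
  intro hv0
  have hnull h (hh : MemLp h 2) : Tendsto (fun n => ∫ p, η n p * h p) atTop (𝓝 0) := by
    have h0 : ∫ p, v p * h p = 0 := integral_eq_zero_of_ae (hv0.mono fun p hp => by simp [hp])
    exact h0 ▸ hv h hh
  have hfderiv n : MemLp (fderiv ℝ (η n)) 2 :=
    ((hη n).contDiff.continuous_fderiv (by simp)).memLp_of_hasCompactSupport
      ((hη n).hasCompactSupport.fderiv (𝕜 := ℝ))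
  have hstrong := tendsto_eLpNorm_of_tendsto_integral_mul hU hη
    ENNReal.ofReal_ne_top ENNReal.ofReal_ne_top
    (fun n => eLpNorm_two_le_ofReal_sqrt ((hη n).memLp 2)
      (by simpa only [Real.norm_eq_abs, sq_abs] using hM n))
    (fun n => eLpNorm_two_le_ofReal_sqrt (hfderiv n)
      (by simpa only [norm_gradient_eq_norm_fderiv] using hM' n)) hnull
  have hsq : Tendsto (fun n => ∫ p, η n p ^ 2) atTop (𝓝 0) := by
    have h := ((ENNReal.tendsto_toReal ENNReal.zero_ne_top).comp hstrong).pow 2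
    simpa [Function.comp_def, toReal_eLpNorm_two_sq ((hη _).memLp 2)] using h
  obtain ⟨B, -, hwB⟩ := exists_ae_le_of_memLp_top hw
  refine one_pos.not_ge (le_of_tendsto_of_tendsto' tendsto_const_nhds
    (by simpa using hsq.const_mul B)
    fun n => (hη' n).symm.trans_le (integral_mul_sq_le hw hwB (hη n)))

lemma memLp_laplacian_add_mul (hQ : MemLp Q ⊤) (hζ : IsTestFunction U ζ) :
    MemLp (fun p => Δ ζ p + Q p * ζ p) 2 :=
  ((continuous_laplacian (hζ.contDiff_of_le (n := 2))).memLp_of_hasCompactSupport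
    (hasCompactSupport_laplacian hζ.hasCompactSupport)).add ((hζ.memLp 2).mul' hQ)

lemma integral_mul_laplacian_add_mul_eq_zero (hQ : MemLp Q ⊤)
    (hpos : ∀ η, IsTestFunction U η → 0 ≤ energy Q η η) {η : ℕ → E → ℝ}
    (hη : ∀ n, IsTestFunction U (η n)) (hlim : Tendsto (fun n => energy Q (η n) (η n)) atTop (𝓝 0))
    {v : E → ℝ} (hv : ∀ h, MemLp h 2 →
      Tendsto (fun n => ∫ p, η n p * h p) atTop (𝓝 (∫ p, v p * h p)))
    (hζ : IsTestFunction U ζ) : ∫ p, v p * (Δ ζ p + Q p * ζ p) = 0 := by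
  have hsq : Tendsto (fun n => energy Q (η n) ζ ^ 2) atTop (𝓝 0) :=
    squeeze_zero (fun _ => sq_nonneg _) (fun n => sq_energy_le hQ hpos (hη n) hζ)
      (by simpa using hlim.const_mul (energy Q ζ ζ))
  have hzero : Tendsto (fun n => energy Q (η n) ζ) atTop (𝓝 0) := by
    exact (tendsto_zero_iff_abs_tendsto_zero _).2
      (by simpa [Function.comp_def, Real.sqrt_sq_eq_abs] using hsq.sqrt)
  simp only [energy_eq_neg_integral_mul hQ (hη _) hζ] at hzero
  simpa using tendsto_nhds_unique (hv _ (memLp_laplacian_add_mul hQ hζ)).neg hzero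

theorem exists_weak_groundState (hU : IsOpen U) (hU' : U.Nonempty) (hUb : Bornology.IsBounded U)
    (hV : MemLp V ⊤) (hw : MemLp w ⊤) (hw' : ∀ p ∈ U, 0 < w p) (hd : Continuous d)
    (hdB : MemLp d ⊤) (hd' : ∀ p ∈ U, d p ≠ 0) (hκ : 0 < κ)
    (hcoercive : ∀ η, IsTestFunction U η → κ * ∫ p, ‖∇ η p‖ ^ 2 ≤ energy V η η) (hH : 0 < H)
    (hHardy : ∀ η, IsTestFunction U η → ∫ p, (η p / d p) ^ 2 ≤ H * ∫ p, ‖∇ η p‖ ^ 2) :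
    ∃ l G, 0 < l ∧ MemLp G 2 ∧ (¬ (fun p => d p * G p) =ᵐ[volume] 0) ∧
      (∀ ζ, IsTestFunction U ζ → ∫ p, d p * G p * (Δ ζ p + (V p + l * w p) * ζ p) = 0) ∧
      ∀ η, IsTestFunction U η → l * ∫ p, w p * η p ^ 2 ≤ energy V η η := by
  obtain ⟨C, hC, hpoincare⟩ := exists_poincare hw hd hd' hdB hH hHardy
  obtain ⟨C', hC', hpoincare'⟩ :=
    exists_poincare (w := fun _ => 1) (memLp_top_const 1) hd hd' hdB hH hHardy
  obtain ⟨l, hl, hle, η, hη, hη', hlim⟩ := exists_minimizing_sequence (V := V) hw hw' hU hU'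
    (c := κ / C) (by positivity) fun η hη => by
      refine le_trans ?_ (hcoercive η hη)
      rw [div_mul_eq_mul_div, div_le_iff₀' hC, mul_left_comm]
      exact mul_le_mul_of_nonneg_left (hpoincare η hη) hκ.le
  obtain ⟨M, hM⟩ := hlim.bddAbove_range
  have hgrad n : ∫ p, ‖∇ (η n) p‖ ^ 2 ≤ M / κ :=
    (le_div_iff₀' hκ).2 ((hcoercive _ (hη n)).trans (hM (mem_range_self n)))
  obtain ⟨G, φ, hG, hφ, hweak⟩ := exists_weak_limit hd hd' hdB hη fun n =>
    (hHardy _ (hη n)).trans (mul_le_mul_of_nonneg_left (hgrad n) hH.le)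
  refine ⟨l, G, hl, hG, ?_, fun ζ hζ => ?_, hle⟩
  · refine not_ae_eq_zero_of_weak_limit (M := C' * (M / κ)) hUb hw (fun n => hη (φ n))
      (fun n => hη' _) (fun n => ?_) (fun n => hgrad _) hweak
    simpa using (hpoincare' _ (hη (φ n))).trans (mul_le_mul_of_nonneg_left (hgrad _) hC'.le)
  · refine integral_mul_laplacian_add_mul_eq_zero (hV.add (hw.const_mul l)) (fun η hη => ?_)
      (fun n => hη (φ n)) ?_ hweak hζ
    · exact (sub_nonneg.2 (hle η hη)).trans_eq (energy_add_const_mul hV hw hη l).symm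
    · have h := (hlim.comp hφ.tendsto_atTop).sub_const l
      rw [sub_self] at h
      refine h.congr fun n => ?_
      exact (energy_add_const_mul hV hw (hη (φ n)) l).symm ▸ by simp [hη']

end DirectMethod

section Convolution

lemma norm_convolution_le {E G H F : Type*} [NormedAddCommGroup E] [MeasurableSpace E]
    [NormedAddCommGroup G] [NormedSpace ℝ G] [NormedAddCommGroup H] [NormedSpace ℝ H]
    [NormedAddCommGroup F] [NormedSpace ℝ F] {μ : Measure E} (L : G →L[ℝ] H →L[ℝ] F)
    {f : E → G} {h : E → H} (hf : Integrable f μ) {C : ℝ} (hh : ∀ x, ‖h x‖ ≤ C) (x : E) :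
    ‖(f ⋆[L, μ] h) x‖ ≤ ‖L‖ * C * ∫ t, ‖f t‖ ∂μ := by
  rw [convolution_def, ← integral_const_mul]
  refine norm_integral_le_of_norm_le (hf.norm.const_mul _) (ae_of_all _ fun t => ?_)
  calc ‖L (f t) (h (x - t))‖ ≤ ‖L‖ * ‖f t‖ * ‖h (x - t)‖ := L.le_opNorm₂ _ _
    _ ≤ ‖L‖ * ‖f t‖ * C := by gcongr; exact hh _
    _ = ‖L‖ * C * ‖f t‖ := by ring

lemma tendstoUniformly_convolution {E G F : Type*} [NormedAddCommGroup E] [MeasurableSpace E]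
    [BorelSpace E] [NormedAddCommGroup G] [NormedSpace ℝ G] [NormedAddCommGroup F]
    [NormedSpace ℝ F] {μ : Measure E} (L : G →L[ℝ] ℝ →L[ℝ] F) {f : ℕ → E → G} {h : E → G}
    {g : E → ℝ} (hf : ∀ n, Integrable (f n) μ) (hh : Integrable h μ)
    (hfh : Tendsto (fun n => ∫ z, ‖f n z - h z‖ ∂μ) atTop (𝓝 0))
    (hg : Continuous g) (hg' : HasCompactSupport g) :
    TendstoUniformly (fun n => f n ⋆[L, μ] g) (h ⋆[L, μ] g) atTop := by
  obtain ⟨C, hC⟩ := hg.bounded_above_of_compact_support hg'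
  refine Metric.tendstoUniformly_iff.2 fun ε hε => ?_
  have hlim := hfh.const_mul (‖L‖ * C)
  rw [mul_zero] at hlim
  filter_upwards [hlim.eventually (gt_mem_nhds hε)] with n hn x
  have hex {f : E → G} (hf : Integrable f μ) : ConvolutionExistsAt f g x L μ :=
    hg'.convolutionExists_right L hf.locallyIntegrable hg x
  have hsub : ((h ⋆[L, μ] g) x - (f n ⋆[L, μ] g) x) = ((h - f n) ⋆[L, μ] g) x := by
    simp only [convolution_def, Pi.sub_apply, map_sub, sub_apply]
    exact (integral_sub (hex hh) (hex (hf n))).symm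
  rw [dist_eq_norm, hsub]
  refine (norm_convolution_le L (hh.sub (hf n)) hC x).trans_lt ?_
  simpa only [Pi.sub_apply, norm_sub_rev] using hn

variable {E : Type*} [NormedAddCommGroup E] [NormedSpace ℝ E] [FiniteDimensional ℝ E]
  [MeasurableSpace E] [BorelSpace E] {μ : Measure E} [μ.IsAddHaarMeasure] {P g η : E → ℝ}

lemma memLp_comp_sub_left {p : ℝ≥0∞} (hP : MemLp P p μ) (x : E) :
    MemLp (fun t => P (x - t)) p μ :=
  hP.comp_measurePreserving (μ.measurePreserving_sub_left x)

lemma eLpNorm_comp_sub_left {p : ℝ≥0∞} (hP : MemLp P p μ) (x : E) :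
    eLpNorm (fun t => P (x - t)) p μ = eLpNorm P p μ :=
  eLpNorm_comp_measurePreserving hP.1 (μ.measurePreserving_sub_left x)

lemma abs_convolution_le (hP : MemLp P 2 μ) (hg : MemLp g 2 μ) (x : E) :
    |(P ⋆[mul ℝ ℝ, μ] g) x| ≤ (eLpNorm P 2 μ).toReal * (eLpNorm g 2 μ).toReal := by
  rw [convolution_mul_swap, ← eLpNorm_comp_sub_left hP x]
  exact abs_integral_mul_le_eLpNorm (memLp_comp_sub_left hP x) hg

lemma convolution_congr_of_ball {r : ℝ} (hP : ∀ z, r ≤ ‖z‖ → P z = 0) {g' : E → ℝ} {x : E}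
    (h : EqOn g g' (Metric.ball x r)) : (P ⋆[mul ℝ ℝ, μ] g) x = (P ⋆[mul ℝ ℝ, μ] g') x := by
  simp only [convolution_mul_swap]
  refine integral_congr_ae (ae_of_all _ fun t => ?_)
  rcases lt_or_ge ‖x - t‖ r with ht | ht
  · simp only [h (show t ∈ Metric.ball x r by rwa [Metric.mem_ball, dist_comm, dist_eq_norm])]
  · simp [hP _ ht]

lemma tsupport_convolution_subset {r : ℝ} (hP : ∀ z, r ≤ ‖z‖ → P z = 0) :
    tsupport (P ⋆[mul ℝ ℝ, μ] g) ⊆ Metric.cthickening r (tsupport g) := by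
  refine closure_minimal (fun x hx => ?_) Metric.isClosed_cthickening
  by_contra hxr
  refine hx ((convolution_congr_of_ball hP (g' := 0) fun t ht => ?_).trans (by simp))
  refine image_eq_zero_of_notMem_tsupport fun htg => hxr ?_
  exact Metric.mem_cthickening_of_dist_le x t r _ htg (Metric.mem_ball'.1 ht).le

lemma abs_convolution_le_of_ball (hP : MemLp P 2 μ) {r : ℝ} (hP' : ∀ z, r ≤ ‖z‖ → P z = 0)
    (hg : MemLp g 2 μ) (x : E) :
    |(P ⋆[mul ℝ ℝ, μ] g) x| ≤
      (eLpNorm P 2 μ).toReal * (eLpNorm g 2 (μ.restrict (Metric.ball x r))).toReal := by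
  rw [convolution_congr_of_ball hP' (g' := (Metric.ball x r).indicator g)
    fun t ht => (indicator_of_mem ht g).symm,
    ← eLpNorm_indicator_eq_eLpNorm_restrict measurableSet_ball]
  exact abs_convolution_le hP (hg.indicator measurableSet_ball) x

lemma continuous_convolution (hP : MemLp P 2 μ) (hg : MemLp g 2 μ) :
    Continuous (P ⋆[mul ℝ ℝ, μ] g) := by
  refine continuous_of_uniform_approx_of_continuous fun u hu => ?_
  obtain ⟨ε, hε, hεu⟩ := Metric.mem_uniformity_dist.1 hu
  set N := (eLpNorm g 2 μ).toReal
  obtain ⟨k, hk, hkP, hkc, hkm⟩ := hP.exists_hasCompactSupport_eLpNorm_sub_le (by simp)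
    (ε := ENNReal.ofReal (ε / (N + 1))) (by simpa using by positivity)
  refine ⟨k ⋆[mul ℝ ℝ, μ] g, hk.continuous_convolution_left _ hkc
    (hg.locallyIntegrable one_le_two), fun x => hεu ?_⟩
  have hsub : (P ⋆[mul ℝ ℝ, μ] g) x - (k ⋆[mul ℝ ℝ, μ] g) x = ((P - k) ⋆[mul ℝ ℝ, μ] g) x := by
    simp only [convolution_mul_swap, Pi.sub_apply, sub_mul]
    exact (integral_sub ((memLp_comp_sub_left hP x).integrable_mul hg)
      ((memLp_comp_sub_left hkm x).integrable_mul hg)).symm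
  rw [Real.dist_eq, hsub]
  calc |((P - k) ⋆[mul ℝ ℝ, μ] g) x|
      ≤ (eLpNorm (P - k) 2 μ).toReal * N := abs_convolution_le (hP.sub hkm) hg x
    _ ≤ ε / (N + 1) * N := by
        gcongr
        exact ENNReal.toReal_le_of_le_ofReal (by positivity) hkP
    _ < ε := by rw [div_mul_eq_mul_div, div_lt_iff₀ (by positivity)]; nlinarith

lemma integral_convolution_mul (hP : MemLp P 2 μ) (hPe : ∀ z, P (-z) = P z) (hg : MemLp g 2 μ)
    (hη : Integrable η μ) :
    ∫ x, (P ⋆[mul ℝ ℝ, μ] g) x * η x ∂μ = ∫ x, g x * (P ⋆[mul ℝ ℝ, μ] η) x ∂μ := by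
  have hmeas : AEStronglyMeasurable (fun z : E × E => P (z.1 - z.2) * g z.2 * η z.1) (μ.prod μ) :=
    ((hg.1.convolution_integrand (mul ℝ ℝ) hP.1).congr
      (ae_of_all _ fun z => by simp [mul_comm])).mul hη.1.comp_fst
  have hslice (x : E) : Integrable (fun t => P (x - t) * g t) μ :=
    (memLp_comp_sub_left hP x).integrable_mul hg
  have hbound (x : E) : ∫ t, ‖P (x - t) * g t * η x‖ ∂μ ≤
      (eLpNorm P 2 μ).toReal * (eLpNorm g 2 μ).toReal * ‖η x‖ := by
    simp only [norm_mul, integral_mul_const]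
    gcongr
    rw [← eLpNorm_comp_sub_left hP x, ← eLpNorm_norm, ← eLpNorm_norm g]
    exact (le_abs_self _).trans
      (abs_integral_mul_le_eLpNorm (memLp_comp_sub_left hP x).norm hg.norm)
  have hint : Integrable (fun z : E × E => P (z.1 - z.2) * g z.2 * η z.1) (μ.prod μ) := by
    refine (integrable_prod_iff hmeas).2 ⟨ae_of_all _ fun x => (hslice x).mul_const (η x), ?_⟩
    refine (hη.norm.const_mul ((eLpNorm P 2 μ).toReal * (eLpNorm g 2 μ).toReal)).mono'
      hmeas.norm.integral_prod_right' (ae_of_all _ fun x => ?_)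
    rw [Real.norm_of_nonneg (integral_nonneg fun _ => norm_nonneg _)]
    exact hbound x
  calc ∫ x, (P ⋆[mul ℝ ℝ, μ] g) x * η x ∂μ
      = ∫ x, ∫ t, P (x - t) * g t * η x ∂μ ∂μ := by
        simp only [convolution_mul_swap, integral_mul_const]
    _ = ∫ t, ∫ x, P (x - t) * g t * η x ∂μ ∂μ := integral_integral_swap hint
    _ = ∫ t, g t * (P ⋆[mul ℝ ℝ, μ] η) t ∂μ := by
        simp only [convolution_mul_swap, ← integral_const_mul]
        refine integral_congr_ae (ae_of_all _ fun t => integral_congr_ae (ae_of_all _ fun x => ?_))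
        simp only [← hPe (x - t), neg_sub]
        ring

lemma contDiff_one_convolution_of_tendsto {k : ℕ → E → ℝ} {P' : E → E →L[ℝ] ℝ}
    (hk : ∀ n, ContDiff ℝ 1 (k n)) (hk' : ∀ n, HasCompactSupport (k n))
    (hP : Integrable P μ) (hP' : Integrable P' μ)
    (hkP : Tendsto (fun n => ∫ z, ‖k n z - P z‖ ∂μ) atTop (𝓝 0))
    (hkP' : Tendsto (fun n => ∫ z, ‖fderiv ℝ (k n) z - P' z‖ ∂μ) atTop (𝓝 0))
    (hg : Continuous g) (hg' : HasCompactSupport g) : ContDiff ℝ 1 (P ⋆[mul ℝ ℝ, μ] g) := by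
  have hki (n) : Integrable (k n) μ := (hk n).continuous.integrable_of_hasCompactSupport (hk' n)
  have hki' (n) : Integrable (fderiv ℝ (k n)) μ :=
    ((hk n).continuous_fderiv one_ne_zero).integrable_of_hasCompactSupport ((hk' n).fderiv ℝ)
  refine contDiff_one_iff_hasFDerivAt.2 ⟨P' ⋆[(mul ℝ ℝ).precompL E, μ] g,
    hg'.continuous_convolution_right _ hP'.locallyIntegrable hg, ?_⟩
  exact hasFDerivAt_of_tendstoUniformly (tendstoUniformly_convolution _ hki' hP' hkP' hg hg')
    (fun n x => (hk' n).hasFDerivAt_convolution_left (mul ℝ ℝ) (hk n)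
      hg.locallyIntegrable x) fun x =>
      (tendstoUniformly_convolution _ hki hP hkP hg hg').tendsto_at x

lemma fderiv_convolution_apply (hP : LocallyIntegrable P μ) (hg : ContDiff ℝ 1 g)
    (hg' : HasCompactSupport g) (x y : E) :
    fderiv ℝ (P ⋆[mul ℝ ℝ, μ] g) x y = (P ⋆[mul ℝ ℝ, μ] fun q => fderiv ℝ g q y) x := by
  rw [(hg'.hasFDerivAt_convolution_right (mul ℝ ℝ) hP hg x).fderiv,
    convolution_precompR_apply _ hP (hg'.fderiv ℝ) (hg.continuous_fderiv one_ne_zero)]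

lemma contDiff_succ_convolution (hP : LocallyIntegrable P μ)
    (hP' : ∀ g : E → ℝ, Continuous g → HasCompactSupport g → ContDiff ℝ 1 (P ⋆[mul ℝ ℝ, μ] g))
    (n : ℕ) : ∀ {g : E → ℝ}, ContDiff ℝ n g → HasCompactSupport g →
      ContDiff ℝ (n + 1) (P ⋆[mul ℝ ℝ, μ] g) := by
  induction n with
  | zero => exact fun hg hg' => by simpa using hP' _ hg.continuous hg'
  | succ n ih =>
    intro g hg hg'
    have hg1 : ContDiff ℝ 1 g := hg.of_le (by exact_mod_cast Nat.le_add_left 1 n)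
    refine contDiff_succ_iff_fderiv_apply.2
      ⟨(hg'.contDiff_convolution_right (mul ℝ ℝ) hP hg1).differentiable one_ne_zero, by simp,
        fun y => ?_⟩
    rw [funext fun x => fderiv_convolution_apply hP hg1 hg' x y]
    push_cast
    exact ih ((hg.fderiv_right (by norm_cast)).clm_apply contDiff_const)
      (hg'.fderiv_apply (𝕜 := ℝ) y)

end Convolution

section Regularity

lemma exists_continuousOn_ae_eq {X : Type*} [TopologicalSpace X] [MeasurableSpace X]
    [BorelSpace X] {μ : Measure X} [μ.IsOpenPosMeasure] {ι : Type*} [Countable ι] {s : ι → Set X}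
    (hs : ∀ i, IsOpen (s i)) {v : X → ℝ} {f : ι → X → ℝ} (hf : ∀ i, ContinuousOn (f i) (s i))
    (hv : ∀ i, v =ᵐ[μ.restrict (s i)] f i) :
    ∃ v', v' =ᵐ[μ] v ∧ EqOn v' v (⋃ i, s i)ᶜ ∧ ContinuousOn v' (⋃ i, s i) := by
  classical
  have hagree (i j) : EqOn (f i) (f j) (s i ∩ s j) :=
    Measure.eqOn_open_of_ae_eq (((hv i).symm.filter_mono (ae_mono (Measure.restrict_mono
      inter_subset_left le_rfl))).trans ((hv j).filter_mono (ae_mono (Measure.restrict_mono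
      inter_subset_right le_rfl)))) ((hs i).inter (hs j)) ((hf i).mono inter_subset_left)
      ((hf j).mono inter_subset_right)
  set v' : X → ℝ := fun p => if h : ∃ i, p ∈ s i then f h.choose p else v p with hv'
  have hv'f (i) : EqOn v' (f i) (s i) := fun p hp => by
    have h : ∃ i, p ∈ s i := ⟨i, hp⟩
    simpa only [hv', dif_pos h] using hagree h.choose i ⟨h.choose_spec, hp⟩
  have hv'v : EqOn v' v (⋃ i, s i)ᶜ := fun p hp => dif_neg (by simpa using hp)
  refine ⟨v', ?_, hv'v, ?_⟩
  · have hU : ∀ᵐ p ∂μ, p ∈ ⋃ i, s i → v' p = v p := by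
      rw [← ae_restrict_iff' (MeasurableSet.iUnion fun i => (hs i).measurableSet),
        ae_restrict_iUnion_iff]
      intro i
      filter_upwards [hv i, ae_restrict_mem (hs i).measurableSet] with p hvp hp
      rw [hv'f i hp, hvp]
    filter_upwards [hU] with p hp using by_cases hp fun h => hv'v h
  · rintro p hp
    obtain ⟨i, hi⟩ := mem_iUnion.1 hp
    exact (((hf i).congr (hv'f i)).continuousAt ((hs i).mem_nhds hi)).continuousWithinAt

variable {E : Type*} [NormedAddCommGroup E] [InnerProductSpace ℝ E] [FiniteDimensional ℝ E]
  [MeasurableSpace E] [BorelSpace E] {U : Set E} {r : ℝ} {P K Q v η : E → ℝ} {p : E}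

/-- A parametrix of the Laplacian at scale `r`: an even kernel `P` supported in the ball of radius
`r` with `Δ P = δ₀ + K` for a smooth remainder `K`. The equation, and the gain of one derivative
under convolution, are expressed through the operator `P ⋆ ·`. -/
structure IsParametrix (r : ℝ) (P K : E → ℝ) : Prop where
  neg_eq : ∀ z, P (-z) = P z
  remainder_neg_eq : ∀ z, K (-z) = K z
  eq_zero : ∀ z, r ≤ ‖z‖ → P z = 0
  remainder_eq_zero : ∀ z, r ≤ ‖z‖ → K z = 0
  memLp : MemLp P 2
  contDiff_remainder : ContDiff ℝ ∞ K
  contDiff_convolution : ∀ g : E → ℝ, Continuous g → HasCompactSupport g →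
    ContDiff ℝ 1 (P ⋆[mul ℝ ℝ] g)
  laplacian_convolution : ∀ η : E → ℝ, IsTestFunction univ η → ∀ x,
    Δ (P ⋆[mul ℝ ℝ] η) x = η x + (K ⋆[mul ℝ ℝ] η) x

/-- Distributional solutions of `Δ v + Q v = 0` in `U`. -/
def IsWeakSolution (U : Set E) (Q v : E → ℝ) : Prop :=
  ∀ ζ, IsTestFunction U ζ → ∫ p, v p * (Δ ζ p + Q p * ζ p) = 0

lemma IsWeakSolution.congr_ae {v' : E → ℝ} (hv : IsWeakSolution U Q v) (h : v' =ᵐ[volume] v) :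
    IsWeakSolution U Q v' := fun ζ hζ => by
  rw [← hv ζ hζ]
  exact integral_congr_ae (h.mul .rfl)

namespace IsParametrix

lemma hasCompactSupport_remainder (h : IsParametrix r P K) : HasCompactSupport K :=
  .intro (isCompact_closedBall 0 r) fun z hz =>
    h.remainder_eq_zero z (by simpa using (not_le.1 fun hz' => hz (by simpa using hz')).le)

lemma memLp_remainder (h : IsParametrix r P K) : MemLp K 2 :=
  h.contDiff_remainder.continuous.memLp_of_hasCompactSupport h.hasCompactSupport_remainder

lemma locallyIntegrable (h : IsParametrix r P K) : LocallyIntegrable P :=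
  h.memLp.locallyIntegrable one_le_two

lemma isTestFunction_convolution (h : IsParametrix r P K) (hr : 0 ≤ r)
    (hη : IsTestFunction {p | r < Metric.infDist p Uᶜ} η) :
    IsTestFunction U (P ⋆[mul ℝ ℝ] η) := by
  have hsupp := tsupport_convolution_subset (μ := volume) (g := η) h.eq_zero
  refine ⟨hη.hasCompactSupport.contDiff_convolution_right _ h.locallyIntegrable hη.contDiff,
    hη.hasCompactSupport.isCompact.cthickening.of_isClosed_subset (isClosed_tsupport _) hsupp,
    hsupp.trans fun x hx => ?_⟩
  rw [hη.hasCompactSupport.isCompact.cthickening_eq_biUnion_closedBall hr] at hx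
  obtain ⟨t, ht, hxt⟩ := mem_iUnion₂.1 hx
  by_contra hxU
  exact ((hη.tsupport_subset ht).trans_le (Metric.infDist_le_dist_of_mem hxU)).not_ge
    (Metric.mem_closedBall'.1 hxt)

lemma continuous_representation (h : IsParametrix r P K) (hv : MemLp v 2)
    (hQ : MemLp Q ⊤) :
    Continuous fun x => -((K ⋆[mul ℝ ℝ] v) x + (P ⋆[mul ℝ ℝ] fun p => Q p * v p) x) :=
  ((continuous_convolution h.memLp_remainder hv).add
    (continuous_convolution h.memLp (hv.mul' hQ))).neg

lemma integral_mul_representation (h : IsParametrix r P K) (hr : 0 ≤ r) (hv : MemLp v 2)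
    (hQ : MemLp Q ⊤) (hη : IsTestFunction {p | r < Metric.infDist p Uᶜ} η) :
    ∫ x, η x * (v x + (K ⋆[mul ℝ ℝ] v) x + (P ⋆[mul ℝ ℝ] fun p => Q p * v p) x) =
      ∫ x, v x * (Δ (P ⋆[mul ℝ ℝ] η) x + Q x * (P ⋆[mul ℝ ℝ] η) x) := by
  have hK := continuous_convolution h.memLp_remainder hv
  have hP := continuous_convolution h.memLp (hv.mul' hQ)
  have hηi : Integrable η := hη.continuous.integrable_of_hasCompactSupport hη.hasCompactSupport
  have hvη : Integrable fun x => v x * η x := hv.integrable_mul (hη.memLp 2)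
  have hKη : Integrable fun x => (K ⋆[mul ℝ ℝ] v) x * η x :=
    integrable_mul_of_tsupport (fun _ _ => hK.continuousAt) hη.continuous hη.hasCompactSupport
  have hPη : Integrable fun x => (P ⋆[mul ℝ ℝ] fun p => Q p * v p) x * η x :=
    integrable_mul_of_tsupport (fun _ _ => hP.continuousAt) hη.continuous hη.hasCompactSupport
  have hvK : Integrable fun x => v x * (K ⋆[mul ℝ ℝ] η) x := hv.integrable_mul (q := 2) <|
    Continuous.memLp_of_hasCompactSupport (hη.hasCompactSupport.continuous_convolution_right _
      (h.memLp_remainder.locallyIntegrable one_le_two) hη.continuous)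
      (h.hasCompactSupport_remainder.convolution _ hη.hasCompactSupport)
  have hvP : Integrable fun x => Q x * v x * (P ⋆[mul ℝ ℝ] η) x :=
    (hv.mul' hQ).integrable_mul (p := 2) (q := 2) ((h.isTestFunction_convolution hr hη).memLp 2)
  have hvKη : Integrable fun x => v x * η x + (K ⋆[mul ℝ ℝ] v) x * η x := hvη.add hKη
  have hvηK : Integrable fun x => v x * η x + v x * (K ⋆[mul ℝ ℝ] η) x := hvη.add hvK
  calc ∫ x, η x * (v x + (K ⋆[mul ℝ ℝ] v) x + (P ⋆[mul ℝ ℝ] fun p => Q p * v p) x)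
      = ∫ x, (v x * η x + (K ⋆[mul ℝ ℝ] v) x * η x
          + (P ⋆[mul ℝ ℝ] fun p => Q p * v p) x * η x) :=
        integral_congr_ae (ae_of_all _ fun x => by ring)
    _ = ∫ x, (v x * η x + v x * (K ⋆[mul ℝ ℝ] η) x + Q x * v x * (P ⋆[mul ℝ ℝ] η) x) := by
        rw [integral_add hvKη hPη, integral_add hvη hKη, integral_add hvηK hvP,
          integral_add hvη hvK,
          integral_convolution_mul h.memLp_remainder h.remainder_neg_eq hv hηi,
          integral_convolution_mul h.memLp h.neg_eq (hv.mul' hQ) hηi]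
    _ = ∫ x, v x * (Δ (P ⋆[mul ℝ ℝ] η) x + Q x * (P ⋆[mul ℝ ℝ] η) x) := by
        simp only [h.laplacian_convolution η ⟨hη.contDiff, hη.hasCompactSupport, subset_univ _⟩]
        exact integral_congr_ae (ae_of_all _ fun x => by ring)

lemma ae_eq_of_isWeakSolution (h : IsParametrix r P K) (hr : 0 ≤ r) (hv : MemLp v 2)
    (hQ : MemLp Q ⊤) (hweak : IsWeakSolution U Q v) :
    v =ᵐ[volume.restrict {p | r < Metric.infDist p Uᶜ}]
      fun x => -((K ⋆[mul ℝ ℝ] v) x + (P ⋆[mul ℝ ℝ] fun p => Q p * v p) x) := by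
  have hopen : IsOpen {p | r < Metric.infDist p Uᶜ} :=
    isOpen_lt continuous_const (Metric.continuous_infDist_pt _)
  have hloc : LocallyIntegrable fun x =>
      v x + (K ⋆[mul ℝ ℝ] v) x + (P ⋆[mul ℝ ℝ] fun p => Q p * v p) x :=
    ((hv.locallyIntegrable one_le_two).add
      (continuous_convolution h.memLp_remainder hv).locallyIntegrable).add
      (continuous_convolution h.memLp (hv.mul' hQ)).locallyIntegrable
  refine (ae_restrict_iff' hopen.measurableSet).2 ?_
  filter_upwards [hopen.ae_eq_zero_of_integral_contDiff_smul_eq_zero (hloc.locallyIntegrableOn _)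
    fun η hη hη' hηU => (h.integral_mul_representation hr hv hQ ⟨hη, hη', hηU⟩).trans
      (hweak _ (h.isTestFunction_convolution hr ⟨hη, hη', hηU⟩))] with x hx hxr
  linarith [hx hxr]

lemma eqOn_of_isWeakSolution (h : IsParametrix r P K) (hr : 0 ≤ r) (hv : MemLp v 2)
    (hvc : ContinuousOn v U) (hQ : MemLp Q ⊤) (hweak : IsWeakSolution U Q v) :
    EqOn v (fun x => -((K ⋆[mul ℝ ℝ] v) x + (P ⋆[mul ℝ ℝ] fun p => Q p * v p) x))
      {p | r < Metric.infDist p Uᶜ} := by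
  refine Measure.eqOn_open_of_ae_eq (h.ae_eq_of_isWeakSolution hr hv hQ hweak)
    (isOpen_lt continuous_const (Metric.continuous_infDist_pt _))
    (hvc.mono fun p hp => by_contra fun hpU => ?_) (h.continuous_representation hv hQ).continuousOn
  exact (hr.trans_lt hp).ne' (Metric.infDist_zero_of_mem hpU)

lemma contDiffAt_succ_of_isWeakSolution (h : IsParametrix r P K) (hr : 0 < r) (hv : MemLp v 2)
    (hQ : MemLp Q ⊤) (hweak : IsWeakSolution U Q v) {n : ℕ} (hvn : ContDiffOn ℝ n v U)
    (hQn : ContDiffOn ℝ n Q U) (hU : IsOpen U) (hp : 3 * r < Metric.infDist p Uᶜ) :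
    ContDiffAt ℝ (n + 1) v p := by
  let χ : ContDiffBump p := ⟨2 * r, 3 * r, by positivity, by linarith⟩
  have hχU : tsupport χ ⊆ U := fun x hx => by_contra fun hxU => by
    rw [χ.tsupport_eq, Metric.mem_closedBall'] at hx
    exact (hp.trans_le (Metric.infDist_le_dist_of_mem hxU)).not_ge hx
  have hsmooth : ContDiff ℝ n fun x => Q x * v x * χ x :=
    contDiff_mul_of_tsupport (fun x hx =>
      (hQn.contDiffAt (hU.mem_nhds (hχU hx))).mul (hvn.contDiffAt (hU.mem_nhds (hχU hx))))
      χ.contDiff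
  have hrep : ContDiff ℝ (n + 1) fun x =>
      -((K ⋆[mul ℝ ℝ] v) x + (P ⋆[mul ℝ ℝ] fun q => Q q * v q * χ q) x) :=
    ((h.hasCompactSupport_remainder.contDiff_convolution_left _ (n := (n + 1 : ℕ))
      (h.contDiff_remainder.of_le (by exact_mod_cast le_top))
      (hv.locallyIntegrable one_le_two)).add (contDiff_succ_convolution h.locallyIntegrable
        h.contDiff_convolution n hsmooth χ.hasCompactSupport.mul_left)).neg
  refine hrep.contDiffAt.congr_of_eventuallyEq ?_
  filter_upwards [Metric.ball_mem_nhds p hr] with x hx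
  have hxr : r < Metric.infDist x Uᶜ := by
    have := Metric.infDist_le_infDist_add_dist (s := Uᶜ) (x := p) (y := x)
    rw [Metric.mem_ball'] at hx
    linarith
  rw [h.eqOn_of_isWeakSolution hr.le hv hvn.continuousOn hQ hweak hxr]
  simp only
  congr 2
  refine convolution_congr_of_ball h.eq_zero fun t ht => ?_
  have hχt : χ t = 1 := χ.one_of_mem_closedBall <|
    (dist_triangle t x p).trans <| by rw [Metric.mem_ball] at ht hx; linarith
  simp [hχt]

end IsParametrix

lemma integral_laplacian_mul_comm {f g : E → ℝ} (hf : ContDiff ℝ 2 f) (hf' : HasCompactSupport f)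
    (hg : ContDiff ℝ 2 g) (hg' : HasCompactSupport g) : ∫ p, Δ f p * g p = ∫ p, f p * Δ g p := by
  rw [← neg_inj, ← integral_inner_gradient_eq_neg_integral_mul_laplacian (hf.of_le one_le_two) hf'
    fun _ _ => hg.contDiffAt]
  simp only [mul_comm (Δ f _), real_inner_comm (∇ g _)]
  exact (integral_inner_gradient_eq_neg_integral_mul_laplacian (hg.of_le one_le_two) hg'
    fun _ _ => hf.contDiffAt).symm

lemma IsWeakSolution.integral_mul_laplacian_add_mul_eq_zero (hweak : IsWeakSolution U Q v)
    {W : Set E} (hW : IsOpen W) (hWU : W ⊆ U) (hQ : ContinuousOn Q W) {f : E → ℝ}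
    (hf : ContDiff ℝ 2 f) (hf' : HasCompactSupport f) (hfv : EqOn f v W)
    (hη : IsTestFunction W η) : ∫ x, η x * (Δ v x + Q x * v x) = 0 := by
  have hΔ : EqOn (Δ f) (Δ v) W := fun x hx =>
    (laplacian_congr_nhds (hfv.eventuallyEq_of_mem (hW.mem_nhds hx))).self_of_nhds
  have hΔη : Integrable fun x => Δ f x * η x := integrable_mul_of_tsupport
    (fun _ _ => (continuous_laplacian hf).continuousAt) hη.continuous hη.hasCompactSupport
  have hQη : Integrable fun x => Q x * f x * η x := integrable_mul_of_tsupport (fun x hx =>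
    (hQ.continuousAt (hW.mem_nhds (hη.tsupport_subset hx))).mul hf.continuous.continuousAt)
    hη.continuous hη.hasCompactSupport
  have hfη : Integrable fun x => f x * Δ η x := integrable_mul_of_tsupport
    (fun _ _ => hf.continuous.continuousAt) (continuous_laplacian hη.contDiff_of_le)
    (hasCompactSupport_laplacian hη.hasCompactSupport)
  calc ∫ x, η x * (Δ v x + Q x * v x)
      = ∫ x, (Δ f x * η x + Q x * f x * η x) := by
        refine integral_congr_ae (ae_of_all _ fun x => ?_)
        by_cases hx : x ∈ W
        · simp only [hΔ hx, hfv hx]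
          ring
        · simp [hη.eq_zero_of_notMem hx]
    _ = ∫ x, (f x * Δ η x + Q x * f x * η x) := by
        rw [integral_add hΔη hQη, integral_add hfη hQη, integral_laplacian_mul_comm hf hf'
          hη.contDiff_of_le hη.hasCompactSupport]
    _ = ∫ x, v x * (Δ η x + Q x * η x) := by
        refine integral_congr_ae (ae_of_all _ fun x => ?_)
        by_cases hx : x ∈ tsupport η
        · simp only [hfv (hη.tsupport_subset hx)]
          ring
        · simp [laplacian_eq_zero_of_notMem_tsupport hx, image_eq_zero_of_notMem_tsupport hx]
    _ = 0 := hweak η (hη.mono hWU)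

lemma IsWeakSolution.laplacian_add_mul_eq_zero (hweak : IsWeakSolution U Q v) (hU : IsOpen U)
    (hv : ContDiffOn ℝ 2 v U) (hQ : ContinuousOn Q U) (hp : p ∈ U) : Δ v p + Q p * v p = 0 := by
  obtain ⟨ρ, hρ, hρU⟩ := Metric.nhds_basis_closedBall.mem_iff.1 (hU.mem_nhds hp)
  let χ : ContDiffBump p := ⟨ρ / 2, ρ, by positivity, by linarith⟩
  have hχv : ContDiff ℝ 2 fun x => v x * χ x := contDiff_mul_of_tsupport
    (fun x hx => hv.contDiffAt (hU.mem_nhds (hρU (χ.tsupport_eq ▸ hx)))) χ.contDiff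
  have hball : Metric.ball p (ρ / 2) ⊆ U := fun x hx => hρU
    (Metric.ball_subset_closedBall (Metric.ball_subset_ball (by linarith) hx))
  have hχ : EqOn (fun x => v x * χ x) v (Metric.ball p (ρ / 2)) := fun x hx => by
    simp [χ.one_of_mem_closedBall (Metric.ball_subset_closedBall hx)]
  have hcont : ContinuousOn (fun x => Δ v x + Q x * v x) (Metric.ball p (ρ / 2)) := fun x hx =>
    have hxU := hU.mem_nhds (hball hx)
    ((continuousAt_laplacian (hv.contDiffAt hxU)).add ((hQ.continuousAt hxU).mul
      (hv.continuousOn.continuousAt hxU))).continuousWithinAt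
  have hae := Metric.isOpen_ball.ae_eq_zero_of_integral_contDiff_smul_eq_zero
    (hcont.locallyIntegrableOn Metric.isOpen_ball.measurableSet)
    fun η hη hη' hηU => hweak.integral_mul_laplacian_add_mul_eq_zero Metric.isOpen_ball hball
      (hQ.mono hball) hχv χ.hasCompactSupport.mul_left hχ ⟨hη, hη', hηU⟩
  exact Measure.eqOn_open_of_ae_eq ((ae_restrict_iff' Metric.isOpen_ball.measurableSet).2 hae)
    Metric.isOpen_ball hcont continuousOn_const (Metric.mem_ball_self (by positivity))

theorem exists_contDiffOn_of_isWeakSolution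
    (hpar : ∀ r : ℝ, 0 < r → ∃ P K : E → ℝ, IsParametrix r P K) (hU : IsOpen U) (hU' : Uᶜ.Nonempty)
    (hv : MemLp v 2) (hQ : MemLp Q ⊤) (hQ' : ContDiffOn ℝ 1 Q U) (hweak : IsWeakSolution U Q v) :
    ∃ v', v' =ᵐ[volume] v ∧ EqOn v' v Uᶜ ∧ ContDiffOn ℝ 2 v' U ∧
      ∀ p ∈ U, Δ v' p + Q p * v' p = 0 := by
  have hpos (p : E) (hp : p ∈ U) : 0 < Metric.infDist p Uᶜ :=
    (hU.isClosed_compl.notMem_iff_infDist_pos hU').1 (by simpa using hp)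
  choose P K hPK using fun n : ℕ => hpar (1 / (n + 1)) Nat.one_div_pos_of_nat
  have hUnion : ⋃ n : ℕ, {p | 1 / ((n : ℝ) + 1) < Metric.infDist p Uᶜ} = U := by
    ext p
    simp only [mem_iUnion, mem_ofPred_eq]
    refine ⟨fun ⟨n, hn⟩ => by_contra fun hp => ?_, fun hp => exists_nat_one_div_lt (hpos p hp)⟩
    exact (Nat.one_div_pos_of_nat.trans hn).ne' (Metric.infDist_zero_of_mem hp)
  obtain ⟨v', hae, heq, hcont⟩ := exists_continuousOn_ae_eq
    (fun n : ℕ => isOpen_lt continuous_const (Metric.continuous_infDist_pt Uᶜ))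
    (fun n => ((hPK n).continuous_representation hv hQ).continuousOn)
    (fun n => (hPK n).ae_eq_of_isWeakSolution Nat.one_div_pos_of_nat.le hv hQ hweak)
  rw [hUnion] at heq hcont
  have hv' : MemLp v' 2 := hv.ae_eq hae.symm
  have hweak' : IsWeakSolution U Q v' := hweak.congr_ae hae
  have hbootstrap (n : ℕ) (hvn : ContDiffOn ℝ n v' U) (hQn : ContDiffOn ℝ n Q U) :
      ContDiffOn ℝ (n + 1) v' U := fun p hp => by
    obtain ⟨P, K, h⟩ := hpar (Metric.infDist p Uᶜ / 4) (by linarith [hpos p hp])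
    exact (h.contDiffAt_succ_of_isWeakSolution (by linarith [hpos p hp]) hv' hQ hweak' hvn hQn hU
      (by linarith [hpos p hp])).contDiffWithinAt
  have hv1 : ContDiffOn ℝ 1 v' U := by
    simpa using hbootstrap 0 (by simpa using hcont) (by simpa using hQ'.continuousOn)
  have hv2 : ContDiffOn ℝ 2 v' U := by
    simpa [one_add_one_eq_two] using hbootstrap 1 (by simpa using hv1) (by simpa using hQ')
  exact ⟨v', hae, heq, hv2, fun p hp =>
    hweak'.laplacian_add_mul_eq_zero hU hv2 hQ'.continuousOn hp⟩

end Regularity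

section LaplacianCalculus

variable {E : Type*} [NormedAddCommGroup E] [InnerProductSpace ℝ E] [FiniteDimensional ℝ E]
  {f g : E → ℝ} {p : E}

lemma laplacian_comp_smul (f : E → ℝ) (c : ℝ) (p : E) :
    Δ (fun q => f (c • q)) p = c ^ 2 * Δ f (c • p) := by
  simp only [laplacian_eq_iteratedFDeriv_stdOrthonormalBasis, iteratedFDeriv_two_apply,
    Finset.mul_sum]
  have h : fderiv ℝ (fun q => f (c • q)) = c • fun q => fderiv ℝ f (c • q) :=
    funext fun q => fderiv_comp_smul c
  have h' : fderiv ℝ (c • fun q => fderiv ℝ f (c • q)) p =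
      c • c • fderiv ℝ (fderiv ℝ f) (c • p) := by
    rw [← fderiv_comp_smul (f := fderiv ℝ f)]
    exact congrFun (fderiv_const_smul_field (𝕜 := ℝ) (F := E →L[ℝ] ℝ) c) p
  simp [h, h', pow_two, mul_assoc]

lemma contDiff_laplacian (hf : ContDiff ℝ ∞ f) : ContDiff ℝ ∞ (Δ f) := by
  let b := stdOrthonormalBasis ℝ E
  have h : Δ f = fun q => ∑ i, fderiv ℝ (fun q' => fderiv ℝ f q' (b i)) q (b i) :=
    funext fun q => laplacian_eq_sum_fderiv_fderiv b (contDiff_infty.1 hf 2).contDiffAt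
  rw [h]
  exact ContDiff.sum fun i _ => (((hf.fderiv_right (m := ∞) le_rfl).clm_apply
    contDiff_const).fderiv_right (m := ∞) le_rfl).clm_apply contDiff_const

lemma laplacian_mul (hf : ContDiffAt ℝ 2 f p) (hg : ContDiffAt ℝ 2 g p) :
    Δ (fun q => f q * g q) p = f p * Δ g p + 2 * ⟪∇ f p, ∇ g p⟫ + g p * Δ f p := by
  let b := stdOrthonormalBasis ℝ E
  have hfi (i) : DifferentiableAt ℝ (fun q => fderiv ℝ f q (b i)) p :=
    ((hf.fderiv_right (m := 1) (by norm_num)).clm_apply contDiffAt_const).differentiableAt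
      (by simp)
  have hgi (i) : DifferentiableAt ℝ (fun q => fderiv ℝ g q (b i)) p :=
    ((hg.fderiv_right (m := 1) (by norm_num)).clm_apply contDiffAt_const).differentiableAt
      (by simp)
  have hf' := hf.differentiableAt two_ne_zero
  have hg' := hg.differentiableAt two_ne_zero
  have hprod (i) : (fun q => fderiv ℝ (fun q' => f q' * g q') q (b i)) =ᶠ[𝓝 p]
      fun q => f q * fderiv ℝ g q (b i) + g q * fderiv ℝ f q (b i) := by
    filter_upwards [hf.eventually (by simp), hg.eventually (by simp)] with q hfq hgq
    simp [fderiv_fun_mul (hfq.differentiableAt two_ne_zero) (hgq.differentiableAt two_ne_zero)]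
  have hterm (i) : fderiv ℝ (fun q => fderiv ℝ (fun q' => f q' * g q') q (b i)) p (b i) =
      f p * fderiv ℝ (fun q => fderiv ℝ g q (b i)) p (b i) +
        2 * (⟪∇ f p, b i⟫ * ⟪b i, ∇ g p⟫) +
        g p * fderiv ℝ (fun q => fderiv ℝ f q (b i)) p (b i) := by
    rw [(hprod i).fderiv_eq, fderiv_fun_add (hf'.fun_mul (hgi i)) (hg'.fun_mul (hfi i)),
      fderiv_fun_mul hf' (hgi i), fderiv_fun_mul hg' (hfi i), inner_gradient_left,
      inner_gradient_right]
    simp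
    ring
  rw [laplacian_eq_sum_fderiv_fderiv b (hf.mul hg), laplacian_eq_sum_fderiv_fderiv b hf,
    laplacian_eq_sum_fderiv_fderiv b hg, ← b.sum_inner_mul_inner]
  simp only [hterm, Finset.sum_add_distrib, Finset.mul_sum]

variable [MeasurableSpace E] [BorelSpace E] {P : E → ℝ}

lemma laplacian_convolution (hP : LocallyIntegrable P) (hg : ContDiff ℝ 2 g)
    (hg' : HasCompactSupport g) (x : E) :
    Δ (P ⋆[mul ℝ ℝ] g) x = (P ⋆[mul ℝ ℝ] Δ g) x := by
  let b := stdOrthonormalBasis ℝ E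
  have hgi (i) : ContDiff ℝ 1 fun q => fderiv ℝ g q (b i) :=
    (hg.fderiv_right (m := 1) (by norm_num)).clm_apply contDiff_const
  have hgi' (i) : HasCompactSupport fun q => fderiv ℝ g q (b i) := hg'.fderiv_apply (𝕜 := ℝ) (b i)
  have hexists (i) : Integrable fun t =>
      P t * fderiv ℝ (fun q => fderiv ℝ g q (b i)) (x - t) (b i) :=
    ((hgi' i).fderiv_apply (𝕜 := ℝ) (b i)).convolutionExists_right (mul ℝ ℝ) hP
      (((hgi i).continuous_fderiv one_ne_zero).clm_apply continuous_const) x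
  have hfderiv (i) : (fun q => fderiv ℝ (P ⋆[mul ℝ ℝ] g) q (b i)) =
      P ⋆[mul ℝ ℝ] fun q => fderiv ℝ g q (b i) :=
    funext fun q => fderiv_convolution_apply hP (hg.of_le one_le_two) hg' q (b i)
  simp only [laplacian_eq_sum_fderiv_fderiv b
    (hg'.contDiff_convolution_right (mul ℝ ℝ) hP hg).contDiffAt, hfderiv,
    fderiv_convolution_apply hP (hgi _) (hgi' _), convolution_mul]
  rw [← integral_finsetSum _ fun i _ => hexists i]
  simp only [laplacian_eq_sum_fderiv_fderiv b hg.contDiffAt, Finset.mul_sum]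

lemma convolution_laplacian_comm (hf : ContDiff ℝ 2 f) (hf' : HasCompactSupport f)
    (hg : ContDiff ℝ 2 g) (hg' : HasCompactSupport g) :
    f ⋆[mul ℝ ℝ] Δ g = Δ f ⋆[mul ℝ ℝ] g := by
  have hflip (u v : E → ℝ) : u ⋆[mul ℝ ℝ] v = v ⋆[mul ℝ ℝ] u := by
    rw [← convolution_flip, ContinuousLinearMap.flip_mul]
  ext x
  rw [← laplacian_convolution hf.continuous.locallyIntegrable hg hg', hflip f g,
    laplacian_convolution hg.continuous.locallyIntegrable hf hf', hflip]

end LaplacianCalculus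

section LogKernel

lemma tendsto_integral_norm_sub_of_dominated {X F : Type*} [MeasurableSpace X] {μ : Measure X}
    [NormedAddCommGroup F] {f : ℕ → X → F} {g : X → F} {bound : X → ℝ}
    (hf : ∀ n, AEStronglyMeasurable (f n) μ) (hbound : Integrable bound μ)
    (hf' : ∀ n, ∀ᵐ x ∂μ, ‖f n x‖ ≤ bound x)
    (hfg : ∀ᵐ x ∂μ, Tendsto (fun n => f n x) atTop (𝓝 (g x))) :
    Tendsto (fun n => ∫ x, ‖f n x - g x‖ ∂μ) atTop (𝓝 0) := by
  have hg : AEStronglyMeasurable g μ := aestronglyMeasurable_of_tendsto_ae atTop hf hfg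
  have hg' : ∀ᵐ x ∂μ, ‖g x‖ ≤ bound x := by
    filter_upwards [hfg, ae_all_iff.2 hf'] with x hx hx'
    exact le_of_tendsto hx.norm (.of_forall hx')
  rw [← integral_zero X ℝ (μ := μ)]
  refine tendsto_integral_of_dominated_convergence (fun x => bound x + bound x)
    (fun n => ((hf n).sub hg).norm) (hbound.add hbound) (fun n => ?_) ?_
  · filter_upwards [hf' n, hg'] with x hx hx'
    rw [norm_norm]
    exact (norm_sub_le _ _).trans (add_le_add hx hx')
  · filter_upwards [hfg] with x hx
    simpa using (hx.sub_const (g x)).norm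

lemma abs_log_le_four_div {s t : ℝ} (ht : 0 < t) (ht' : t ≤ 1) (hts : t ^ 4 ≤ s) (hs : s ≤ 2) :
    |Real.log s| ≤ 4 / t := by
  have hs0 : 0 < s := (pow_pos ht 4).trans_le hts
  have hupper := Real.log_le_sub_one_of_pos hs0
  have hlower := Real.one_sub_inv_le_log_of_pos ht
  have hmono := Real.log_le_log (pow_pos ht 4) hts
  rw [Real.log_pow] at hmono
  push_cast at hmono
  have hinv : 1 ≤ 1 / t := (one_le_div ht).2 ht'
  rw [abs_le, div_eq_mul_one_div]
  rw [← one_div] at hlower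
  constructor <;> linarith

variable {E : Type*} [NormedAddCommGroup E] {e : ℝ} {z : E}

lemma sq_log_norm_sq_add_le (he : 0 ≤ e) (he' : e ≤ 1) (hz : z ≠ 0) (hz' : ‖z‖ ≤ 1) :
    Real.log (‖z‖ ^ 2 + e) ^ 2 ≤ 16 * ‖z‖⁻¹ := by
  have hpos : 0 < ‖z‖ := norm_pos_iff.2 hz
  have hsqrt : √‖z‖ ^ 2 = ‖z‖ := Real.sq_sqrt hpos.le
  have h := abs_log_le_four_div (s := ‖z‖ ^ 2 + e) (Real.sqrt_pos.2 hpos)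
    (Real.sqrt_le_one.2 hz') (by nlinarith) (by nlinarith)
  calc Real.log (‖z‖ ^ 2 + e) ^ 2 = |Real.log (‖z‖ ^ 2 + e)| ^ 2 := (sq_abs _).symm
    _ ≤ (4 / √‖z‖) ^ 2 := by gcongr
    _ = 16 * ‖z‖⁻¹ := by rw [div_pow, hsqrt]; ring

lemma abs_log_norm_sq_add_le (he : 0 ≤ e) (he' : e ≤ 1) (hz : z ≠ 0) (hz' : ‖z‖ ≤ 1) :
    |Real.log (‖z‖ ^ 2 + e)| ≤ 4 * ‖z‖⁻¹ := by
  have hinv : 1 ≤ ‖z‖⁻¹ := (one_le_inv₀ (norm_pos_iff.2 hz)).2 hz'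
  refine abs_le_of_sq_le_sq ((sq_log_norm_sq_add_le he he' hz hz').trans ?_) (by positivity)
  nlinarith

variable [InnerProductSpace ℝ E]

lemma hasGradientAt_log_norm_sq_add [CompleteSpace E] (h : ‖z‖ ^ 2 + e ≠ 0) :
    HasGradientAt (fun w : E => Real.log (‖w‖ ^ 2 + e)) ((2 / (‖z‖ ^ 2 + e)) • z) z := by
  have h' := ((hasStrictFDerivAt_norm_sq z).hasFDerivAt.add_const e).log h
  refine hasGradientAt_iff_hasFDerivAt.2 (h'.congr_fderiv ?_)
  ext w
  simp
  ring

lemma contDiffAt_log_norm_sq_add {n : WithTop ℕ∞} (h : ‖z‖ ^ 2 + e ≠ 0) :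
    ContDiffAt ℝ n (fun w : E => Real.log (‖w‖ ^ 2 + e)) z :=
  ((contDiff_norm_sq ℝ).contDiffAt.add contDiffAt_const).log h

variable [FiniteDimensional ℝ E]

lemma laplacian_log_norm_sq_add (hE : Module.finrank ℝ E = 2) (he : 0 < e) (z : E) :
    Δ (fun w : E => Real.log (‖w‖ ^ 2 + e)) z = 4 * e / (‖z‖ ^ 2 + e) ^ 2 := by
  let b := stdOrthonormalBasis ℝ E
  have hne (w : E) : ‖w‖ ^ 2 + e ≠ 0 := by positivity
  have hfderiv (y : E) : (fun w => fderiv ℝ (fun w : E => Real.log (‖w‖ ^ 2 + e)) w y) =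
      fun w => 2 * ⟪w, y⟫ / (‖w‖ ^ 2 + e) := by
    ext w
    rw [(hasGradientAt_log_norm_sq_add (hne w)).hasFDerivAt.fderiv]
    simp
    ring
  have hfderiv' (y : E) : fderiv ℝ (fun w : E => 2 * ⟪w, y⟫ / (‖w‖ ^ 2 + e)) z y =
      2 * ‖y‖ ^ 2 / (‖z‖ ^ 2 + e) - 4 * (⟪z, y⟫ * ⟪y, z⟫) / (‖z‖ ^ 2 + e) ^ 2 := by
    have hnum : HasFDerivAt (fun w : E => 2 * ⟪w, y⟫) ((2 : ℝ) • innerSL ℝ y) z := by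
      simpa [real_inner_comm] using ((innerSL ℝ y).hasFDerivAt (x := z)).const_mul 2
    have hden : HasFDerivAt (fun w : E => (‖w‖ ^ 2 + e)⁻¹) _ z :=
      (hasDerivAt_inv (hne z)).comp_hasFDerivAt z
        ((hasStrictFDerivAt_norm_sq z).hasFDerivAt.add_const e)
    simp only [div_eq_mul_inv, (hnum.fun_mul hden).fderiv]
    simp [real_inner_comm y z]
    ring
  rw [laplacian_eq_sum_fderiv_fderiv b (contDiffAt_log_norm_sq_add (hne z))]
  simp only [hfderiv, hfderiv', Finset.sum_sub_distrib, ← Finset.sum_div, ← Finset.mul_sum,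
    b.sum_inner_mul_inner, real_inner_self_eq_norm_sq]
  simp [hE]
  field_simp [hne z]
  ring

variable [MeasurableSpace E] [BorelSpace E]

lemma integrable_indicator_inv_norm (hE : 2 ≤ Module.finrank ℝ E) :
    Integrable ((Metric.closedBall (0 : E) 1).indicator fun z => ‖z‖⁻¹) := by
  have : Nontrivial E := Module.nontrivial_of_finrank_pos (R := ℝ) (by omega)
  have h : (Metric.closedBall (0 : E) 1).indicator (fun z => ‖z‖⁻¹) =
      fun z => (Iic (1 : ℝ)).indicator (fun t => t⁻¹) ‖z‖ := by
    ext z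
    by_cases hz : ‖z‖ ≤ 1 <;> simp [hz]
  rw [h, integrable_fun_norm_addHaar]
  refine Integrable.mono' (g := (Iic (1 : ℝ)).indicator 1) ?_ (Measurable.aestronglyMeasurable
    ((measurable_id.pow_const _).smul (measurable_inv.indicator measurableSet_Iic))) ?_
  · rw [integrable_indicator_iff measurableSet_Iic, IntegrableOn,
      Measure.restrict_restrict measurableSet_Iic, Iic_inter_Ioi]
    exact integrableOn_const (by simp)
  · filter_upwards [ae_restrict_mem measurableSet_Ioi] with t ht
    rw [mem_Ioi] at ht
    rcases le_or_gt t 1 with ht' | ht'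
    · have hpow : t ^ (Module.finrank ℝ E - 1) * t⁻¹ = t ^ (Module.finrank ℝ E - 2) := by
        rw [show Module.finrank ℝ E - 1 = Module.finrank ℝ E - 2 + 1 by omega, pow_succ,
          mul_inv_cancel_right₀ ht.ne']
      simp only [mem_Iic, ht', indicator_of_mem, smul_eq_mul, hpow, Pi.one_apply]
      rw [Real.norm_of_nonneg (by positivity)]
      exact pow_le_one₀ ht.le ht'
    · simp [ht'.not_ge]

lemma integrable_four_div_norm_sq_add_one_sq (hE : Module.finrank ℝ E < 4) :
    Integrable fun z : E => 4 / (‖z‖ ^ 2 + 1) ^ 2 := by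
  have h := (integrable_rpow_neg_one_add_norm_sq (E := E) (μ := volume) (r := 4)
    (by exact_mod_cast hE)).const_mul 4
  refine h.congr (ae_of_all _ fun z => ?_)
  have hpos : (0 : ℝ) ≤ 1 + ‖z‖ ^ 2 := by positivity
  beta_reduce
  rw [show (-4 / 2 : ℝ) = -(2 : ℕ) by norm_num, Real.rpow_neg hpos, Real.rpow_natCast,
    div_eq_mul_inv, add_comm (1 : ℝ)]

lemma integral_four_div_norm_sq_add_one_sq_pos (hE : Module.finrank ℝ E < 4) :
    0 < ∫ z : E, 4 / (‖z‖ ^ 2 + 1) ^ 2 := by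
  rw [integral_pos_iff_support_of_nonneg (fun z => by positivity)
    (integrable_four_div_norm_sq_add_one_sq hE)]
  have hsupp : Function.support (fun z : E => 4 / (‖z‖ ^ 2 + 1) ^ 2) = univ :=
    eq_univ_of_forall fun z => (show (0 : ℝ) < 4 / (‖z‖ ^ 2 + 1) ^ 2 by positivity).ne'
  rw [hsupp]
  exact isOpen_univ.measure_pos _ univ_nonempty

lemma tendsto_integral_peak (hE : Module.finrank ℝ E = 2) {g : E → ℝ} (hg : Integrable g)
    (hg' : ContinuousAt g 0) :
    Tendsto (fun c : ℝ => ∫ z, 4 * (c ^ 2)⁻¹ / (‖z‖ ^ 2 + (c ^ 2)⁻¹) ^ 2 * g z)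
      atTop (𝓝 ((∫ z : E, 4 / (‖z‖ ^ 2 + 1) ^ 2) * g 0)) := by
  set A : ℝ := ∫ z : E, 4 / (‖z‖ ^ 2 + 1) ^ 2
  have hApos : 0 < A := integral_four_div_norm_sq_add_one_sq_pos (by omega)
  have hdecay : Tendsto (fun t : ℝ => t ^ 2 * (A⁻¹ * (4 / (t ^ 2 + 1) ^ 2))) atTop (𝓝 0) := by
    have hinv : Tendsto (fun t : ℝ => 4 * A⁻¹ * (t ^ 2)⁻¹) atTop (𝓝 0) := by
      simpa using (tendsto_inv_atTop_zero.comp (tendsto_pow_atTop two_ne_zero)).const_mul (4 * A⁻¹)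
    refine squeeze_zero' (.of_forall fun t => by positivity) ?_ hinv
    filter_upwards [eventually_gt_atTop 0] with t ht
    rw [show t ^ 2 * (A⁻¹ * (4 / (t ^ 2 + 1) ^ 2)) = 4 * A⁻¹ * (t ^ 2 / (t ^ 2 + 1) ^ 2) by ring]
    gcongr
    rw [div_le_iff₀ (by positivity), inv_mul_eq_div, le_div_iff₀ (by positivity)]
    nlinarith [sq_nonneg t]
  have h := (tendsto_integral_comp_smul_smul_of_integrable' (μ := volume)
    (φ := fun z : E => A⁻¹ * (4 / (‖z‖ ^ 2 + 1) ^ 2)) (fun z => by positivity)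
    (by rw [integral_const_mul, inv_mul_cancel₀ hApos.ne'])
    (by rw [hE]; exact hdecay.comp tendsto_norm_cobounded_atTop) hg hg').const_mul A
  refine h.congr' ?_
  filter_upwards [eventually_gt_atTop 0] with c hc
  rw [← integral_const_mul]
  refine integral_congr_ae (ae_of_all _ fun z => ?_)
  simp only [hE, zero_sub, norm_smul, norm_neg, Real.norm_of_nonneg hc.le, smul_eq_mul]
  field_simp

end LogKernel

section Parametrix

variable {E : Type*} [NormedAddCommGroup E] {χ : E → ℝ} {e : ℝ} {z : E}

/-- The logarithmic potential, regularised by `e` and localised by a cutoff `χ`. At `e = 0` it is a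
multiple of the localised fundamental solution of the planar Laplacian. -/
noncomputable def logKernel (χ : E → ℝ) (e : ℝ) (z : E) : ℝ := χ z * Real.log (‖z‖ ^ 2 + e)

lemma tsupport_logKernel_subset : tsupport (logKernel χ e) ⊆ tsupport χ :=
  tsupport_mul_subset_left

lemma hasCompactSupport_logKernel (hχ : HasCompactSupport χ) (e : ℝ) :
    HasCompactSupport (logKernel χ e) :=
  hχ.mono' ((subset_tsupport _).trans tsupport_logKernel_subset)

lemma tendsto_norm_sq_add (z : E) {u : ℕ → ℝ} (hu : Tendsto u atTop (𝓝 0)) :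
    Tendsto (fun n => ‖z‖ ^ 2 + u n) atTop (𝓝 (‖z‖ ^ 2 + 0)) :=
  tendsto_const_nhds.add hu

lemma tendsto_logKernel (χ : E → ℝ) (hz : z ≠ 0) {u : ℕ → ℝ} (hu : Tendsto u atTop (𝓝 0)) :
    Tendsto (fun n => logKernel χ (u n) z) atTop (𝓝 (logKernel χ 0 z)) :=
  ((tendsto_norm_sq_add z hu).log (by positivity)).const_mul _

/-- `1 / ‖z‖` on the unit ball: the common integrable majorant of the regularised logarithmic
kernels, of their gradients and of their remainders. -/
noncomputable def invNorm (z : E) : ℝ := (Metric.closedBall (0 : E) 1).indicator (fun z => ‖z‖⁻¹) z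

lemma norm_le_mul_invNorm {F : Type*} [NormedAddCommGroup F] {f : E → F} {C : ℝ}
    (hf : tsupport f ⊆ Metric.closedBall 0 1) (hf' : ‖z‖ ≤ 1 → ‖f z‖ ≤ C * ‖z‖⁻¹) :
    ‖f z‖ ≤ C * invNorm z := by
  by_cases hz : ‖z‖ ≤ 1
  · simpa [invNorm, hz] using hf' hz
  · have hfz : f z = 0 := image_eq_zero_of_notMem_tsupport fun h => hz (by simpa using hf h)
    simp [invNorm, hz, hfz]

lemma abs_logKernel_le (hχ : tsupport χ ⊆ Metric.closedBall 0 1) {M : ℝ} (hM : ∀ z, ‖χ z‖ ≤ M)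
    (he : 0 ≤ e) (he' : e ≤ 1) (hz : z ≠ 0) : ‖logKernel χ e z‖ ≤ 4 * M * invNorm z := by
  refine norm_le_mul_invNorm (tsupport_logKernel_subset.trans hχ) fun hz' => ?_
  have hM0 : 0 ≤ M := (norm_nonneg _).trans (hM 0)
  calc ‖logKernel χ e z‖ = ‖χ z‖ * |Real.log (‖z‖ ^ 2 + e)| := norm_mul _ _
    _ ≤ M * (4 * ‖z‖⁻¹) := by gcongr; exacts [hM z, abs_log_norm_sq_add_le he he' hz hz']
    _ = 4 * M * ‖z‖⁻¹ := by ring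

lemma norm_div_norm_sq_add_le (he : 0 ≤ e) (hz : z ≠ 0) {a : ℝ} (ha : 0 ≤ a) :
    a / (‖z‖ ^ 2 + e) * ‖z‖ ≤ a * ‖z‖⁻¹ := by
  have : 0 < ‖z‖ := norm_pos_iff.2 hz
  rw [div_mul_eq_mul_div, div_le_iff₀ (by positivity)]
  calc a * ‖z‖ = a * ‖z‖⁻¹ * ‖z‖ ^ 2 := by field_simp
    _ ≤ a * ‖z‖⁻¹ * (‖z‖ ^ 2 + e) := by gcongr; linarith

variable [InnerProductSpace ℝ E]

lemma contDiff_logKernel (hχ : ContDiff ℝ ∞ χ) (he : 0 < e) : ContDiff ℝ ∞ (logKernel χ e) :=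
  hχ.mul (contDiff_iff_contDiffAt.2 fun _ => contDiffAt_log_norm_sq_add (by positivity))

lemma fderiv_logKernel [CompleteSpace E] (hχ : DifferentiableAt ℝ χ z) (h : ‖z‖ ^ 2 + e ≠ 0) :
    fderiv ℝ (logKernel χ e) z =
      χ z • (2 / (‖z‖ ^ 2 + e)) • innerSL ℝ z + Real.log (‖z‖ ^ 2 + e) • fderiv ℝ χ z := by
  unfold logKernel
  rw [(hχ.hasFDerivAt.fun_mul (hasGradientAt_log_norm_sq_add h).hasFDerivAt).fderiv]
  congr 2
  ext w
  simp

lemma tendsto_fderiv_logKernel [CompleteSpace E] (hχ : DifferentiableAt ℝ χ z) (hz : z ≠ 0)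
    {u : ℕ → ℝ} (hu : Tendsto u atTop (𝓝 0)) (hu' : ∀ n, 0 ≤ u n) :
    Tendsto (fun n => fderiv ℝ (logKernel χ (u n)) z) atTop (𝓝 (fderiv ℝ (logKernel χ 0) z)) := by
  have hsum := tendsto_norm_sq_add z hu
  have hne : ‖z‖ ^ 2 + 0 ≠ 0 := by positivity
  rw [fderiv_logKernel hχ hne]
  refine Tendsto.congr (fun n => (fderiv_logKernel hχ (?_ : ‖z‖ ^ 2 + u n ≠ 0)).symm) <|
    (((tendsto_const_nhds.div hsum hne).smul_const _).const_smul _).add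
      ((hsum.log hne).smul_const _)
  have := hu' n
  positivity

lemma norm_fderiv_logKernel_le [CompleteSpace E] (hχ : Differentiable ℝ χ)
    (hχ' : tsupport χ ⊆ Metric.closedBall 0 1)
    {M : ℝ} (hM : ∀ z, ‖χ z‖ ≤ M) {M' : ℝ} (hM' : ∀ z, ‖fderiv ℝ χ z‖ ≤ M') (he : 0 ≤ e)
    (he' : e ≤ 1) (hz : z ≠ 0) :
    ‖fderiv ℝ (logKernel χ e) z‖ ≤ (2 * M + 4 * M') * invNorm z := by
  refine norm_le_mul_invNorm
    ((tsupport_fderiv_subset ℝ).trans (tsupport_logKernel_subset.trans hχ')) fun hz' => ?_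
  have hM0 : 0 ≤ M := (norm_nonneg _).trans (hM 0)
  rw [fderiv_logKernel (hχ z) (by positivity)]
  calc _ ≤ ‖χ z‖ * (2 / (‖z‖ ^ 2 + e) * ‖z‖) + |Real.log (‖z‖ ^ 2 + e)| * ‖fderiv ℝ χ z‖ := by
        refine (norm_add_le _ _).trans_eq ?_
        rw [norm_smul, norm_smul, norm_smul, innerSL_apply_norm, Real.norm_eq_abs (Real.log _),
          Real.norm_of_nonneg (show 0 ≤ 2 / (‖z‖ ^ 2 + e) by positivity)]
    _ ≤ M * (2 * ‖z‖⁻¹) + 4 * ‖z‖⁻¹ * M' :=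
        add_le_add
          (mul_le_mul (hM z) (norm_div_norm_sq_add_le he hz two_pos.le) (by positivity) hM0)
          (mul_le_mul (abs_log_norm_sq_add_le he he' hz hz') (hM' z) (norm_nonneg _)
            (by positivity))
    _ = (2 * M + 4 * M') * ‖z‖⁻¹ := by ring

variable [FiniteDimensional ℝ E]

/-- The error `[Δ, χ] log (‖z‖² + e)` made by the cutoff in `Δ (logKernel χ e)`. -/
noncomputable def logRemainder (χ : E → ℝ) (e : ℝ) (z : E) : ℝ :=
  Real.log (‖z‖ ^ 2 + e) * Δ χ z + 4 / (‖z‖ ^ 2 + e) * fderiv ℝ χ z z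

lemma laplacian_logKernel (hE : Module.finrank ℝ E = 2) (hχ : ContDiff ℝ 2 χ) (he : 0 < e)
    (z : E) :
    Δ (logKernel χ e) z = 4 * e / (‖z‖ ^ 2 + e) ^ 2 * χ z + logRemainder χ e z := by
  have hne : ‖z‖ ^ 2 + e ≠ 0 := by positivity
  have hinner : ⟪∇ χ z, z⟫ = fderiv ℝ χ z z := inner_gradient_left ..
  unfold logKernel
  rw [laplacian_mul hχ.contDiffAt (contDiffAt_log_norm_sq_add hne),
    laplacian_log_norm_sq_add hE he, (hasGradientAt_log_norm_sq_add hne).gradient,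
    real_inner_smul_right, hinner, logRemainder]
  ring

lemma logRemainder_neg (hχ : ∀ z, χ (-z) = χ z) (e : ℝ) (z : E) :
    logRemainder χ e (-z) = logRemainder χ e z := by
  have hχ' : (fun z => χ (-z)) = χ := funext hχ
  have hΔ : Δ χ z = Δ χ (-z) := by simpa [hχ'] using laplacian_comp_smul χ (-1) z
  have hD : fderiv ℝ χ z = -fderiv ℝ χ (-z) := by
    simpa [hχ'] using fderiv_comp_smul (𝕜 := ℝ) (f := χ) (x := z) (-1)
  simp [logRemainder, hΔ, hD]

lemma tsupport_logRemainder_subset : tsupport (logRemainder χ e) ⊆ tsupport χ := by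
  refine closure_minimal (fun z hz => by_contra fun h => hz ?_) (isClosed_tsupport _)
  have hD : fderiv ℝ χ z = 0 := image_eq_zero_of_notMem_tsupport fun h' =>
    h (tsupport_fderiv_subset ℝ h')
  simp [logRemainder, laplacian_eq_zero_of_notMem_tsupport h, hD]

lemma hasCompactSupport_logRemainder (hχ : HasCompactSupport χ) (e : ℝ) :
    HasCompactSupport (logRemainder χ e) :=
  hχ.mono' ((subset_tsupport _).trans tsupport_logRemainder_subset)

lemma contDiff_logRemainder (hχ : ContDiff ℝ ∞ χ) (hχ' : χ =ᶠ[𝓝 0] fun _ => 1) :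
    ContDiff ℝ ∞ (logRemainder χ 0) := by
  refine contDiff_iff_contDiffAt.2 fun z => ?_
  rcases eq_or_ne z 0 with rfl | hz
  · refine (contDiffAt_const (c := (0 : ℝ))).congr_of_eventuallyEq ?_
    filter_upwards [laplacian_congr_nhds hχ', hχ'.fderiv (𝕜 := ℝ)] with w hΔ hD
    simp [logRemainder, hΔ, hD]
  · have hne : ‖z‖ ^ 2 + 0 ≠ 0 := by positivity
    exact ((contDiffAt_log_norm_sq_add hne).mul (contDiff_laplacian hχ).contDiffAt).add
      ((contDiffAt_const.div ((contDiff_norm_sq ℝ).contDiffAt.add contDiffAt_const) hne).mul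
        ((hχ.fderiv_right (m := ∞) le_rfl).contDiffAt.clm_apply contDiffAt_id))

lemma continuous_logRemainder (hχ : ContDiff ℝ ∞ χ) (he : 0 < e) :
    Continuous (logRemainder χ e) := by
  have hcont : Continuous fun z : E => ‖z‖ ^ 2 + e := (continuous_norm.pow 2).add continuous_const
  have hne : ∀ z : E, ‖z‖ ^ 2 + e ≠ 0 := fun z => by positivity
  exact ((hcont.log hne).mul (contDiff_laplacian hχ).continuous).add <|
    (continuous_const.div hcont hne).mul
      ((hχ.continuous_fderiv (by simp)).clm_apply continuous_id)

lemma tendsto_logRemainder (χ : E → ℝ) (hz : z ≠ 0) {u : ℕ → ℝ} (hu : Tendsto u atTop (𝓝 0)) :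
    Tendsto (fun n => logRemainder χ (u n) z) atTop (𝓝 (logRemainder χ 0 z)) := by
  have hsum := tendsto_norm_sq_add z hu
  have hne : ‖z‖ ^ 2 + 0 ≠ 0 := by positivity
  exact ((hsum.log hne).mul_const _).add ((tendsto_const_nhds.div hsum hne).mul_const _)

lemma abs_logRemainder_le (hχ : tsupport χ ⊆ Metric.closedBall 0 1) {M : ℝ}
    (hM : ∀ z, ‖Δ χ z‖ ≤ M) {M' : ℝ} (hM' : ∀ z, ‖fderiv ℝ χ z‖ ≤ M') (he : 0 ≤ e) (he' : e ≤ 1)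
    (hz : z ≠ 0) : ‖logRemainder χ e z‖ ≤ (4 * M + 4 * M') * invNorm z := by
  refine norm_le_mul_invNorm (tsupport_logRemainder_subset.trans hχ) fun hz' => ?_
  have hM0 : 0 ≤ M' := (norm_nonneg _).trans (hM' 0)
  calc ‖logRemainder χ e z‖
      ≤ |Real.log (‖z‖ ^ 2 + e)| * ‖Δ χ z‖ + 4 / (‖z‖ ^ 2 + e) * ‖fderiv ℝ χ z z‖ := by
        refine (norm_add_le _ _).trans_eq ?_
        rw [norm_mul, norm_mul, Real.norm_eq_abs (Real.log _),
          Real.norm_of_nonneg (show 0 ≤ 4 / (‖z‖ ^ 2 + e) by positivity)]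
    _ ≤ 4 * ‖z‖⁻¹ * M + 4 / (‖z‖ ^ 2 + e) * (M' * ‖z‖) := by
        gcongr
        exacts [abs_log_norm_sq_add_le he he' hz hz', hM z,
          (fderiv ℝ χ z).le_of_opNorm_le (hM' z) z]
    _ = 4 * ‖z‖⁻¹ * M + M' * (4 / (‖z‖ ^ 2 + e) * ‖z‖) := by ring
    _ ≤ 4 * ‖z‖⁻¹ * M + M' * (4 * ‖z‖⁻¹) :=
        add_le_add_right (mul_le_mul_of_nonneg_left
          (norm_div_norm_sq_add_le he hz four_pos.le) hM0) _
    _ = (4 * M + 4 * M') * ‖z‖⁻¹ := by ring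

end Parametrix

section PlanarParametrix

variable {E : Type*} [NormedAddCommGroup E] [InnerProductSpace ℝ E] [FiniteDimensional ℝ E]
  [MeasurableSpace E] [BorelSpace E] {χ : E → ℝ}

lemma tendsto_integral_norm_sub_of_le_invNorm {F : Type*} [NormedAddCommGroup F]
    (hE : Module.finrank ℝ E = 2) {f : ℕ → E → F} {g : E → F} {C : ℝ}
    (hf : ∀ n, Continuous (f n)) (hf' : ∀ n, ∀ z, z ≠ 0 → ‖f n z‖ ≤ C * invNorm z)
    (hfg : ∀ z, z ≠ 0 → Tendsto (fun n => f n z) atTop (𝓝 (g z))) :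
    Integrable g ∧ Tendsto (fun n => ∫ z, ‖f n z - g z‖) atTop (𝓝 0) := by
  have : Nontrivial E := Module.nontrivial_of_finrank_pos (R := ℝ) (by omega)
  have hne : ∀ᵐ z : E, z ≠ 0 := Measure.ae_ne volume 0
  have hbound : Integrable fun z : E => C * invNorm z :=
    (integrable_indicator_inv_norm hE.ge).const_mul C
  have hfm (n) : AEStronglyMeasurable (f n) := (hf n).aestronglyMeasurable
  have hfg' : ∀ᵐ z, Tendsto (fun n => f n z) atTop (𝓝 (g z)) := hne.mono hfg
  refine ⟨hbound.mono' (aestronglyMeasurable_of_tendsto_ae atTop hfm hfg') ?_,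
    tendsto_integral_norm_sub_of_dominated hfm hbound (fun n => hne.mono (hf' n)) hfg'⟩
  filter_upwards [hne] with z hz
  exact le_of_tendsto (hfg z hz).norm (.of_forall fun n => hf' n z hz)

/-- A positive null sequence of regularisation parameters bounded by `1`. -/
noncomputable def regParam (n : ℕ) : ℝ := (((n : ℝ) + 1) ^ 2)⁻¹

lemma regParam_pos (n : ℕ) : 0 < regParam n := by unfold regParam; positivity

lemma regParam_le_one (n : ℕ) : regParam n ≤ 1 :=
  inv_le_one_of_one_le₀ (one_le_pow₀ (by simp))

lemma tendsto_natCast_add_one_atTop : Tendsto (fun n : ℕ => (n : ℝ) + 1) atTop atTop :=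
  tendsto_atTop_add_const_right _ _ tendsto_natCast_atTop_atTop

lemma tendsto_regParam : Tendsto regParam atTop (𝓝 0) :=
  tendsto_inv_atTop_zero.comp
    ((tendsto_pow_atTop two_ne_zero).comp tendsto_natCast_add_one_atTop)

lemma integrable_tendsto_logKernel (hE : Module.finrank ℝ E = 2)
    (hχ : IsTestFunction (Metric.closedBall 0 1) χ) :
    Integrable (logKernel χ 0) ∧
      Tendsto (fun n => ∫ z, ‖logKernel χ (regParam n) z - logKernel χ 0 z‖) atTop (𝓝 0) := by
  obtain ⟨M, hM⟩ := hχ.continuous.bounded_above_of_compact_support hχ.hasCompactSupport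
  exact tendsto_integral_norm_sub_of_le_invNorm hE
    (fun n => (contDiff_logKernel hχ.contDiff (regParam_pos n)).continuous)
    (fun n _ => abs_logKernel_le hχ.tsupport_subset hM (regParam_pos n).le (regParam_le_one n))
    fun _ hz => tendsto_logKernel χ hz tendsto_regParam

lemma integrable_tendsto_fderiv_logKernel (hE : Module.finrank ℝ E = 2)
    (hχ : IsTestFunction (Metric.closedBall 0 1) χ) :
    Integrable (fderiv ℝ (logKernel χ 0)) ∧
      Tendsto (fun n => ∫ z, ‖fderiv ℝ (logKernel χ (regParam n)) z - fderiv ℝ (logKernel χ 0) z‖)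
        atTop (𝓝 0) := by
  obtain ⟨M, hM⟩ := hχ.continuous.bounded_above_of_compact_support hχ.hasCompactSupport
  obtain ⟨M', hM'⟩ := (hχ.contDiff.continuous_fderiv (by simp)).bounded_above_of_compact_support
    (hχ.hasCompactSupport.fderiv ℝ)
  exact tendsto_integral_norm_sub_of_le_invNorm hE
    (fun n => (contDiff_logKernel hχ.contDiff (regParam_pos n)).continuous_fderiv (by simp))
    (fun n _ => norm_fderiv_logKernel_le hχ.differentiable hχ.tsupport_subset hM hM'
      (regParam_pos n).le (regParam_le_one n))
    fun z hz => tendsto_fderiv_logKernel (hχ.differentiable z) hz tendsto_regParam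
      fun n => (regParam_pos n).le

lemma integrable_tendsto_logRemainder (hE : Module.finrank ℝ E = 2)
    (hχ : IsTestFunction (Metric.closedBall 0 1) χ) :
    Integrable (logRemainder χ 0) ∧
      Tendsto (fun n => ∫ z, ‖logRemainder χ (regParam n) z - logRemainder χ 0 z‖) atTop (𝓝 0) := by
  obtain ⟨M, hM⟩ := (contDiff_laplacian hχ.contDiff).continuous.bounded_above_of_compact_support
    (hasCompactSupport_laplacian hχ.hasCompactSupport)
  obtain ⟨M', hM'⟩ := (hχ.contDiff.continuous_fderiv (by simp)).bounded_above_of_compact_support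
    (hχ.hasCompactSupport.fderiv ℝ)
  exact tendsto_integral_norm_sub_of_le_invNorm hE
    (fun n => continuous_logRemainder hχ.contDiff (regParam_pos n))
    (fun n _ => abs_logRemainder_le hχ.tsupport_subset hM hM'
      (regParam_pos n).le (regParam_le_one n))
    fun _ hz => tendsto_logRemainder χ hz tendsto_regParam

lemma memLp_logKernel (hE : Module.finrank ℝ E = 2)
    (hχ : IsTestFunction (Metric.closedBall 0 1) χ) :
    MemLp (logKernel χ 0) 2 := by
  have : Nontrivial E := Module.nontrivial_of_finrank_pos (R := ℝ) (by omega)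
  obtain ⟨M, hM⟩ := hχ.continuous.bounded_above_of_compact_support hχ.hasCompactSupport
  have hmeas : Measurable (logKernel χ 0) :=
    hχ.continuous.measurable.mul (Real.measurable_log.comp
      ((measurable_norm.pow_const 2).add_const 0))
  refine (memLp_two_iff_integrable_sq hmeas.aestronglyMeasurable).2 ?_
  refine ((integrable_indicator_inv_norm hE.ge).const_mul (16 * M ^ 2)).mono'
    (hmeas.pow_const 2).aestronglyMeasurable ?_
  filter_upwards [Measure.ae_ne volume (0 : E)] with z hz
  refine norm_le_mul_invNorm (f := fun z => logKernel χ 0 z ^ 2) ?_ fun hz' => ?_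
  · refine (closure_mono fun z hz => ?_).trans
      ((tsupport_logKernel_subset (e := 0)).trans hχ.tsupport_subset)
    exact (pow_ne_zero_iff two_ne_zero).1 hz
  · have hsq : χ z ^ 2 ≤ M ^ 2 := sq_le_sq' (neg_le_of_abs_le (hM z)) (le_of_abs_le (hM z))
    rw [Real.norm_of_nonneg (sq_nonneg _), logKernel, mul_pow]
    calc _ ≤ M ^ 2 * (16 * ‖z‖⁻¹) := mul_le_mul hsq
          (sq_log_norm_sq_add_le le_rfl zero_le_one hz hz') (sq_nonneg _) (sq_nonneg M)
      _ = 16 * M ^ 2 * ‖z‖⁻¹ := by ring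

lemma convolution_logKernel_laplacian (hE : Module.finrank ℝ E = 2)
    (hχ : IsTestFunction univ χ) {η : E → ℝ} (hη : IsTestFunction univ η) {e : ℝ} (he : 0 < e)
    (x : E) :
    (logKernel χ e ⋆[mul ℝ ℝ] Δ η) x =
      (∫ z, 4 * e / (‖z‖ ^ 2 + e) ^ 2 * (χ z * η (x - z))) +
        (logRemainder χ e ⋆[mul ℝ ℝ] η) x := by
  have hpeak : Continuous fun z : E => 4 * e / (‖z‖ ^ 2 + e) ^ 2 :=
    continuous_const.div (((continuous_norm.pow 2).add continuous_const).pow 2)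
      fun z => by positivity
  have hη' : Continuous fun z => η (x - z) := hη.continuous.comp (continuous_sub_left x)
  rw [convolution_laplacian_comm (contDiff_infty.1 (contDiff_logKernel hχ.contDiff he) 2)
    (hasCompactSupport_logKernel hχ.hasCompactSupport e) (contDiff_infty.1 hη.contDiff 2)
    hη.hasCompactSupport]
  simp only [convolution_mul,
    laplacian_logKernel hE (contDiff_infty.1 hχ.contDiff 2) he, add_mul, mul_assoc]
  exact integral_add
    ((hpeak.mul (hχ.continuous.mul hη')).integrable_of_hasCompactSupport
      hχ.hasCompactSupport.mul_right.mul_left)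
    (((continuous_logRemainder hχ.contDiff he).mul hη').integrable_of_hasCompactSupport
      (hasCompactSupport_logRemainder hχ.hasCompactSupport e).mul_right)

lemma laplacian_convolution_logKernel (hE : Module.finrank ℝ E = 2)
    (hχ : IsTestFunction (Metric.closedBall 0 1) χ) (hχ0 : χ 0 = 1) {η : E → ℝ}
    (hη : IsTestFunction univ η) (x : E) :
    Δ (logKernel χ 0 ⋆[mul ℝ ℝ] η) x =
      (∫ z : E, 4 / (‖z‖ ^ 2 + 1) ^ 2) * η x + (logRemainder χ 0 ⋆[mul ℝ ℝ] η) x := by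
  obtain ⟨hP, hPlim⟩ := integrable_tendsto_logKernel hE hχ
  obtain ⟨hR, hRlim⟩ := integrable_tendsto_logRemainder hE hχ
  have hleft := (tendstoUniformly_convolution (mul ℝ ℝ) (fun n =>
    (contDiff_logKernel hχ.contDiff (regParam_pos n)).continuous
      |>.integrable_of_hasCompactSupport (hasCompactSupport_logKernel hχ.hasCompactSupport _))
    hP hPlim (contDiff_laplacian hη.contDiff).continuous
    (hasCompactSupport_laplacian hη.hasCompactSupport)).tendsto_at x
  have hright := (tendstoUniformly_convolution (mul ℝ ℝ) (fun n =>
    (continuous_logRemainder hχ.contDiff (regParam_pos n)).integrable_of_hasCompactSupport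
      (hasCompactSupport_logRemainder hχ.hasCompactSupport _))
    hR hRlim hη.continuous hη.hasCompactSupport).tendsto_at x
  have hg : Continuous fun z => χ z * η (x - z) :=
    hχ.continuous.mul (hη.continuous.comp (continuous_sub_left x))
  have hpeak := (tendsto_integral_peak hE
    (hg.integrable_of_hasCompactSupport hχ.hasCompactSupport.mul_right) hg.continuousAt).comp
    tendsto_natCast_add_one_atTop
  simp only [sub_zero, hχ0, one_mul] at hpeak
  rw [laplacian_convolution hP.locallyIntegrable (contDiff_infty.1 hη.contDiff 2)
    hη.hasCompactSupport]
  exact tendsto_nhds_unique hleft ((hpeak.add hright).congr fun n =>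
    (convolution_logKernel_laplacian hE (hχ.mono (subset_univ _)) hη (regParam_pos n)
      x).symm)

/-- The total mass of the regularised point masses `Δ (log (‖z‖² + e))` in the plane. -/
noncomputable def logMass (E : Type*) [NormedAddCommGroup E] [InnerProductSpace ℝ E]
    [FiniteDimensional ℝ E] [MeasurableSpace E] [BorelSpace E] : ℝ :=
  ∫ z : E, 4 / (‖z‖ ^ 2 + 1) ^ 2

lemma isParametrix_logKernel (hE : Module.finrank ℝ E = 2)
    (hχ : IsTestFunction (Metric.ball 0 1) χ) (hχ1 : χ =ᶠ[𝓝 0] fun _ => 1)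
    (hχe : ∀ z, χ (-z) = χ z) :
    IsParametrix 1 ((logMass E)⁻¹ • logKernel χ 0) ((logMass E)⁻¹ • logRemainder χ 0) := by
  have hχ' := hχ.mono Metric.ball_subset_closedBall
  have hout {f : E → ℝ} (hf : tsupport f ⊆ tsupport χ) (z : E) (hz : 1 ≤ ‖z‖) : f z = 0 :=
    image_eq_zero_of_notMem_tsupport fun h => hz.not_gt (by simpa using hχ.tsupport_subset (hf h))
  obtain ⟨hP, hPlim⟩ := integrable_tendsto_logKernel hE hχ'
  obtain ⟨hD, hDlim⟩ := integrable_tendsto_fderiv_logKernel hE hχ'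
  have hC1 (g : E → ℝ) (hg : Continuous g) (hg' : HasCompactSupport g) :
      ContDiff ℝ 1 (logKernel χ 0 ⋆[mul ℝ ℝ] g) :=
    contDiff_one_convolution_of_tendsto
      (fun n => contDiff_infty.1 (contDiff_logKernel hχ.contDiff (regParam_pos n)) 1)
      (fun n => hasCompactSupport_logKernel hχ.hasCompactSupport _) hP hD hPlim hDlim hg hg'
  exact
    { neg_eq := fun z => by simp [logKernel, hχe]
      remainder_neg_eq := fun z => by simp [logRemainder_neg hχe]
      eq_zero := fun z hz => by simp [hout tsupport_logKernel_subset z hz]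
      remainder_eq_zero := fun z hz => by simp [hout tsupport_logRemainder_subset z hz]
      memLp := (memLp_logKernel hE hχ').const_smul _
      contDiff_remainder := contDiff_const.smul (contDiff_logRemainder hχ.contDiff hχ1)
      contDiff_convolution := fun g hg hg' => by
        rw [smul_convolution]
        exact contDiff_const.smul (hC1 g hg hg')
      laplacian_convolution := fun η hη x => by
        have hη2 : ContDiff ℝ 2 (logKernel χ 0 ⋆[mul ℝ ℝ] η) :=
          hη.hasCompactSupport.contDiff_convolution_right _ hP.locallyIntegrable
            (contDiff_infty.1 hη.contDiff 2)
        have hmass : logMass E ≠ 0 :=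
          (integral_four_div_norm_sq_add_one_sq_pos (by omega)).ne'
        rw [smul_convolution, smul_convolution,
          laplacian_smul (logMass E)⁻¹ hη2.contDiffAt,
          laplacian_convolution_logKernel hE hχ' hχ1.self_of_nhds hη x, ← logMass]
        simp only [Pi.smul_apply, smul_eq_mul]
        field_simp }

lemma exists_isParametrix_one (hE : Module.finrank ℝ E = 2) :
    ∃ P K : E → ℝ, IsParametrix 1 P K := by
  let χ : ContDiffBump (0 : E) := ⟨1 / 4, 1 / 2, by norm_num, by norm_num⟩
  refine ⟨_, _, isParametrix_logKernel hE (χ := χ) ⟨χ.contDiff, χ.hasCompactSupport, ?_⟩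
    χ.eventuallyEq_one χ.neg⟩
  rw [χ.tsupport_eq]
  exact Metric.closedBall_subset_ball (by norm_num [χ])

lemma convolution_comp_smul (f g : E → ℝ) (c : ℝ) (x : E) :
    ((fun z => f (c • z)) ⋆[mul ℝ ℝ] fun z => g (c • z)) x =
      |(c ^ Module.finrank ℝ E)⁻¹| * (f ⋆[mul ℝ ℝ] g) (c • x) := by
  simp only [convolution_mul, smul_sub]
  exact Measure.integral_comp_smul volume (fun z => f z * g (c • x - z)) c

lemma eLpNorm_comp_smul {P : E → ℝ} (hP : AEStronglyMeasurable P) {c : ℝ} (hc : c ≠ 0) :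
    eLpNorm (fun z => P (c • z)) 2 =
      ENNReal.ofReal |(c ^ Module.finrank ℝ E)⁻¹| ^ (1 / 2 : ℝ) * eLpNorm P 2 := by
  have hmap := Measure.map_addHaar_smul (volume : Measure E) hc
  have hP' : AEStronglyMeasurable P (Measure.map (c • ·) volume) := by
    rw [hmap]
    exact hP.smul_measure _
  have h := eLpNorm_map_measure (p := 2) hP' (measurable_const_smul c).aemeasurable
  rw [hmap, eLpNorm_smul_measure_of_ne_top (by simp)] at h
  simpa [Function.comp_def] using h.symm

lemma toReal_eLpNorm_comp_smul (hE : Module.finrank ℝ E = 2) {P : E → ℝ}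
    (hP : AEStronglyMeasurable P) {c : ℝ} (hc : 0 < c) :
    (eLpNorm (fun z => P (c • z)) 2).toReal = c⁻¹ * (eLpNorm P 2).toReal := by
  rw [eLpNorm_comp_smul hP hc.ne', hE, abs_of_pos (by positivity),
    ENNReal.ofReal_rpow_of_pos (by positivity), ENNReal.toReal_mul,
    ENNReal.toReal_ofReal (by positivity), ← inv_pow, ← Real.sqrt_eq_rpow,
    Real.sqrt_sq (by positivity)]

lemma convolution_comp_smul_left (hE : Module.finrank ℝ E = 2) (P g : E → ℝ) {c : ℝ}
    (hc : 0 < c) :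
    (fun z => P (c • z)) ⋆[mul ℝ ℝ] g =
      fun x => (c ^ 2)⁻¹ * (P ⋆[mul ℝ ℝ] fun z => g (c⁻¹ • z)) (c • x) := by
  ext x
  have h := convolution_comp_smul P (fun z => g (c⁻¹ • z)) c x
  simpa only [inv_smul_smul₀ hc.ne', hE, abs_of_pos (show 0 < (c ^ 2)⁻¹ by positivity)] using h

lemma IsParametrix.laplacian_convolution_comp_smul (hE : Module.finrank ℝ E = 2) {r : ℝ}
    {P K : E → ℝ} (h : IsParametrix r P K) {c : ℝ} (hc : 0 < c) {η : E → ℝ}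
    (hη : IsTestFunction univ η) (x : E) :
    Δ ((fun z => P (c • z)) ⋆[mul ℝ ℝ] η) x =
      η x + ((c ^ 2 • fun z => K (c • z)) ⋆[mul ℝ ℝ] η) x := by
  have hη' : IsTestFunction univ fun z => η (c⁻¹ • z) := by
    simpa using hη.comp_smul_sub (inv_ne_zero hc.ne') 0
  have hconv : ContDiff ℝ 2 (P ⋆[mul ℝ ℝ] fun z => η (c⁻¹ • z)) :=
    hη'.hasCompactSupport.contDiff_convolution_right _ h.locallyIntegrable
      (contDiff_infty.1 hη'.contDiff 2)
  have hleft : (fun z => P (c • z)) ⋆[mul ℝ ℝ] η =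
      (c ^ 2)⁻¹ • fun x => (P ⋆[mul ℝ ℝ] fun z => η (c⁻¹ • z)) (c • x) :=
    convolution_comp_smul_left hE P η hc
  have hcomp : ContDiff ℝ 2 fun x => (P ⋆[mul ℝ ℝ] fun z => η (c⁻¹ • z)) (c • x) :=
    hconv.comp (contDiff_const_smul c)
  rw [hleft, laplacian_smul _ hcomp.contDiffAt, smul_convolution,
    laplacian_comp_smul, h.laplacian_convolution _ hη', convolution_comp_smul_left hE K η hc,
    inv_smul_smul₀ hc.ne', Pi.smul_apply, smul_eq_mul, smul_eq_mul,
    inv_mul_cancel_left₀ (by positivity), mul_inv_cancel_left₀ (by positivity)]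

lemma IsParametrix.comp_smul (hE : Module.finrank ℝ E = 2) {r : ℝ} {P K : E → ℝ}
    (h : IsParametrix r P K) {c : ℝ} (hc : 0 < c) :
    IsParametrix (c⁻¹ * r) (fun z => P (c • z)) (c ^ 2 • fun z => K (c • z)) := by
  have hnorm (z : E) (hz : c⁻¹ * r ≤ ‖z‖) : r ≤ ‖c • z‖ := by
    rwa [norm_smul, Real.norm_of_nonneg hc.le, ← inv_mul_le_iff₀ hc]
  exact
    { neg_eq := fun z => by rw [smul_neg, h.neg_eq]
      remainder_neg_eq := fun z => by simp only [Pi.smul_apply, smul_neg, h.remainder_neg_eq]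
      eq_zero := fun z hz => h.eq_zero _ (hnorm z hz)
      remainder_eq_zero := fun z hz => by
        rw [Pi.smul_apply, h.remainder_eq_zero _ (hnorm z hz), smul_zero]
      memLp := by
        refine ⟨h.memLp.1.comp_quasiMeasurePreserving
          (Measure.quasiMeasurePreserving_smul volume hc.ne'), ?_⟩
        rw [eLpNorm_comp_smul h.memLp.1 hc.ne']
        exact ENNReal.mul_lt_top (ENNReal.rpow_lt_top_of_nonneg (by norm_num)
          ENNReal.ofReal_ne_top) h.memLp.2
      contDiff_remainder :=
        contDiff_const.smul (h.contDiff_remainder.comp (contDiff_const_smul c))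
      contDiff_convolution := fun g hg hg' => by
        rw [convolution_comp_smul_left hE P g hc]
        exact contDiff_const.mul ((h.contDiff_convolution _ (hg.comp (continuous_const_smul _))
          (hg'.comp_smul (inv_ne_zero hc.ne'))).comp (contDiff_const_smul c))
      laplacian_convolution := fun η hη => h.laplacian_convolution_comp_smul hE hc hη }

lemma exists_isParametrix_of_finrank_eq_two (hE : Module.finrank ℝ E = 2) :
    ∃ A : ℝ, 0 ≤ A ∧ ∀ r : ℝ, 0 < r → ∃ P K : E → ℝ, IsParametrix r P K ∧
      (eLpNorm P 2).toReal ≤ A * r ∧ (eLpNorm K 2).toReal ≤ A / r := by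
  obtain ⟨P, K, h⟩ := exists_isParametrix_one hE
  refine ⟨max (eLpNorm P 2).toReal (eLpNorm K 2).toReal, by positivity, fun r hr =>
    ⟨_, _, by simpa using h.comp_smul hE (inv_pos.2 hr), ?_, ?_⟩⟩
  · rw [toReal_eLpNorm_comp_smul hE h.memLp.1 (inv_pos.2 hr), inv_inv, mul_comm]
    gcongr
    exact le_max_left _ _
  · rw [eLpNorm_const_smul, ENNReal.toReal_mul,
      toReal_eLpNorm_comp_smul hE h.memLp_remainder.1 (inv_pos.2 hr), toReal_enorm,
      Real.norm_of_nonneg (by positivity), ← mul_assoc]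
    calc _ = (eLpNorm K 2).toReal / r := by field_simp
      _ ≤ _ := by gcongr; exact le_max_right _ _

end PlanarParametrix

section BoundaryDecay

variable {E : Type*} [NormedAddCommGroup E] [InnerProductSpace ℝ E] [FiniteDimensional ℝ E]
  [MeasurableSpace E] [BorelSpace E] {U : Set E} {Q v G : E → ℝ}

lemma toReal_eLpNorm_le_mul {X : Type*} [MeasurableSpace X] {μ : Measure X} {f g : X → ℝ} {c : ℝ}
    (hc : 0 ≤ c) (hg : MemLp g 2 μ) (hfg : ∀ᵐ x ∂μ, ‖f x‖ ≤ c * ‖g x‖) :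
    (eLpNorm f 2 μ).toReal ≤ c * (eLpNorm g 2 μ).toReal := by
  have h := ENNReal.toReal_mono (ENNReal.mul_ne_top ENNReal.ofReal_ne_top hg.eLpNorm_ne_top)
    (eLpNorm_le_mul_eLpNorm_of_ae_le_mul hfg 2)
  rwa [ENNReal.toReal_mul, ENNReal.toReal_ofReal hc] at h

lemma IsParametrix.abs_le_of_isWeakSolution {r : ℝ} {P K : E → ℝ} (h : IsParametrix r P K)
    (hr : 0 ≤ r) (hv : MemLp v 2) (hvc : ContinuousOn v U) (hQ : MemLp Q ⊤)
    (hweak : IsWeakSolution U Q v) {B : ℝ} (hB : 0 ≤ B) (hQB : ∀ᵐ p, ‖Q p‖ ≤ B) {p : E}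
    (hp : r < Metric.infDist p Uᶜ) :
    |v p| ≤ ((eLpNorm K 2).toReal + (eLpNorm P 2).toReal * B) *
      (eLpNorm v 2 (volume.restrict (Metric.ball p r))).toReal := by
  have hQv : (eLpNorm (fun q => Q q * v q) 2 (volume.restrict (Metric.ball p r))).toReal ≤
      B * (eLpNorm v 2 (volume.restrict (Metric.ball p r))).toReal :=
    toReal_eLpNorm_le_mul hB (hv.restrict _) <| ae_restrict_of_ae <| hQB.mono fun q hq => by
      rw [norm_mul]
      gcongr
  have hKv := abs_convolution_le_of_ball h.memLp_remainder h.remainder_eq_zero hv p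
  have hPQv := abs_convolution_le_of_ball h.memLp h.eq_zero (hv.mul' (r := 2) hQ) p
  have hv_eq := h.eqOn_of_isWeakSolution hr hv hvc hQ hweak hp
  have hscale := mul_le_mul_of_nonneg_left hQv (ENNReal.toReal_nonneg (a := eLpNorm P 2))
  rw [hv_eq, abs_neg]
  refine (abs_add_le _ _).trans ((add_le_add hKv (hPQv.trans hscale)).trans_eq ?_)
  ring

lemma toReal_eLpNorm_ball_le_of_infDist (hG : MemLp G 2)
    (hvG : v =ᵐ[volume] fun p => Metric.infDist p Uᶜ * G p) (p : E) {r : ℝ} (hr : 0 ≤ r)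
    (hp : Metric.infDist p Uᶜ ≤ 2 * r) :
    (eLpNorm v 2 (volume.restrict (Metric.ball p r))).toReal ≤
      3 * r * (eLpNorm G 2 (volume.restrict (Metric.ball p r))).toReal := by
  refine toReal_eLpNorm_le_mul (by positivity) (hG.restrict _) ?_
  filter_upwards [ae_restrict_of_ae hvG, ae_restrict_mem measurableSet_ball] with q hq hqp
  rw [hq, norm_mul, Real.norm_of_nonneg Metric.infDist_nonneg]
  gcongr
  linarith [Metric.infDist_le_infDist_add_dist (s := Uᶜ) (x := q) (y := p),
    Metric.mem_ball.1 hqp]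

lemma exists_abs_le_eLpNorm_ball (hE : Module.finrank ℝ E = 2) (hU : IsOpen U)
    (hU' : Uᶜ.Nonempty) (hv : MemLp v 2) (hvc : ContinuousOn v U) (hQ : MemLp Q ⊤)
    (hweak : IsWeakSolution U Q v) (hG : MemLp G 2)
    (hvG : v =ᵐ[volume] fun p => Metric.infDist p Uᶜ * G p) :
    ∃ C, 0 ≤ C ∧ ∀ p ∈ U, |v p| ≤ C * (1 + (Metric.infDist p Uᶜ / 2) ^ 2) *
      (eLpNorm G 2 (volume.restrict (Metric.ball p (Metric.infDist p Uᶜ / 2)))).toReal := by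
  obtain ⟨A, hA, hpar⟩ := exists_isParametrix_of_finrank_eq_two hE
  obtain ⟨B, hB, hQB⟩ := exists_ae_le_of_memLp_top hQ.norm
  refine ⟨3 * A * (1 + B), by positivity, fun p hp => ?_⟩
  have hdist : 0 < Metric.infDist p Uᶜ :=
    (hU.isClosed_compl.notMem_iff_infDist_pos hU').1 (by simpa using hp)
  have hr : 0 < Metric.infDist p Uᶜ / 2 := half_pos hdist
  obtain ⟨P, K, h, hP, hK⟩ := hpar _ hr
  have hbound := h.abs_le_of_isWeakSolution hr.le hv hvc hQ hweak hB.le hQB (half_lt_self hdist)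
  have hvN := toReal_eLpNorm_ball_le_of_infDist hG hvG p hr.le (by linarith)
  generalize Metric.infDist p Uᶜ / 2 = r at *
  have hN : 0 ≤ (eLpNorm G 2 (volume.restrict (Metric.ball p r))).toReal :=
    ENNReal.toReal_nonneg
  generalize (eLpNorm G 2 (volume.restrict (Metric.ball p r))).toReal = N at *
  calc |v p| ≤ (A / r + A * r * B) * (3 * r * N) := hbound.trans (by gcongr)
    _ = 3 * A * ((1 + B * r ^ 2) * N) := by field_simp
    _ ≤ 3 * A * ((1 + B) * (1 + r ^ 2) * N) := by
        gcongr
        nlinarith [sq_nonneg r]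
    _ = 3 * A * (1 + B) * (1 + r ^ 2) * N := by ring

lemma tendsto_toReal_eLpNorm_ball {r : E → ℝ} {p : E} [Nontrivial E] (hG : MemLp G 2)
    (hr0 : ∀ q, 0 ≤ r q) (hr : Tendsto r (𝓝 p) (𝓝 0)) :
    Tendsto (fun q => (eLpNorm G 2 (volume.restrict (Metric.ball q (r q)))).toReal) (𝓝 p)
      (𝓝 0) := by
  have hvol : Tendsto (fun q => volume (Metric.ball q (r q))) (𝓝 p) (𝓝 0) := by
    have h := ENNReal.Tendsto.mul_const (b := volume (Metric.ball (0 : E) 1))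
      (ENNReal.tendsto_ofReal (hr.pow (Module.finrank ℝ E))) (.inr measure_ball_lt_top.ne)
    rw [zero_pow Module.finrank_pos.ne', ENNReal.ofReal_zero, zero_mul] at h
    exact h.congr fun q => (Measure.addHaar_ball volume q (hr0 q)).symm
  have h : Tendsto (fun q => eLpNorm G 2 (volume.restrict (Metric.ball q (r q)))) (𝓝 p) (𝓝 0) := by
    refine ENNReal.tendsto_nhds_zero.2 fun ε hε => ?_
    obtain ⟨ε', hε', hle⟩ := ENNReal.lt_iff_exists_nnreal_btwn.1 hε
    obtain ⟨δ, hδ, hδG⟩ := hG.eLpNorm_indicator_le one_le_two ENNReal.ofNat_ne_top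
      (ε := ε') (by exact_mod_cast hε')
    filter_upwards [ENNReal.tendsto_nhds_zero.1 hvol _ (ENNReal.ofReal_pos.2 hδ)] with q hq
    rw [← eLpNorm_indicator_eq_eLpNorm_restrict measurableSet_ball]
    exact (hδG _ measurableSet_ball hq).trans (by simpa using hle.le)
  exact (ENNReal.tendsto_toReal ENNReal.zero_ne_top).comp h

lemma continuous_of_isWeakSolution (hE : Module.finrank ℝ E = 2) (hU : IsOpen U)
    (hU' : Uᶜ.Nonempty) (hv : MemLp v 2) (hvc : ContinuousOn v U) (hv0 : EqOn v 0 Uᶜ)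
    (hQ : MemLp Q ⊤) (hweak : IsWeakSolution U Q v) (hG : MemLp G 2)
    (hvG : v =ᵐ[volume] fun p => Metric.infDist p Uᶜ * G p) : Continuous v := by
  refine continuous_iff_continuousAt.2 fun p => ?_
  by_cases hp : p ∈ U
  · exact hvc.continuousAt (hU.mem_nhds hp)
  have : Nontrivial E := Module.nontrivial_of_finrank_pos (R := ℝ) (by omega)
  obtain ⟨C, hC, hle⟩ := exists_abs_le_eLpNorm_ball hE hU hU' hv hvc hQ hweak hG hvG
  have hdist : Tendsto (fun q => Metric.infDist q Uᶜ / 2) (𝓝 p) (𝓝 0) := by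
    simpa [Metric.infDist_zero_of_mem (show p ∈ Uᶜ from hp)] using
      ((Metric.continuous_infDist_pt Uᶜ).tendsto p).div_const 2
  have hlim := (((hdist.pow 2).const_add 1).const_mul C).mul
    (tendsto_toReal_eLpNorm_ball hG (fun q => div_nonneg Metric.infDist_nonneg zero_le_two) hdist)
  rw [ContinuousAt, hv0 hp]
  refine squeeze_zero_norm (fun q => ?_) (by simpa using hlim)
  by_cases hq : q ∈ U
  · exact hle q hq
  · rw [hv0 hq, Pi.zero_apply, norm_zero]
    positivity

end BoundaryDecay

section PlanarGroundState

variable {E : Type*} [NormedAddCommGroup E] [InnerProductSpace ℝ E] [FiniteDimensional ℝ E]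
  [MeasurableSpace E] [BorelSpace E] {U : Set E} {V w : E → ℝ} {κ H : ℝ}

theorem exists_groundState (hE : Module.finrank ℝ E = 2) (hU : IsOpen U) (hU' : U.Nonempty)
    (hUb : Bornology.IsBounded U) (hV : MemLp V ⊤) (hVU : ContDiffOn ℝ 1 V U) (hw : MemLp w ⊤)
    (hwU : ContDiffOn ℝ 1 w U) (hw' : ∀ p ∈ U, 0 < w p) (hκ : 0 < κ)
    (hcoercive : ∀ η, IsTestFunction U η → κ * ∫ p, ‖∇ η p‖ ^ 2 ≤ energy V η η) (hH : 0 < H)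
    (hHardy : ∀ η, IsTestFunction U η →
      ∫ p, (η p / Metric.infDist p Uᶜ) ^ 2 ≤ H * ∫ p, ‖∇ η p‖ ^ 2) :
    ∃ (l : ℝ) (f : E → ℝ), 0 < l ∧ Continuous f ∧ f ≠ 0 ∧ EqOn f 0 Uᶜ ∧ ContDiffOn ℝ 2 f U ∧
      (∀ p ∈ U, Δ f p + (V p + l * w p) * f p = 0) ∧
      ∀ η, IsTestFunction U η → l * ∫ p, w p * η p ^ 2 ≤ energy V η η := by
  have : Nontrivial E := Module.nontrivial_of_finrank_pos (R := ℝ) (by omega)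
  have hUc : Uᶜ.Nonempty := nonempty_compl.2 fun h => NormedSpace.unbounded_univ ℝ E (h ▸ hUb)
  have hd : Continuous fun p => Metric.infDist p Uᶜ := Metric.continuous_infDist_pt _
  have hd' (p) (hp : p ∈ U) : Metric.infDist p Uᶜ ≠ 0 :=
    ((hU.isClosed_compl.notMem_iff_infDist_pos hUc).1 (by simpa using hp)).ne'
  have hdB : MemLp (fun p => Metric.infDist p Uᶜ) ⊤ := by
    obtain ⟨C, hC⟩ := hUb.isCompact_closure.exists_bound_of_continuousOn hd.continuousOn
    refine memLp_top_of_bound hd.aestronglyMeasurable (max C 0) (.of_forall fun p => ?_)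
    by_cases hp : p ∈ U
    · exact (hC p (subset_closure hp)).trans (le_max_left _ _)
    · simp [Metric.infDist_zero_of_mem (show p ∈ Uᶜ from hp)]
  obtain ⟨l, G, hl, hG, hne, hweak, hmin⟩ := exists_weak_groundState hU hU' hUb hV hw hw' hd hdB
    hd' hκ hcoercive hH hHardy
  have hQ : MemLp (fun p => V p + l * w p) ⊤ := hV.add (hw.const_mul l)
  obtain ⟨f, hfG, hf0, hfC, hfΔ⟩ := exists_contDiffOn_of_isWeakSolution
    (fun r hr => (exists_isParametrix_of_finrank_eq_two hE).elim fun A hA =>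
      (hA.2 r hr).imp fun P hP => hP.imp fun K hK => hK.1)
    hU hUc (hG.mul' (r := 2) hdB) hQ (hVU.add (contDiffOn_const.mul hwU)) hweak
  have hf0' : EqOn f 0 Uᶜ := fun p hp => by
    simp [hf0 hp, Metric.infDist_zero_of_mem hp]
  refine ⟨l, f, hl, ?_, fun h => hne ?_, hf0', hfC, hfΔ, hmin⟩
  · exact continuous_of_isWeakSolution hE hU hUc ((hG.mul' (r := 2) hdB).ae_eq hfG.symm)
      hfC.continuousOn hf0' hQ (IsWeakSolution.congr_ae hweak hfG) hG hfG
  · exact hfG.symm.trans (by rw [h])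

end PlanarGroundState

section HardyDomains

variable {E : Type*} [NormedAddCommGroup E] [InnerProductSpace ℝ E]

lemma le_mul_infDist_compl_of_norm_fderiv_le [FiniteDimensional ℝ E] {U : Set E} {ψ : E → ℝ} {L : ℝ}
    (hψ : DifferentiableOn ℝ ψ U) (hU : IsOpen U) (hL : ∀ p ∈ U, ‖fderiv ℝ ψ p‖ ≤ L)
    (hψc : ContinuousOn ψ (closure U)) (h0 : ∀ p ∈ frontier U, ψ p = 0) (hU' : U ≠ univ)
    {p : E} (hp : p ∈ U) : ψ p ≤ L * Metric.infDist p Uᶜ := by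
  obtain ⟨q, hq, hpq⟩ := exists_mem_frontier_infDist_compl_eq_dist hp hU'
  set d := Metric.infDist p Uᶜ
  have hball : Metric.ball p d ⊆ U := Metric.ball_infDist_compl_subset
  have hd : 0 < d :=
    (hU.isClosed_compl.notMem_iff_infDist_pos (nonempty_compl.2 hU')).1 (not_not_intro hp)
  have hlip : ∀ x ∈ Metric.ball p d, ψ p ≤ ψ x + L * ‖p - x‖ := fun x hx =>
    sub_le_iff_le_add'.1 <| (le_abs_self _).trans <|
      (convex_ball p d).norm_image_sub_le_of_norm_fderiv_le
        (fun y hy => hψ.differentiableAt (hU.mem_nhds (hball hy))) (fun y hy => hL y (hball hy)) hx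
        (Metric.mem_ball_self hd)
  have hq' : q ∈ closure (Metric.ball p d) := by
    rw [closure_ball p hd.ne', Metric.mem_closedBall', hpq]
  have hle := ContinuousWithinAt.closure_le hq' continuousWithinAt_const
    (((hψc q (frontier_subset_closure hq)).mono (hball.trans subset_closure)).add
      (by fun_prop)) hlip
  rwa [Pi.add_apply, h0 q hq, zero_add, ← dist_eq_norm, ← hpq] at hle

lemma gradient_comp_smul_sub [CompleteSpace E] (η : E → ℝ) (c : ℝ) (q p : E) :
    ∇ (fun z => η (c • (z - q))) p = c • ∇ η (c • (p - q)) := by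
  have h : fderiv ℝ (fun z => η (c • (z - q))) p = c • fderiv ℝ η (c • (p - q)) := by
    rw [fderiv_comp_sub (f := fun z => η (c • z)), fderiv_comp_smul]
  rw [gradient, h, map_smul, gradient]

variable [FiniteDimensional ℝ E] [MeasurableSpace E] [BorelSpace E] {U : Set E} {η ψ : E → ℝ}

theorem IsTestFunction.integral_halfSpace_hardy_le (hη : IsTestFunction U η) {v : E}
    (hv : ‖v‖ = 1) (hU : ∀ p ∈ U, 0 < ⟪v, p⟫) :
    ∫ p, η p ^ 2 / (4 * ⟪v, p⟫ ^ 2) ≤ ∫ p, ‖∇ η p‖ ^ 2 := by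
  have hfderiv p : fderiv ℝ (fun q => ⟪v, q⟫) p = innerSL ℝ v := (innerSL ℝ v).fderiv
  have hgrad p : ∇ (fun q => ⟪v, q⟫) p = v :=
    HasGradientAt.gradient (innerSL ℝ v).hasFDerivAt
  have hΔ p : Δ (fun q => ⟪v, q⟫) p = 0 := by
    rw [laplacian_eq_sum_fderiv_fderiv (f := fun q => ⟪v, q⟫) (stdOrthonormalBasis ℝ E)
      (innerSL ℝ v).contDiff.contDiffAt]
    simp [hfderiv]
  have h := hη.integral_hardy_le (ψ := fun q => ⟪v, q⟫)
    (fun p _ => (innerSL ℝ v).contDiff.contDiffAt) (fun p hp => (hU p hp).ne')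
  simpa only [hgrad, hΔ, hv, one_pow, mul_zero, sub_zero, one_div_mul_eq_div] using h

theorem IsTestFunction.integral_sq_div_infDist_sq_le (hη : IsTestFunction U η) (hU : IsOpen U)
    (hU' : U ≠ univ) (hψ : ContDiffOn ℝ 2 ψ U) (hψc : ContinuousOn ψ (closure U))
    (hpos : ∀ p ∈ U, 0 < ψ p) (h0 : ∀ p ∈ frontier U, ψ p = 0) {c L : ℝ} (hc : 0 < c)
    (hcψ : ∀ p ∈ U, c ≤ ‖∇ ψ p‖ ^ 2 - 2 * ψ p * Δ ψ p) (hL : ∀ p ∈ U, ‖∇ ψ p‖ ≤ L) :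
    ∫ p, (η p / Metric.infDist p Uᶜ) ^ 2 ≤ 4 * L ^ 2 / c * ∫ p, ‖∇ η p‖ ^ 2 := by
  have hψ' p (hp : p ∈ U) := hψ.contDiffAt (hU.mem_nhds hp)
  have hpos' p (hp : p ∈ U) := (hpos p hp).ne'
  have hle p : (η p / Metric.infDist p Uᶜ) ^ 2 ≤ 4 * L ^ 2 / c *
      ((‖∇ ψ p‖ ^ 2 - 2 * ψ p * Δ ψ p) / (4 * ψ p ^ 2) * η p ^ 2) := by
    by_cases hp : p ∈ U
    · have hψL := le_mul_infDist_compl_of_norm_fderiv_le (hψ.differentiableOn (by simp)) hU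
        (fun q hq => (norm_gradient_eq_norm_fderiv ψ q).symm.trans_le (hL q hq)) hψc h0 hU' hp
      have hψp := hpos p hp
      have hd : 0 < Metric.infDist p Uᶜ := by
        refine Metric.infDist_nonneg.lt_of_ne fun h => ?_
        rw [← h, mul_zero] at hψL
        exact hψp.not_ge hψL
      have hinv : 1 / Metric.infDist p Uᶜ ≤ L / ψ p := by
        rw [div_le_div_iff₀ hd hψp]
        linarith
      calc (η p / Metric.infDist p Uᶜ) ^ 2 = η p ^ 2 * (1 / Metric.infDist p Uᶜ) ^ 2 := by ring
        _ ≤ η p ^ 2 * (L / ψ p) ^ 2 := by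
          gcongr
        _ = 4 * L ^ 2 / c * (c / (4 * ψ p ^ 2) * η p ^ 2) := by field_simp
        _ ≤ _ := by
          gcongr
          exact hcψ p hp
    · simp [hη.eq_zero_of_notMem hp]
  calc _ ≤ ∫ p, 4 * L ^ 2 / c *
        ((‖∇ ψ p‖ ^ 2 - 2 * ψ p * Δ ψ p) / (4 * ψ p ^ 2) * η p ^ 2) :=
        integral_mono_of_nonneg (.of_forall fun p => sq_nonneg _)
          ((hη.integrable_hardy hψ' hpos').const_mul _) (.of_forall hle)
    _ ≤ _ := by
        rw [integral_const_mul]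
        refine mul_le_mul_of_nonneg_left ?_ (by positivity)
        exact hη.integral_hardy_le hψ' hpos'

lemma integral_comp_smul_sub (g : E → ℝ) (c : ℝ) (q : E) :
    ∫ p, g (c • (p - q)) = |(c ^ Module.finrank ℝ E)⁻¹| * ∫ p, g p := by
  rw [integral_sub_right_eq_self (fun p => g (c • p)) q, Measure.integral_comp_smul, smul_eq_mul]

variable (E) in
theorem exists_isTestFunction_ball_integral_norm_gradient_sq_le :
    ∃ C : ℝ, 0 ≤ C ∧ ∀ (q : E) (ρ : ℝ), 0 < ρ → ∃ η : E → ℝ, IsTestFunction (Metric.ball q ρ) η ∧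
      0 < ∫ p, η p ^ 2 ∧ ∫ p, ‖∇ η p‖ ^ 2 ≤ C / ρ ^ 2 * ∫ p, η p ^ 2 := by
  obtain ⟨χ, hχ, hχ0⟩ := exists_isTestFunction_ne_zero (U := Metric.ball (0 : E) 1)
    Metric.isOpen_ball (Metric.nonempty_ball.2 one_pos)
  have hχpos : 0 < ∫ p, χ p ^ 2 := by
    simpa only [one_mul] using
      integral_mul_sq_pos (memLp_top_const (1 : ℝ)) (fun _ _ => one_pos) hχ hχ0
  have hχgrad : 0 ≤ ∫ p, ‖∇ χ p‖ ^ 2 := integral_nonneg fun p => sq_nonneg _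
  refine ⟨(∫ p, ‖∇ χ p‖ ^ 2) / ∫ p, χ p ^ 2, div_nonneg hχgrad hχpos.le, fun q ρ hρ => ?_⟩
  refine ⟨fun z => χ (ρ⁻¹ • (z - q)), ?_, ?_, ?_⟩
  · refine (hχ.comp_smul_sub (inv_ne_zero hρ.ne') q).mono fun z hz => ?_
    rw [mem_preimage, mem_ball_zero_iff, norm_smul, norm_inv, Real.norm_of_nonneg hρ.le,
      inv_mul_lt_one₀ hρ] at hz
    exact mem_ball_iff_norm.2 hz
  · rw [integral_comp_smul_sub (fun z => χ z ^ 2)]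
    exact mul_pos (by positivity) hχpos
  · simp_rw [gradient_comp_smul_sub, norm_smul, mul_pow]
    rw [integral_const_mul, integral_comp_smul_sub (fun z => ‖∇ χ z‖ ^ 2),
      integral_comp_smul_sub (fun z => χ z ^ 2), norm_inv, Real.norm_of_nonneg hρ.le]
    generalize |((ρ⁻¹) ^ Module.finrank ℝ E)⁻¹| = m
    refine le_of_eq ?_
    field_simp

end HardyDomains

section PlaneCalculus

variable {f : ℂ → ℝ} {z : ℂ}

lemma hasDerivAt_mk_left (s y : ℝ) : HasDerivAt (fun s : ℝ => (⟨s, y⟩ : ℂ)) 1 s := by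
  simpa only [← Complex.mk_eq_add_mul_I, Complex.ofReal_one] using
    (hasDerivAt_id' s).ofReal_comp.add_const (y * Complex.I)

lemma hasDerivAt_mk_right (s y : ℝ) : HasDerivAt (fun y : ℝ => (⟨s, y⟩ : ℂ)) Complex.I y := by
  simpa only [← Complex.mk_eq_add_mul_I, one_mul, Complex.ofReal_one] using
    ((hasDerivAt_id' y).ofReal_comp.mul_const Complex.I).const_add (s : ℂ)

lemma deriv_comp_mk_left {s y : ℝ} (hf : DifferentiableAt ℝ f ⟨s, y⟩) :
    deriv (fun t => f ⟨t, y⟩) s = fderiv ℝ f ⟨s, y⟩ 1 :=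
  (hf.hasFDerivAt.comp_hasDerivAt s (hasDerivAt_mk_left s y)).deriv

lemma deriv_comp_mk_right {s y : ℝ} (hf : DifferentiableAt ℝ f ⟨s, y⟩) :
    deriv (fun t => f ⟨s, t⟩) y = fderiv ℝ f ⟨s, y⟩ Complex.I :=
  (hf.hasFDerivAt.comp_hasDerivAt y (hasDerivAt_mk_right s y)).deriv

lemma norm_gradient_sq_eq_deriv (hf : DifferentiableAt ℝ f z) :
    ‖∇ f z‖ ^ 2 =
      deriv (fun s => f ⟨s, z.im⟩) z.re ^ 2 + deriv (fun y => f ⟨z.re, y⟩) z.im ^ 2 := by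
  rw [deriv_comp_mk_left hf, deriv_comp_mk_right hf,
    ← Complex.orthonormalBasisOneI.sum_sq_norm_inner_left]
  simp [inner_gradient_left]

lemma laplacian_eq_deriv_deriv (hf : ContDiffAt ℝ 2 f z) :
    Δ f z = deriv (deriv fun s => f ⟨s, z.im⟩) z.re + deriv (deriv fun y => f ⟨z.re, y⟩) z.im := by
  have hd : ∀ᶠ w in 𝓝 z, DifferentiableAt ℝ f w :=
    (hf.eventually (by simp)).mono fun w hw => hw.differentiableAt (by simp)
  have hd' (v : ℂ) : DifferentiableAt ℝ (fun w => fderiv ℝ f w v) z :=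
    ((hf.fderiv_right (m := 1) (by norm_num)).clm_apply contDiffAt_const).differentiableAt
      (by simp)
  have hleft : deriv (fun s => f ⟨s, z.im⟩) =ᶠ[𝓝 z.re] fun s => fderiv ℝ f ⟨s, z.im⟩ 1 :=
    ((hasDerivAt_mk_left z.re z.im).continuousAt.eventually hd).mono fun s => deriv_comp_mk_left
  have hright : deriv (fun y => f ⟨z.re, y⟩) =ᶠ[𝓝 z.im] fun y => fderiv ℝ f ⟨z.re, y⟩ Complex.I :=
    ((hasDerivAt_mk_right z.re z.im).continuousAt.eventually hd).mono
      fun s => deriv_comp_mk_right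
  rw [laplacian_eq_sum_fderiv_fderiv Complex.orthonormalBasisOneI hf, hleft.deriv_eq,
    hright.deriv_eq, deriv_comp_mk_left (hd' 1), deriv_comp_mk_right (hd' Complex.I)]
  simp

end PlaneCalculus

section HalfPlaneGroundState

variable {U : Set ℂ} {b H : ℝ}

lemma memLp_top_indicator_div_re_pow (hU : MeasurableSet U) (hb : 0 < b)
    (hUre : ∀ z ∈ U, b ≤ z.re) (c : ℝ) (n : ℕ) :
    MemLp (U.indicator fun z => c / z.re ^ n) ⊤ := by
  have hmeas : Measurable fun z : ℂ => c / z.re ^ n := by fun_prop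
  refine (memLp_indicator_iff_restrict hU).2 <| memLp_top_of_bound hmeas.aestronglyMeasurable
    (|c| / b ^ n) (ae_restrict_of_forall_mem hU fun z hz => ?_)
  rw [norm_div, norm_pow, Real.norm_eq_abs, Real.norm_of_nonneg (hb.le.trans (hUre z hz))]
  gcongr
  exact hUre z hz

lemma contDiffOn_indicator_div_re_pow (hUre : ∀ z ∈ U, z.re ≠ 0) (c : ℝ) (n : ℕ) :
    ContDiffOn ℝ 1 (U.indicator fun z => c / z.re ^ n) U :=
  (contDiffOn_const.div (Complex.reCLM.contDiff.pow n).contDiffOn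
    fun z hz => pow_ne_zero n (hUre z hz)).congr fun _ hz => indicator_of_mem hz _

lemma IsTestFunction.indicator_mul_sq {η : ℂ → ℝ} (hη : IsTestFunction U η) (h : ℂ → ℝ) (z : ℂ) :
    U.indicator h z * η z ^ 2 = h z * η z ^ 2 := by
  by_cases hz : z ∈ U
  · rw [indicator_of_mem hz]
  · simp [hη.eq_zero_of_notMem hz]

theorem exists_groundState_of_re_ge (hU : IsOpen U) (hU' : U.Nonempty)
    (hUb : Bornology.IsBounded U) (hb : 0 < b) (hUre : ∀ z ∈ U, b ≤ z.re) (hH : 0 < H)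
    (hHardy : ∀ η, IsTestFunction U η →
      ∫ z, (η z / Metric.infDist z Uᶜ) ^ 2 ≤ H * ∫ z, ‖∇ η z‖ ^ 2) :
    ∃ (l : ℝ) (f : ℂ → ℝ), 0 < l ∧ Continuous f ∧ f ≠ 0 ∧ EqOn f 0 Uᶜ ∧ ContDiffOn ℝ 2 f U ∧
      (∀ z ∈ U, Δ f z + (3 / (16 * z.re ^ 2) + l / (2 * z.re)) * f z = 0) ∧
      ∀ η, IsTestFunction U η → l * ∫ z, η z ^ 2 / (2 * z.re) ≤ ∫ z, ‖∇ η z‖ ^ 2 := by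
  let V : ℂ → ℝ := U.indicator fun z => 3 / 16 / z.re ^ 2
  let w : ℂ → ℝ := U.indicator fun z => 1 / 2 / z.re ^ 1
  have hre z (hz : z ∈ U) : 0 < z.re := hb.trans_le (hUre z hz)
  have hre' z (hz : z ∈ U) : z.re ≠ 0 := (hre z hz).ne'
  have hV : MemLp V ⊤ := memLp_top_indicator_div_re_pow hU.measurableSet hb hUre _ _
  have henergy η (hη : IsTestFunction U η) :
      energy V η η = (∫ z, ‖∇ η z‖ ^ 2) - 3 / 4 * ∫ z, η z ^ 2 / (4 * z.re ^ 2) := by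
    simp_rw [energy_eq_sub hV hη hη, real_inner_self_eq_norm_sq, ← sq, V, hη.indicator_mul_sq]
    rw [← integral_const_mul]
    congr 3 with z
    ring
  have hhardy η (hη : IsTestFunction U η) :
      ∫ z, η z ^ 2 / (4 * z.re ^ 2) ≤ ∫ z, ‖∇ η z‖ ^ 2 := by
    simpa using hη.integral_halfSpace_hardy_le (v := (1 : ℂ)) (by simp) (by simpa using hre)
  have hw : MemLp w ⊤ := memLp_top_indicator_div_re_pow hU.measurableSet hb hUre _ _
  have hw' z (hz : z ∈ U) : 0 < w z := by
    have := hre z hz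
    simp only [w, indicator_of_mem hz]
    positivity
  obtain ⟨l, f, hl, hfc, hf0, hfU, hf2, hfeq, hmin⟩ := exists_groundState
    Complex.finrank_real_complex hU hU' hUb hV (contDiffOn_indicator_div_re_pow hre' _ _)
    hw (contDiffOn_indicator_div_re_pow hre' _ _) hw' (κ := 1 / 4) (by norm_num)
    (fun η hη => by linarith [henergy η hη, hhardy η hη]) hH hHardy
  refine ⟨l, f, hl, hfc, hf0, hfU, hf2, fun z hz => ?_, fun η hη => ?_⟩
  · have h := hfeq z hz
    simp only [V, w, indicator_of_mem hz] at h
    linear_combination h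
  · have hnonneg : 0 ≤ ∫ z, η z ^ 2 / (4 * z.re ^ 2) := integral_nonneg fun z => by positivity
    have hweight z : w z * η z ^ 2 = η z ^ 2 / (2 * z.re) := by
      simp only [w, hη.indicator_mul_sq]
      ring
    have h := hmin η hη
    simp_rw [hweight] at h
    linarith [henergy η hη]

end HalfPlaneGroundState

section FlatBall

variable {c R : ℝ} {z : ℂ}

/-- The flat coordinates `(x ^ 2 / 2, y)` on the right half-plane. -/
noncomputable def flatten (p : ℝ × ℝ) : ℂ := ⟨p.1 ^ 2 / 2, p.2⟩

/-- The defining function `R ^ 4 - ‖(x - c, y)‖ ^ 4` of the Grushin ball centered at `(c, 0)`, in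
flat coordinates. The value `√s = 0` for `s ≤ 0` makes it nonpositive on the left half-plane when
`R ≤ c`. -/
noncomputable def flatGap (c R : ℝ) (z : ℂ) : ℝ :=
  R ^ 4 - ((√(2 * z.re) - c) ^ 4 + 4 * z.im ^ 2)

/-- The Grushin ball centered at `(c, 0)` in flat coordinates, for `0 < R < c`. -/
def flatBall (c R : ℝ) : Set ℂ := {z | 0 < flatGap c R z}

lemma continuous_flatGap (c R : ℝ) : Continuous (flatGap c R) := by
  unfold flatGap
  fun_prop

lemma isOpen_flatBall (c R : ℝ) : IsOpen (flatBall c R) :=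
  isOpen_lt continuous_const (continuous_flatGap c R)

lemma flatGap_eq_zero_of_mem_frontier (hz : z ∈ frontier (flatBall c R)) : flatGap c R z = 0 :=
  (frontier_lt_subset_eq continuous_const (continuous_flatGap c R) hz).symm

lemma abs_sqrt_sub_lt (hR : 0 < R) (hz : z ∈ flatBall c R) : |√(2 * z.re) - c| < R := by
  have hz' : 0 < R ^ 4 - ((√(2 * z.re) - c) ^ 4 + 4 * z.im ^ 2) := hz
  refine lt_of_pow_lt_pow_left₀ 4 hR.le ?_
  rw [Even.pow_abs (by decide)]
  nlinarith [sq_nonneg z.im]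

lemma re_pos_of_mem_flatBall (hR : 0 < R) (hRc : R ≤ c) (hz : z ∈ flatBall c R) : 0 < z.re := by
  have h := (abs_lt.1 (abs_sqrt_sub_lt hR hz)).1
  have := Real.sqrt_pos.1 (show 0 < √(2 * z.re) by linarith)
  linarith

lemma le_re_of_mem_flatBall (hR : 0 < R) (hRc : R ≤ c) (hz : z ∈ flatBall c R) :
    (c - R) ^ 2 / 2 ≤ z.re := by
  have h := (abs_lt.1 (abs_sqrt_sub_lt hR hz)).1
  have hre := re_pos_of_mem_flatBall hR hRc hz
  have := pow_le_pow_left₀ (sub_nonneg.2 hRc) (show c - R ≤ √(2 * z.re) by linarith) 2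
  rw [Real.sq_sqrt (by linarith)] at this
  linarith

lemma two_mul_re_le_of_mem_flatBall (hR : 0 < R) (hz : z ∈ flatBall c R) :
    2 * z.re ≤ (c + R) ^ 2 := by
  have h := (abs_lt.1 (abs_sqrt_sub_lt hR hz)).2
  have hcR : 0 ≤ c + R := by linarith [Real.sqrt_nonneg (2 * z.re)]
  exact (Real.sqrt_le_left hcR).1 (by linarith)

lemma isBounded_flatBall (hR : 0 < R) (hRc : R ≤ c) : Bornology.IsBounded (flatBall c R) := by
  refine isBounded_iff_forall_norm_le.2 ⟨(c + R) ^ 2 / 2 + R ^ 2, fun z hz => ?_⟩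
  have hz' : 0 < R ^ 4 - ((√(2 * z.re) - c) ^ 4 + 4 * z.im ^ 2) := hz
  have him : |z.im| ≤ R ^ 2 :=
    abs_le_of_sq_le_sq (by nlinarith [sq_nonneg ((√(2 * z.re) - c) ^ 2)]) (by positivity)
  have hre := re_pos_of_mem_flatBall hR hRc hz
  have := two_mul_re_le_of_mem_flatBall hR hz
  refine (Complex.norm_le_abs_re_add_abs_im z).trans (add_le_add ?_ him)
  rw [abs_of_pos hre]
  linarith

lemma ball_subset_flatBall (hR : 0 < R) (hRc : R ≤ c) :
    Metric.ball (⟨c ^ 2 / 2, 0⟩ : ℂ) (R ^ 2 / 4) ⊆ flatBall c R := fun z hz => by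
  rw [mem_ball_iff_norm] at hz
  have hre := abs_lt.1 ((Complex.abs_re_le_norm _).trans_lt hz)
  have him := abs_lt.1 ((Complex.abs_im_le_norm _).trans_lt hz)
  simp only [Complex.sub_re, Complex.sub_im, sub_zero] at hre him
  have : 0 < R ^ 2 := by positivity
  have hc2 : R ^ 2 ≤ R * c := by nlinarith
  have hlow : c - R / 2 ≤ √(2 * z.re) := Real.le_sqrt_of_sq_le (by nlinarith)
  have hupp : √(2 * z.re) ≤ c + R / 2 := Real.sqrt_le_iff.2 ⟨by linarith, by nlinarith⟩
  have hx4 : (√(2 * z.re) - c) ^ 4 ≤ (R / 2) ^ 4 :=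
    (Even.pow_abs (by decide) _).symm.trans_le
      (pow_le_pow_left₀ (abs_nonneg _) (abs_le.2 ⟨by linarith, by linarith⟩) 4)
  have hy2 : z.im ^ 2 ≤ (R ^ 2 / 4) ^ 2 := sq_le_sq' him.1.le him.2.le
  change 0 < R ^ 4 - ((√(2 * z.re) - c) ^ 4 + 4 * z.im ^ 2)
  nlinarith [pow_pos hR 4]

lemma contDiffAt_flatGap (hz : 0 < z.re) : ContDiffAt ℝ 2 (flatGap c R) z := by
  have hre : ContDiffAt ℝ 2 Complex.re z := Complex.reCLM.contDiff.contDiffAt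
  have him : ContDiffAt ℝ 2 Complex.im z := Complex.imCLM.contDiff.contDiffAt
  exact contDiffAt_const.sub (((((contDiffAt_const.mul hre).sqrt (by positivity)).sub
    contDiffAt_const).pow 4).add (contDiffAt_const.mul (him.pow 2)))

lemma hasDerivAt_sqrt_two_mul {s : ℝ} (hs : 0 < s) :
    HasDerivAt (fun t => √(2 * t)) (1 / √(2 * s)) s := by
  convert ((hasDerivAt_id' s).const_mul 2).sqrt (by positivity) using 1
  field_simp

lemma deriv_flatGap_left {s : ℝ} (hs : 0 < s) (y : ℝ) :
    deriv (fun t => flatGap c R ⟨t, y⟩) s = -(4 * (√(2 * s) - c) ^ 3 / √(2 * s)) := by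
  have h : HasDerivAt (fun t => flatGap c R ⟨t, y⟩) _ s :=
    ((((hasDerivAt_sqrt_two_mul hs).sub_const c).fun_pow 4).add_const (4 * y ^ 2)).const_sub _
  refine h.deriv.trans ?_
  norm_num
  ring

lemma deriv_flatGap_right (s y : ℝ) : deriv (fun t => flatGap c R ⟨s, t⟩) y = -(8 * y) := by
  have h : HasDerivAt (fun t => flatGap c R ⟨s, t⟩) _ y :=
    (((hasDerivAt_pow 2 y).const_mul 4).const_add ((√(2 * s) - c) ^ 4)).const_sub _
  refine h.deriv.trans ?_
  norm_num
  ring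

lemma norm_gradient_flatGap_sq (hz : 0 < z.re) : ‖∇ (flatGap c R) z‖ ^ 2 =
    (4 * (√(2 * z.re) - c) ^ 3 / √(2 * z.re)) ^ 2 + (8 * z.im) ^ 2 := by
  rw [norm_gradient_sq_eq_deriv ((contDiffAt_flatGap hz).differentiableAt (by simp)),
    deriv_flatGap_left hz, deriv_flatGap_right, neg_sq, neg_sq]

lemma laplacian_flatGap (hz : 0 < z.re) : Δ (flatGap c R) z =
    -(4 * (√(2 * z.re) - c) ^ 2 * (2 * √(2 * z.re) + c) / √(2 * z.re) ^ 3 + 8) := by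
  have hleft : deriv (fun t => flatGap c R ⟨t, z.im⟩) =ᶠ[𝓝 z.re]
      fun s => -(4 * (√(2 * s) - c) ^ 3 / √(2 * s)) :=
    (lt_mem_nhds hz).mono fun s hs => deriv_flatGap_left hs _
  have hr : √(2 * z.re) ≠ 0 := by positivity
  have hsqrt := hasDerivAt_sqrt_two_mul hz
  have hre : HasDerivAt (fun s => -(4 * (√(2 * s) - c) ^ 3 / √(2 * s))) _ z.re :=
    ((((hsqrt.sub_const c).fun_pow 3).const_mul 4).fun_div hsqrt hr).fun_neg
  have him : HasDerivAt (fun y : ℝ => -(8 * y)) _ z.im :=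
    ((hasDerivAt_id' z.im).const_mul 8).fun_neg
  rw [laplacian_eq_deriv_deriv (contDiffAt_flatGap hz), hleft.deriv_eq,
    funext (deriv_flatGap_right z.re), hre.deriv, him.deriv]
  field_simp
  ring

lemma le_hardy_flatGap (hR : 0 < R) (hRc : R ≤ c) (hz : z ∈ flatBall c R) :
    16 * R ^ 6 / (c + R) ^ 2 ≤
      ‖∇ (flatGap c R) z‖ ^ 2 - 2 * flatGap c R z * Δ (flatGap c R) z := by
  have hre := re_pos_of_mem_flatBall hR hRc hz
  have hd := abs_sqrt_sub_lt hR hz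
  have hx : 0 < √(2 * z.re) := by positivity
  rw [norm_gradient_flatGap_sq hre, laplacian_flatGap hre]
  have hg : 0 < flatGap c R z := hz
  have hgap : flatGap c R z = R ^ 4 - ((√(2 * z.re) - c) ^ 4 + 4 * z.im ^ 2) := rfl
  generalize √(2 * z.re) = x at *
  have hc : 0 < c := hR.trans_le hRc
  have hdR : (x - c) ^ 2 ≤ R ^ 2 := sq_le_sq' (abs_lt.1 hd).1.le (abs_lt.1 hd).2.le
  have hlap : 0 ≤ flatGap c R z * (4 * (x - c) ^ 2 * (2 * x + c) / x ^ 3) := by positivity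
  have hgrad : 16 * (x - c) ^ 6 / (c + R) ^ 2 ≤ (4 * (x - c) ^ 3 / x) ^ 2 := by
    rw [show (4 * (x - c) ^ 3 / x) ^ 2 = 16 * (x - c) ^ 6 / x ^ 2 by ring]
    gcongr
    linarith [(abs_lt.1 hd).2]
  have hcubic : R ^ 6 ≤ (x - c) ^ 6 + 4 * R ^ 2 * (R ^ 4 - (x - c) ^ 4) := by
    nlinarith [mul_nonneg (sub_nonneg.2 hdR) (sq_nonneg R), mul_nonneg (sub_nonneg.2 hdR)
      (show 0 ≤ 3 * (R ^ 2) ^ 2 + 3 * R ^ 2 * (x - c) ^ 2 - ((x - c) ^ 2) ^ 2 by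
        nlinarith [sq_nonneg (x - c), sq_nonneg R])]
  have hquart : 4 * R ^ 2 * (R ^ 4 - (x - c) ^ 4) / (c + R) ^ 2 ≤ R ^ 4 - (x - c) ^ 4 := by
    have h4 : 0 ≤ R ^ 4 - (x - c) ^ 4 := by nlinarith [sq_nonneg (x - c), sq_nonneg R]
    rw [div_le_iff₀ (by positivity), mul_comm]
    gcongr
    nlinarith
  calc 16 * R ^ 6 / (c + R) ^ 2
      ≤ 16 * ((x - c) ^ 6 + 4 * R ^ 2 * (R ^ 4 - (x - c) ^ 4)) / (c + R) ^ 2 := by gcongr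
    _ = 16 * (x - c) ^ 6 / (c + R) ^ 2
        + 16 * (4 * R ^ 2 * (R ^ 4 - (x - c) ^ 4) / (c + R) ^ 2) := by ring
    _ ≤ _ := by linarith

lemma norm_gradient_flatGap_le (hR : 0 < R) (hRc : R < c) (hz : z ∈ flatBall c R) :
    ‖∇ (flatGap c R) z‖ ≤ 4 * R ^ 3 / (c - R) + 4 * R ^ 2 := by
  have hre := re_pos_of_mem_flatBall hR hRc.le hz
  have hd := abs_sqrt_sub_lt hR hz
  have hz' : 0 < R ^ 4 - ((√(2 * z.re) - c) ^ 4 + 4 * z.im ^ 2) := hz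
  have : 0 < c - R := sub_pos.2 hRc
  have hleft : |4 * (√(2 * z.re) - c) ^ 3 / √(2 * z.re)| ≤ 4 * R ^ 3 / (c - R) := by
    rw [abs_div, abs_mul, abs_pow, abs_of_pos (show (0 : ℝ) < 4 by norm_num),
      abs_of_nonneg (Real.sqrt_nonneg _)]
    gcongr
    linarith [(abs_lt.1 hd).1]
  have hright : |8 * z.im| ≤ 4 * R ^ 2 :=
    abs_le_of_sq_le_sq (by nlinarith [sq_nonneg ((√(2 * z.re) - c) ^ 2)]) (by positivity)
  refine (abs_le_of_sq_le_sq' ?_ (by positivity)).2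
  rw [norm_gradient_flatGap_sq hre]
  have h1 := sq_le_sq' (abs_le.1 hleft).1 (abs_le.1 hleft).2
  have h2 := sq_le_sq' (abs_le.1 hright).1 (abs_le.1 hright).2
  nlinarith [show 0 ≤ 4 * R ^ 3 / (c - R) * (4 * R ^ 2) by positivity]

theorem exists_hardy_flatBall (hR : 0 < R) (hRc : R < c) :
    ∃ H : ℝ, 0 < H ∧ ∀ η, IsTestFunction (flatBall c R) η →
      ∫ z, (η z / Metric.infDist z (flatBall c R)ᶜ) ^ 2 ≤ H * ∫ z, ‖∇ η z‖ ^ 2 := by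
  have hc : 0 < c := hR.trans hRc
  have : 0 < c - R := sub_pos.2 hRc
  have hne : flatBall c R ≠ univ := fun h => by
    have := re_pos_of_mem_flatBall hR hRc.le (h ▸ mem_univ (0 : ℂ))
    simp at this
  exact ⟨4 * (4 * R ^ 3 / (c - R) + 4 * R ^ 2) ^ 2 / (16 * R ^ 6 / (c + R) ^ 2), by positivity,
    fun η hη => hη.integral_sq_div_infDist_sq_le (isOpen_flatBall c R) hne
      (fun z hz => (contDiffAt_flatGap (re_pos_of_mem_flatBall hR hRc.le hz)).contDiffWithinAt)
      (continuous_flatGap c R).continuousOn (fun _ hz => hz)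
      (fun _ hz => flatGap_eq_zero_of_mem_frontier hz) (by positivity)
      (fun _ hz => le_hardy_flatGap hR hRc.le hz) fun _ hz => norm_gradient_flatGap_le hR hRc hz⟩

end FlatBall

section FlatEigenvalue

lemma IsTestFunction.integral_sq_le_of_mem_flatBall {c R : ℝ} {η : ℂ → ℝ}
    (hη : IsTestFunction (flatBall c R) η) (hR : 0 < R) (hRc : R ≤ c) :
    ∫ z, η z ^ 2 ≤ (c + R) ^ 2 * ∫ z, η z ^ 2 / (2 * z.re) := by
  have hquot : IsTestFunction (flatBall c R) fun z => η z / (2 * z.re) * η z := by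
    refine hη.mul_left fun z hz => ?_
    have hre := re_pos_of_mem_flatBall hR hRc (hη.tsupport_subset hz)
    exact hη.contDiff.contDiffAt.div (contDiffAt_const.mul Complex.reCLM.contDiff.contDiffAt)
      (by simpa using hre.ne')
  rw [← integral_const_mul]
  refine integral_mono_of_nonneg (.of_forall fun z => sq_nonneg _)
    (((hquot.continuous.integrable_of_hasCompactSupport hquot.hasCompactSupport).const_mul
      ((c + R) ^ 2)).congr (.of_forall fun z => by ring)) (.of_forall fun z => ?_)
  by_cases hz : z ∈ flatBall c R
  · have hre := re_pos_of_mem_flatBall hR hRc hz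
    have h2re := two_mul_re_le_of_mem_flatBall hR hz
    change η z ^ 2 ≤ (c + R) ^ 2 * (η z ^ 2 / (2 * z.re))
    rw [mul_div_assoc', le_div_iff₀ (by positivity), mul_comm]
    gcongr
  · simp [hη.eq_zero_of_notMem hz]

theorem exists_flatBall_groundState : ∃ C : ℝ, 0 ≤ C ∧ ∀ c R : ℝ, 0 < R → R < c →
    ∃ (l : ℝ) (f : ℂ → ℝ), 0 < l ∧ l ≤ C * (c + R) ^ 2 / R ^ 4 ∧ Continuous f ∧ f ≠ 0 ∧
      EqOn f 0 (flatBall c R)ᶜ ∧ ContDiffOn ℝ 2 f (flatBall c R) ∧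
      ∀ z ∈ flatBall c R, Δ f z + (3 / (16 * z.re ^ 2) + l / (2 * z.re)) * f z = 0 := by
  obtain ⟨C, hC, htest⟩ := exists_isTestFunction_ball_integral_norm_gradient_sq_le ℂ
  refine ⟨16 * C, by positivity, fun c R hR hRc => ?_⟩
  obtain ⟨H, hH, hHardy⟩ := exists_hardy_flatBall hR hRc
  have hball := ball_subset_flatBall hR hRc.le
  obtain ⟨l, f, hl, hfc, hf0, hfU, hf2, hfeq, hmin⟩ := exists_groundState_of_re_ge
    (isOpen_flatBall c R) ((Metric.nonempty_ball.2 (by positivity)).mono hball)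
    (isBounded_flatBall hR hRc.le) (b := (c - R) ^ 2 / 2) (by have := sub_pos.2 hRc; positivity)
    (fun z => le_re_of_mem_flatBall hR hRc.le) hH hHardy
  refine ⟨l, f, hl, ?_, hfc, hf0, hfU, hf2, hfeq⟩
  obtain ⟨η, hηball, hηpos, hηgrad⟩ := htest ⟨c ^ 2 / 2, 0⟩ (R ^ 2 / 4) (by positivity)
  have hη := hηball.mono hball
  have hweight := hη.integral_sq_le_of_mem_flatBall hR hRc.le
  have hrayleigh : l * ∫ z, η z ^ 2 ≤ 16 * C * (c + R) ^ 2 / R ^ 4 * ∫ z, η z ^ 2 :=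
    calc l * ∫ z, η z ^ 2 ≤ (c + R) ^ 2 * (l * ∫ z, η z ^ 2 / (2 * z.re)) := by
          rw [mul_left_comm]
          gcongr
      _ ≤ (c + R) ^ 2 * (C / (R ^ 2 / 4) ^ 2 * ∫ z, η z ^ 2) := by
          exact mul_le_mul_of_nonneg_left ((hmin η hη).trans hηgrad) (by positivity)
      _ = _ := by
          field_simp
          ring
  exact le_of_mul_le_mul_right hrayleigh hηpos

end FlatEigenvalue

section Liouville

variable {f : ℂ → ℝ} {p : ℝ × ℝ}

/-- The Liouville transform `φ(x, y) = x ^ (-1/2) f(x ^ 2 / 2, y)`, which turns the Grushin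
Laplacian into a multiple of a flat Schrödinger operator. -/
noncomputable def liouville (f : ℂ → ℝ) (p : ℝ × ℝ) : ℝ := (√p.1)⁻¹ * f (flatten p)

lemma hasDerivAt_inv_sqrt {x : ℝ} (hx : 0 < x) :
    HasDerivAt (fun t => (√t)⁻¹) (-((√x)⁻¹ / (2 * x))) x := by
  refine (((hasDerivAt_id' x).sqrt hx.ne').fun_inv (by positivity)).congr_deriv ?_
  rw [Real.sq_sqrt hx.le]
  field_simp

lemma hasDerivAt_comp_sq_div_two {h : ℝ → ℝ} {x : ℝ} (hh : DifferentiableAt ℝ h (x ^ 2 / 2)) :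
    HasDerivAt (fun t => h (t ^ 2 / 2)) (deriv h (x ^ 2 / 2) * x) x := by
  have hsq : HasDerivAt (fun t : ℝ => t ^ 2 / 2) x x :=
    ((hasDerivAt_pow 2 x).div_const 2).congr_deriv (by norm_num)
  exact hh.hasDerivAt.comp x hsq

lemma deriv_inv_sqrt_mul_comp_sq_div_two {h : ℝ → ℝ} {x : ℝ} (hx : 0 < x)
    (hh : DifferentiableAt ℝ h (x ^ 2 / 2)) : deriv (fun t => (√t)⁻¹ * h (t ^ 2 / 2)) x =
      (√x)⁻¹ * (deriv h (x ^ 2 / 2) * x - h (x ^ 2 / 2) / (2 * x)) :=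
  ((hasDerivAt_inv_sqrt hx).fun_mul (hasDerivAt_comp_sq_div_two hh)).deriv.trans (by ring)

lemma deriv_deriv_inv_sqrt_mul_comp_sq_div_two {h : ℝ → ℝ} {x : ℝ} (hx : 0 < x)
    (hh : ContDiffAt ℝ 2 h (x ^ 2 / 2)) : deriv (deriv fun t => (√t)⁻¹ * h (t ^ 2 / 2)) x =
      x ^ 2 * (√x)⁻¹ * (deriv (deriv h) (x ^ 2 / 2) + 3 / (4 * x ^ 4) * h (x ^ 2 / 2)) := by
  have hsq : ContinuousAt (fun t : ℝ => t ^ 2 / 2) x := by fun_prop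
  have hderiv : deriv (fun t => (√t)⁻¹ * h (t ^ 2 / 2)) =ᶠ[𝓝 x]
      fun t => (√t)⁻¹ * (deriv h (t ^ 2 / 2) * t - h (t ^ 2 / 2) / (2 * t)) := by
    filter_upwards [lt_mem_nhds hx, hsq.eventually (hh.eventually (by simp))] with t ht hht
    exact deriv_inv_sqrt_mul_comp_sq_div_two ht (hht.differentiableAt (by simp))
  have hh' : DifferentiableAt ℝ (deriv h) (x ^ 2 / 2) :=
    (hh.derivWithin (m := 1) (by norm_num)).differentiableAt (by simp)
  have hfirst := ((hasDerivAt_comp_sq_div_two hh').fun_mul (hasDerivAt_id' x)).fun_sub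
    ((hasDerivAt_comp_sq_div_two (hh.differentiableAt (by simp))).fun_div
      ((hasDerivAt_id' x).const_mul 2) (by positivity))
  rw [hderiv.deriv_eq, ((hasDerivAt_inv_sqrt hx).fun_mul hfirst).deriv]
  field_simp
  ring

lemma contDiff_flatten : ContDiff ℝ 2 flatten :=
  Complex.equivRealProdCLM.symm.contDiff.comp
    (((contDiff_fst.pow 2).div_const 2).prodMk contDiff_snd)

lemma grushinLap_liouville (hp : 0 < p.1) (hf : ContDiffAt ℝ 2 f (flatten p)) :
    grushinLap (liouville f) p = p.1 ^ 2 * (√p.1)⁻¹ *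
      (Δ f (flatten p) + 3 / (16 * (flatten p).re ^ 2) * f (flatten p)) := by
  have hline : ContDiffAt ℝ 2 (fun s => f ⟨s, p.2⟩) (p.1 ^ 2 / 2) :=
    hf.comp (p.1 ^ 2 / 2) (Complex.equivRealProdCLM.symm.contDiff.comp
      (contDiff_id.prodMk contDiff_const)).contDiffAt
  have hXX : pXX (liouville f) p = _ := deriv_deriv_inv_sqrt_mul_comp_sq_div_two hp hline
  have hYY : pYY (liouville f) p = (√p.1)⁻¹ * deriv (deriv fun y => f ⟨p.1 ^ 2 / 2, y⟩) p.2 := by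
    rw [← deriv_const_mul_field, ← deriv_const_mul_field']
    rfl
  rw [grushinLap, hXX, hYY, laplacian_eq_deriv_deriv hf]
  simp only [flatten]
  ring

lemma contDiffAt_liouville (hp : 0 < p.1) (hf : ContDiffAt ℝ 2 f (flatten p)) :
    ContDiffAt ℝ 2 (liouville f) p :=
  ((contDiffAt_fst.sqrt hp.ne').inv (by positivity)).mul (hf.comp p contDiff_flatten.contDiffAt)

lemma continuousOn_liouville (hf : Continuous f) : ContinuousOn (liouville f) {p | 0 < p.1} :=
  (continuous_fst.sqrt.continuousOn.inv₀ fun _ hp => (Real.sqrt_pos.2 hp).ne').mul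
    (hf.comp contDiff_flatten.continuous).continuousOn

end Liouville

section GrushinBall

variable {c R : ℝ} {p : ℝ × ℝ}

lemma mem_gBall_iff (hR : 0 ≤ R) : p ∈ gBall (c, 0) R ↔ (p.1 - c) ^ 4 + 4 * p.2 ^ 2 < R ^ 4 := by
  have h : 0 ≤ (p.1 - c) ^ 4 + 4 * p.2 ^ 2 := by positivity
  simp only [gBall, gNorm, mem_ofPred_eq, Prod.fst_sub, Prod.snd_sub, sub_zero]
  rw [one_div, Real.rpow_inv_lt_iff_of_pos h hR (by norm_num)]
  norm_cast

lemma mem_gBall_iff_flatten_mem_flatBall (hR : 0 ≤ R) (hp : 0 ≤ p.1) :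
    p ∈ gBall (c, 0) R ↔ flatten p ∈ flatBall c R := by
  have h : 2 * (p.1 ^ 2 / 2) = p.1 ^ 2 := by ring
  rw [mem_gBall_iff hR, flatBall, mem_ofPred_eq, flatGap, flatten, h, Real.sqrt_sq hp, sub_pos]

lemma sub_le_fst_of_mem_closure_gBall (hR : 0 ≤ R) (hp : p ∈ closure (gBall (c, 0) R)) :
    c - R ≤ p.1 := by
  have hsub : gBall (c, 0) R ⊆ {p | c - R ≤ p.1} := fun q hq => by
    have h : |q.1 - c| < R := lt_of_pow_lt_pow_left₀ 4 hR <| by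
      rw [Even.pow_abs (by decide)]
      linarith [(mem_gBall_iff hR).1 hq, sq_nonneg q.2]
    exact (by linarith [(abs_lt.1 h).1] : c - R ≤ q.1)
  exact closure_minimal hsub (isClosed_le continuous_const continuous_fst) hp

lemma isOpen_gBall (hR : 0 ≤ R) : IsOpen (gBall (c, 0) R) := by
  have h : gBall (c, 0) R = {p : ℝ × ℝ | (p.1 - c) ^ 4 + 4 * p.2 ^ 2 < R ^ 4} :=
    Set.ext fun _ => mem_gBall_iff hR
  rw [h]
  exact isOpen_lt (by fun_prop) continuous_const

theorem grushin_eigenfunction_of_flat {l : ℝ} {f : ℂ → ℝ} (hR : 0 < R) (hRc : R < c)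
    (hfc : Continuous f) (hf0 : f ≠ 0) (hfU : EqOn f 0 (flatBall c R)ᶜ)
    (hf2 : ContDiffOn ℝ 2 f (flatBall c R))
    (hfeq : ∀ z ∈ flatBall c R, Δ f z + (3 / (16 * z.re ^ 2) + l / (2 * z.re)) * f z = 0) :
    (∃ p ∈ gBall (c, 0) R, liouville f p ≠ 0) ∧
      ContinuousOn (liouville f) (closure (gBall (c, 0) R)) ∧
      ContDiffOn ℝ 2 (liouville f) (gBall (c, 0) R) ∧
      (∀ p ∈ gBall (c, 0) R, grushinLap (liouville f) p + l * liouville f p = 0) ∧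
      ∀ p ∈ frontier (gBall (c, 0) R), liouville f p = 0 := by
  have hpos p (hp : p ∈ closure (gBall (c, 0) R)) : 0 < p.1 :=
    (sub_pos.2 hRc).trans_le (sub_le_fst_of_mem_closure_gBall hR.le hp)
  have hflat p (hp : p ∈ gBall (c, 0) R) : flatten p ∈ flatBall c R :=
    (mem_gBall_iff_flatten_mem_flatBall hR.le (hpos p (subset_closure hp)).le).1 hp
  have hf2' p (hp : p ∈ gBall (c, 0) R) : ContDiffAt ℝ 2 f (flatten p) :=
    hf2.contDiffAt ((isOpen_flatBall c R).mem_nhds (hflat p hp))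
  refine ⟨?_, (continuousOn_liouville hfc).mono hpos, fun p hp => ?_, fun p hp => ?_,
    fun p hp => ?_⟩
  · obtain ⟨z, hz⟩ := Function.ne_iff.1 hf0
    have hzU : z ∈ flatBall c R := by_contra fun h => hz (hfU h)
    have hre := re_pos_of_mem_flatBall hR hRc.le hzU
    have hflatten : flatten (√(2 * z.re), z.im) = z := by
      rw [flatten, Real.sq_sqrt (by positivity)]
      exact Complex.ext (by simp) rfl
    refine ⟨(√(2 * z.re), z.im), ?_, ?_⟩
    · rwa [mem_gBall_iff_flatten_mem_flatBall hR.le (Real.sqrt_nonneg _), hflatten]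
    · rw [liouville, hflatten]
      exact mul_ne_zero (by positivity) hz
  · exact (contDiffAt_liouville (hpos p (subset_closure hp)) (hf2' p hp)).contDiffWithinAt
  · have hp0 := hpos p (subset_closure hp)
    rw [grushinLap_liouville hp0 (hf2' p hp), liouville]
    have h := hfeq _ (hflat p hp)
    have hre : (flatten p).re = p.1 ^ 2 / 2 := rfl
    rw [add_mul, ← add_assoc, hre] at h
    have hl : p.1 ^ 2 * (l / (2 * (p.1 ^ 2 / 2))) = l := by field_simp
    rw [hre]
    linear_combination p.1 ^ 2 * (√p.1)⁻¹ * h - (√p.1)⁻¹ * f (flatten p) * hl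
  · have hp' : p ∉ gBall (c, 0) R := fun h => hp.2 ((isOpen_gBall hR.le).interior_eq.symm ▸ h)
    rw [mem_gBall_iff_flatten_mem_flatBall hR.le (hpos p hp.1).le] at hp'
    simp [liouville, hfU hp']

end GrushinBall

end Grushin

theorem grushin_principal_eigenvalue_general (K : ℝ) :
    ∃ C > (0 : ℝ), ∀ R > 0, ∀ a > 0, a ≤ K * R →
      ∃ (lam : ℝ) (φ : ℝ × ℝ → ℝ),
        (∃ p ∈ gBall (a + R, 0) R, φ p ≠ 0) ∧
        ContinuousOn φ (closure (gBall (a + R, 0) R)) ∧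
        ContDiffOn ℝ 2 φ (gBall (a + R, 0) R) ∧
        (∀ p ∈ gBall (a + R, 0) R, grushinLap φ p + lam * φ p = 0) ∧
        (∀ p ∈ frontier (gBall (a + R, 0) R), φ p = 0) ∧
        0 < lam ∧ lam ≤ C / R ^ 2 := by
  obtain ⟨C, hC, hflat⟩ := Grushin.exists_flatBall_groundState
  refine ⟨C * (K + 2) ^ 2 + 1, by positivity, fun R hR a ha haR => ?_⟩
  obtain ⟨l, f, hl, hlC, hfc, hf0, hfU, hf2, hfeq⟩ := hflat (a + R) R hR (by linarith)
  obtain ⟨hne, hcont, hC2, heq, h0⟩ :=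
    Grushin.grushin_eigenfunction_of_flat hR (by linarith) hfc hf0 hfU hf2 hfeq
  refine ⟨l, Grushin.liouville f, hne, hcont, hC2, heq, h0, hl, ?_⟩
  calc l ≤ C * (a + R + R) ^ 2 / R ^ 4 := hlC
    _ ≤ C * ((K + 2) * R) ^ 2 / R ^ 4 := by
      gcongr
      linarith
    _ = C * (K + 2) ^ 2 / R ^ 2 := by field_simp
    _ ≤ _ := by
      gcongr
      linarith

/-- basic spectral theory on the Grushin ball `Ω = B_R((a+R, 0))`.
For `a ∈ (0,1)` and `R ≥ 1` there exist an eigenvalue `λ` and a non-trivial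
eigenfunction `φ`, continuous on `closure Ω` and `C²` in `Ω`, with `Δ_G φ + λ φ = 0`
in `Ω`, `φ = 0` on `∂Ω`, and `0 < λ ≤ C/R²` for a constant `C > 0` independent of
`a` and `R`. -/
theorem grushin_principal_eigenvalue :
    ∃ C > (0 : ℝ), ∀ a ∈ Set.Ioo (0 : ℝ) 1, ∀ R : ℝ, 1 ≤ R →
      ∃ (lam : ℝ) (φ : ℝ × ℝ → ℝ),
        (∃ p ∈ gBall (a + R, 0) R, φ p ≠ 0) ∧
        ContinuousOn φ (closure (gBall (a + R, 0) R)) ∧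
        ContDiffOn ℝ 2 φ (gBall (a + R, 0) R) ∧
        (∀ p ∈ gBall (a + R, 0) R, grushinLap φ p + lam * φ p = 0) ∧
        (∀ p ∈ frontier (gBall (a + R, 0) R), φ p = 0) ∧
        0 < lam ∧ lam ≤ C / R ^ 2 := by
  obtain ⟨C, hC, h⟩ := grushin_principal_eigenvalue_general 1
  exact ⟨C, hC, fun a ha R hR => h R (by linarith) a ha.1 (by linarith [ha.2])⟩
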